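/- arXiv:1503.07844 — 5 statements merged into one kernel-verified Lean document; each statement's English description precedes it below -/
import Mathlib

section
/- Let R = ∏_{i=1}^{n} [a_i, b_i] be an n-dimensional rectangle in ℝⁿ (with a_i ≤ b_i for every i), and denote by I_i⁻ = {x ∈ R : x_i = a_i} and I_i⁺ = {x ∈ R : x_i = b_i} its i-th faces. Let g = (g₁, …, g_n) : R → ℝⁿ be a continuous map such that for each i ∈ {1, …, n} at least one of the following holds: (e_i) g_i(x) ≤ a_i for all x ∈ I_i⁻ and g_i(x) ≥ b_i for all x ∈ I_i⁺; or (c_i) g_i(x) ≥ a_i for all x ∈ I_i⁻ and g_i(x) ≤ b_i for all x ∈ I_i⁺. Then there exists z ∈ R such that g(z) = z. -/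
/-!
The theorem reduces to the Poincaré–Miranda zero theorem: with `f i x = ± (g x i - x i)`, the sign
depending on which face condition holds, `f i` is `≤ 0` on the lower and `≥ 0` on the upper `i`-th
face, and a common zero of the `f i` is a fixed point of `g`. By compactness and uniform continuity
it is enough to find, on arbitrarily fine grids, a cell on which every `f i` takes both signs.

The grid statement (`exists_cell`) is a mod 2 cohomological computation. Let `s i` be the sign of
`f i`, read as a 0-cochain with values in `ZMod 2` on the cubical grid of side `N`, so that
`s i = 0` on the face `v i = 0` and `s i = 1` on the face `v i = N`. The cup product
`δ(s i₁) ∪ ⋯ ∪ δ(s iₙ)` equals `δ(s i₁ · (δ(s i₂) ∪ ⋯ ∪ δ(s iₙ)))`, and this last formula is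
taken as its recursive definition (`cup`). Since `δ ∘ δ = 0`, it vanishes on each cell on which some
`s i` is constant (`cup_eq_zero`). By Stokes' formula its sum over all cells is a sum over the
boundary; there only the face `v i₁ = N` contributes, and induction on the dimension gives the
total `1` (`sum_cup`). Hence some cell has a nonzero value, and on it every `s i` takes both values.
-/

open Set

/-! ### Cubical cochains mod 2 -/

section Cubical

variable {ι : Type*} [DecidableEq ι]

/-- The mod 2 coboundary of a cubical cochain. A cochain assigns `β S v` to the cube with least
vertex `v` and set of edge directions `S`; `δ β S v` is the sum of `β` over the faces of that cube
obtained by deleting one direction `j ∈ S`. -/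
def cobd (β : Finset ι → (ι → ℕ) → ZMod 2) (S : Finset ι) (v : ι → ℕ) : ZMod 2 :=
  ∑ j ∈ S, (β (S.erase j) (Function.update v j (v j + 1)) + β (S.erase j) v)

lemma cobd_cobd (β : Finset ι → (ι → ℕ) → ZMod 2) (S : Finset ι) (v : ι → ℕ) :
    cobd (cobd β) S v = 0 := by
  unfold cobd
  simp_rw [← Finset.sum_add_distrib]
  rw [Finset.sum_sigma']
  refine Finset.sum_involution (fun x _ => ⟨x.2, x.1⟩) ?_ ?_ ?_ ?_
  · rintro ⟨i, j⟩ h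
    simp only [Finset.mem_sigma, Finset.mem_erase] at h
    obtain ⟨hi, hji, hj⟩ := h
    simp only [Function.update_of_ne hji, Function.update_of_ne hji.symm]
    rw [Function.update_comm hji, Finset.erase_right_comm (a := j)]
    generalize β _ _ = p
    generalize β _ _ = q
    generalize β _ _ = r
    generalize β _ _ = t
    revert p q r t
    decide
  · rintro ⟨i, j⟩ h _ h'
    simp only [Finset.mem_sigma, Finset.mem_erase] at h
    simp only [Sigma.mk.injEq, heq_eq_eq] at h'
    exact h.2.1 h'.1
  · rintro ⟨i, j⟩ h
    simp only [Finset.mem_sigma, Finset.mem_erase] at h ⊢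
    exact ⟨h.2.2, h.2.1.symm, h.1⟩
  · rintro ⟨i, j⟩ h
    rfl

/-- The cup product of the coboundaries `δ (s i)`, for `i` running through the list, defined through
`δ (s i) ∪ ω = δ (s i · ω)` for closed `ω`. The empty product is given the value `1` on cubes of
every dimension; only its values on vertices and its closedness matter. -/
def cup (s : ι → (ι → ℕ) → ZMod 2) : List ι → Finset ι → (ι → ℕ) → ZMod 2
  | [] => fun _ _ => 1
  | i :: l => cobd (fun S v => s i v * cup s l S v)

lemma cobd_cup (s : ι → (ι → ℕ) → ZMod 2) (l : List ι) (S : Finset ι) (v : ι → ℕ) :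
    cobd (cup s l) S v = 0 := by
  cases l with
  | nil => exact Finset.sum_eq_zero fun _ _ => by simp only [cup]; decide
  | cons i l => exact cobd_cobd _ S v

/-- The vertices of the cube with least vertex `v` and directions `S`. -/
def cubeVerts (S : Finset ι) (v : ι → ℕ) : Set (ι → ℕ) :=
  {u | ∀ k, v k ≤ u k ∧ u k ≤ v k + if k ∈ S then 1 else 0}

lemma cubeVerts_erase_subset (S : Finset ι) (v : ι → ℕ) (j : ι) :
    cubeVerts (S.erase j) v ⊆ cubeVerts S v := by
  intro u hu k
  have := hu k
  simp only [Finset.mem_erase] at this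
  split_ifs at this ⊢ <;> grind

lemma cubeVerts_erase_update_subset (S : Finset ι) (v : ι → ℕ) {j : ι} (hj : j ∈ S) :
    cubeVerts (S.erase j) (Function.update v j (v j + 1)) ⊆ cubeVerts S v := by
  intro u hu k
  have := hu k
  simp only [Finset.mem_erase] at this
  by_cases hk : k = j
  · subst hk; simp at this; simp [hj]; omega
  · simpa [hk] using this

lemma self_mem_cubeVerts (S : Finset ι) (v : ι → ℕ) : v ∈ cubeVerts S v :=
  fun _ => ⟨le_rfl, Nat.le_add_right _ _⟩

/-- The cup product vanishes on a cube on which one of the factors `s i` is constant. -/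
lemma cup_eq_zero (s : ι → (ι → ℕ) → ZMod 2) (l : List ι) {i : ι} (hi : i ∈ l) (c : ZMod 2)
    (S : Finset ι) (v : ι → ℕ) (h : ∀ u ∈ cubeVerts S v, s i u = c) : cup s l S v = 0 := by
  induction l generalizing S v with
  | nil => simp at hi
  | cons k l ih =>
    by_cases hik : i = k
    · subst hik
      have : cup s (i :: l) S v = c * cobd (cup s l) S v := by
        simp only [cup, cobd, Finset.mul_sum]
        refine Finset.sum_congr rfl fun j hj => ?_
        rw [h _ (cubeVerts_erase_update_subset S v hj (self_mem_cubeVerts _ _)),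
          h v (self_mem_cubeVerts _ _), mul_add]
      rw [this, cobd_cup, mul_zero]
    · have hl : i ∈ l := by simpa [hik] using hi
      refine Finset.sum_eq_zero fun j hj => ?_
      simp only
      rw [ih hl _ _ fun u hu => h u (cubeVerts_erase_update_subset S v hj hu),
        ih hl _ _ fun u hu => h u (cubeVerts_erase_subset S v j hu)]
      simp

/-! ### Summation over the grid -/

variable [Fintype ι]

/-- The least vertices of the grid cubes with directions `S` lying in the face `v k = N`, `k ∉ S`,
of the grid `{0, …, N} ^ ι`. -/
def gridBox (N : ℕ) (S : Finset ι) : Finset (ι → ℕ) :=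
  Fintype.piFinset fun k => if k ∈ S then Finset.range N else {N}

lemma sum_gridBox (N : ℕ) (S : Finset ι) {j : ι} (hj : j ∈ S) (G : (ι → ℕ) → ZMod 2) :
    ∑ v ∈ gridBox N S, G v =
      ∑ w ∈ gridBox N (S.erase j), ∑ m ∈ Finset.range N, G (Function.update w j m) := by
  rw [← Finset.sum_product']
  refine Finset.sum_bij' (fun v _ => (Function.update v j N, v j))
    (fun x _ => Function.update x.1 j x.2) ?_ ?_ ?_ ?_ ?_
  · intro v hv
    simp only [gridBox, Fintype.mem_piFinset, Finset.mem_product] at hv ⊢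
    refine ⟨fun k => ?_, by simpa [hj] using hv j⟩
    by_cases hk : k = j
    · subst hk; simp
    · simpa [hk] using hv k
  · rintro ⟨w, m⟩ hw
    simp only [gridBox, Fintype.mem_piFinset, Finset.mem_product] at hw ⊢
    intro k
    by_cases hk : k = j
    · subst hk; simpa [hj] using hw.2
    · simpa [hk] using hw.1 k
  · intro v hv; simp
  · rintro ⟨w, m⟩ hw
    simp only [gridBox, Fintype.mem_piFinset, Finset.mem_product] at hw
    have : w j = N := by simpa using hw.1 j
    simp [← this]
  · intro v hv; simp

/-- Telescoping in the direction `j`: only the two opposite `j`-th faces of the grid survive. -/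
lemma sum_gridBox_telescope (N : ℕ) (S : Finset ι) {j : ι} (hj : j ∈ S)
    (F : (ι → ℕ) → ZMod 2) :
    ∑ v ∈ gridBox N S, (F (Function.update v j (v j + 1)) + F v) =
      ∑ w ∈ gridBox N (S.erase j), (F w + F (Function.update w j 0)) := by
  rw [sum_gridBox N S hj]
  refine Finset.sum_congr rfl fun w hw => ?_
  have hwj : w j = N := by
    simpa using (Fintype.mem_piFinset.1 hw) j
  have key : ∀ M : ℕ, ∑ m ∈ Finset.range M,
      (F (Function.update w j (m + 1)) + F (Function.update w j m)) =
      F (Function.update w j M) + F (Function.update w j 0) := by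
    intro M
    induction M with
    | zero => simp [CharTwo.add_self_eq_zero]
    | succ M ih =>
      rw [Finset.sum_range_succ, ih]
      generalize F _ = p
      generalize F _ = q
      generalize F _ = r
      revert p q r
      decide
  have := key N
  simp only [Function.update_idem, Function.update_self]
  rw [this, ← hwj, Function.update_eq_self]

/-- The total over the face spanned by the directions in `l`: Stokes' formula moves the sum of
`cup s (i :: l)` to the boundary, where only the face `v i = N` contributes. -/
lemma sum_cup (N : ℕ) (s : ι → (ι → ℕ) → ZMod 2)
    (h0 : ∀ i v, v i = 0 → s i v = 0) (h1 : ∀ i v, v i = N → s i v = 1)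
    (l : List ι) (hl : l.Nodup) :
    ∑ v ∈ gridBox N l.toFinset, cup s l l.toFinset v = 1 := by
  induction l with
  | nil =>
    simp only [cup, gridBox]
    simp
  | cons i l ih =>
    obtain ⟨hil, hl⟩ := List.nodup_cons.1 hl
    have hS : (i :: l).toFinset.erase i = l.toFinset := by
      rw [List.toFinset_cons, Finset.erase_insert (by simpa using hil)]
    simp only [cup, cobd]
    rw [Finset.sum_comm, Finset.sum_eq_single_of_mem i (by simp)]
    · rw [sum_gridBox_telescope N _ (by simp)
        (fun v => s i v * cup s l ((i :: l).toFinset.erase i) v), hS, ← ih hl]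
      refine Finset.sum_congr rfl fun w hw => ?_
      have hwi : w i = N := by
        simpa [hil] using (Fintype.mem_piFinset.1 hw) i
      rw [h1 i w hwi, h0 i (Function.update w i 0) (by simp)]
      simp
    · intro j hj hji
      have hjl : j ∈ l := by simpa [hji] using hj
      rw [sum_gridBox_telescope N _ hj
        (fun v => s i v * cup s l ((i :: l).toFinset.erase j) v)]
      refine Finset.sum_eq_zero fun w hw => ?_
      have hwj : w j = N := by
        simpa using (Fintype.mem_piFinset.1 hw) j
      -- `s j` is constant on both `j`-th faces, so the remaining cup product vanishes there.
      rw [cup_eq_zero s l hjl 1 _ w, cup_eq_zero s l hjl 0 _ (Function.update w j 0)]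
      · simp
      · intro u hu
        exact h0 j u (by simpa using hu j)
      · intro u hu
        refine h1 j u ?_
        have := hu j
        simp at this
        omega

/-- Some grid cell has, for every `i`, vertices where `s i` is `0` and vertices where it is `1`. -/
lemma exists_cell (N : ℕ) (s : ι → (ι → ℕ) → ZMod 2)
    (h0 : ∀ i v, v i = 0 → s i v = 0) (h1 : ∀ i v, v i = N → s i v = 1) :
    ∃ v : ι → ℕ, (∀ k, v k < N) ∧ ∀ i,
      (∃ u, (∀ k, v k ≤ u k ∧ u k ≤ v k + 1) ∧ s i u = 0) ∧
      (∃ u, (∀ k, v k ≤ u k ∧ u k ≤ v k + 1) ∧ s i u = 1) := by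
  have hsum := sum_cup N s h0 h1 Finset.univ.toList (Finset.nodup_toList _)
  obtain ⟨v, hv, hne⟩ := Finset.exists_ne_zero_of_sum_ne_zero (hsum.trans_ne one_ne_zero)
  rw [Finset.toList_toFinset] at hv hne
  have htwo : ∀ c : ZMod 2, (c ≠ 0 → c = 1) ∧ (c ≠ 1 → c = 0) := by decide
  refine ⟨v, fun k => by simpa using (Fintype.mem_piFinset.1 hv) k, fun i => ⟨?_, ?_⟩⟩
  · by_contra! hcon
    refine hne (cup_eq_zero s _ (i := i) (by simp) 1 _ v fun u hu => ?_)
    exact (htwo _).1 (hcon u (by simpa [cubeVerts] using hu))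
  · by_contra! hcon
    refine hne (cup_eq_zero s _ (i := i) (by simp) 0 _ v fun u hu => ?_)
    exact (htwo _).2 (hcon u (by simpa [cubeVerts] using hu))

end Cubical

/-! ### Passage to continuous maps -/

/-- The Poincaré–Miranda theorem. -/
lemma exists_zero_of_faces {n : ℕ} (a b : Fin n → ℝ) (hab : ∀ i, a i ≤ b i)
    (f : (Fin n → ℝ) → (Fin n → ℝ)) (hf : ContinuousOn f (Icc a b))
    (hlo : ∀ i, ∀ x ∈ Icc a b, x i = a i → f x i ≤ 0)
    (hhi : ∀ i, ∀ x ∈ Icc a b, x i = b i → 0 ≤ f x i) :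
    ∃ z ∈ Icc a b, f z = 0 := by
  classical
  by_contra! hno
  have hne : (Icc a b).Nonempty := ⟨a, le_rfl, hab⟩
  obtain ⟨x₀, hx₀, hmin⟩ := isCompact_Icc.exists_isMinOn hne hf.norm
  have hε : 0 < ‖f x₀‖ := norm_pos_iff.2 (hno x₀ hx₀)
  obtain ⟨δ, hδ, hunif⟩ := Metric.uniformContinuousOn_iff.1
    (isCompact_Icc.uniformContinuousOn_of_continuous hf) _ hε
  obtain ⟨m, hm⟩ := exists_nat_gt (‖b - a‖ / δ)
  have hNpos : (0 : ℝ) < (m + 1 : ℕ) := by positivity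
  have hN : ‖b - a‖ / (m + 1 : ℕ) < δ := by
    rw [div_lt_iff₀ hδ] at hm
    rw [div_lt_iff₀ hNpos]
    push_cast
    nlinarith
  set N : ℕ := m + 1 with hNdef
  let X : (Fin n → ℕ) → (Fin n → ℝ) := fun u i => a i + (u i : ℝ) / N * (b i - a i)
  have hX : ∀ u : Fin n → ℕ, (∀ k, u k ≤ N) → X u ∈ Icc a b := by
    intro u hu
    have h1 : ∀ k, (u k : ℝ) / N ≤ 1 := fun k => by
      rw [div_le_one hNpos]; exact_mod_cast hu k
    have h0 : ∀ k, 0 ≤ (u k : ℝ) / N := fun k => by positivity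
    refine ⟨fun k => ?_, fun k => ?_⟩ <;> simp only [X]
    · nlinarith [h0 k, hab k]
    · nlinarith [h1 k, hab k]
  -- The face values are imposed, so they also hold outside the grid and where `f` vanishes.
  let s : Fin n → (Fin n → ℕ) → ZMod 2 := fun i u =>
    if u i = 0 then 0 else if u i = N then 1 else if f (X u) i ≤ 0 then 0 else 1
  obtain ⟨v, hvN, hv⟩ := exists_cell N s (fun i u h => by simp [s, h])
    (fun i u h => by simp [s, h, hNdef])
  have hv_mem : X v ∈ Icc a b := hX v fun k => (hvN k).le
  have hclose : ∀ u : Fin n → ℕ, (∀ k, v k ≤ u k ∧ u k ≤ v k + 1) →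
      X u ∈ Icc a b ∧ ∀ i, |f (X u) i - f (X v) i| < ‖f x₀‖ := by
    intro u hu
    have hu_mem : X u ∈ Icc a b := hX u fun k => (hu k).2.trans (hvN k)
    refine ⟨hu_mem, fun i => ?_⟩
    have hd : dist (X u) (X v) < δ := by
      refine lt_of_le_of_lt ((dist_pi_le_iff (by positivity)).2 fun k => ?_) hN
      have h1 : (v k : ℝ) ≤ u k := by exact_mod_cast (hu k).1
      have h2 : (u k : ℝ) ≤ v k + 1 := by exact_mod_cast (hu k).2
      have h3 : X u k - X v k = ((u k : ℝ) - v k) * (b k - a k) / N := by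
        simp only [X]; ring
      have h4 : b k - a k ≤ ‖b - a‖ := (le_abs_self _).trans (norm_le_pi_norm (b - a) k)
      have h5 : 0 ≤ b k - a k := sub_nonneg.2 (hab k)
      rw [Real.dist_eq, h3, abs_of_nonneg (div_nonneg (mul_nonneg (by linarith) h5) hNpos.le)]
      gcongr
      nlinarith
    have := hunif _ hu_mem _ hv_mem hd
    rw [← Real.dist_eq]
    exact (dist_le_pi_dist (f (X u)) (f (X v)) i).trans_lt this
  have hsmall : ‖f (X v)‖ < ‖f x₀‖ := by
    refine (pi_norm_lt_iff hε).2 fun i => ?_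
    obtain ⟨⟨p, hp, hp0⟩, ⟨q, hq, hq1⟩⟩ := hv i
    obtain ⟨hpm, hpc⟩ := hclose p hp
    obtain ⟨hqm, hqc⟩ := hclose q hq
    have hfp : f (X p) i ≤ 0 := by
      simp only [s] at hp0
      split_ifs at hp0 with h1 h2 h3
      · exact hlo i _ hpm (by simp [X, h1])
      · simp at hp0
      · exact h3
      · simp at hp0
    have hfq : 0 ≤ f (X q) i := by
      simp only [s] at hq1
      split_ifs at hq1 with h1 h2 h3
      · simp at hq1
      · exact hhi i _ hqm (by simp only [X, h2]; rw [div_self hNpos.ne']; ring)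
      · simp at hq1
      · exact (not_le.1 h3).le
    have h1 := abs_lt.1 (hpc i)
    have h2 := abs_lt.1 (hqc i)
    rw [Real.norm_eq_abs, abs_lt]
    constructor <;> linarith [h1.1, h1.2, h2.1, h2.2]
  exact absurd (hmin hv_mem) (not_le.2 hsmall)

/-- **Poincaré–Miranda fixed point theorem on an `n`-dimensional rectangle.** -/
theorem poincare_miranda_fixed_point
    (n : ℕ) (a b : Fin n → ℝ) (hab : ∀ i, a i ≤ b i)
    (g : (Fin n → ℝ) → (Fin n → ℝ))
    (hg_cont : ContinuousOn g (Icc a b))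
    (hfaces : ∀ i : Fin n,
      ((∀ x ∈ Icc a b, x i = a i → g x i ≤ a i) ∧
       (∀ x ∈ Icc a b, x i = b i → b i ≤ g x i)) ∨
      ((∀ x ∈ Icc a b, x i = a i → a i ≤ g x i) ∧
       (∀ x ∈ Icc a b, x i = b i → g x i ≤ b i))) :
    ∃ z ∈ Icc a b, g z = z := by
  have hsign : ∀ i : Fin n, ∃ c : ℝ, c ≠ 0 ∧
      (∀ x ∈ Icc a b, x i = a i → c * (g x i - x i) ≤ 0) ∧
      (∀ x ∈ Icc a b, x i = b i → 0 ≤ c * (g x i - x i)) := by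
    intro i
    rcases hfaces i with ⟨h1, h2⟩ | ⟨h1, h2⟩
    · exact ⟨1, one_ne_zero, fun x hx h => by linarith [h1 x hx h],
        fun x hx h => by linarith [h2 x hx h]⟩
    · exact ⟨-1, by norm_num, fun x hx h => by linarith [h1 x hx h],
        fun x hx h => by linarith [h2 x hx h]⟩
  choose c hc hlo hhi using hsign
  obtain ⟨z, hz, hz0⟩ := exists_zero_of_faces a b hab (fun x i => c i * (g x i - x i))
    (continuousOn_pi.2 fun i => continuousOn_const.mul
      ((continuousOn_pi.1 hg_cont i).sub (continuous_apply i).continuousOn)) hlo hhi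
  refine ⟨z, hz, funext fun i => ?_⟩
  have := congrFun hz0 i
  simpa [hc i, sub_eq_zero] using this
end

section
/- Let A be an absolute retract, let a < b be real numbers, and set C = [a,b] × A, C_l = {a} × A, C_r = {b} × A. Let T = (T₁, T₂) : C → ℝ × A be a compact map satisfying the expansive conditions: T₁(z) ≤ a for all z ∈ C_l, and T₁(z) ≥ b for all z ∈ C_r. Then T has at least one fixed point in C, i.e. there exists z ∈ C with T(z) = z. -/
/-!
Let `K` be the projection to `A` of the closure of the image of `T`; it is compact. Embed it in the
Hilbert cube `Q` by a map `e`. As `A` is an absolute retract, the inverse of `e` extends to a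
continuous map `g : Q → A` (`exists_cube_factor`). A fixed point `(t, q)` of
`(t, q) ↦ (T₁ (t, g q), e (T₂ (t, g q)))` yields the fixed point `(t, g q)` of `T`, so `A` may be
replaced by `Q`. There, the map `(t, q) ↦ (2 t - S₁ (t, q), S₂ (t, q))`, clamped to `[a, b]` in its
first component, is a self-map of a cube, and expansiveness turns its fixed points into fixed points
of `S` (`cube_cylinder_expansive`).

Fixed points of self-maps of infinite-dimensional cubes come from finite-dimensional ones by
compactness (`brouwer_tychonoff_cube`). Brouwer's theorem (`brouwer_cube`) follows from Kuhn's
cubical labelling lemma (`kuhn_labelling`), applied to the signs of the components of `F x - x` on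
fine grids. The labelling lemma is proved by computing modulo 2 the cup product of the coboundaries
of the labellings, summed over the grid: the discrete Stokes formula (`kuhnSum_cons`) reduces the
sum to one face of the grid, and inductively to `1` (`sum_kuhnSum`).
-/


open Set

/-- A metrizable space `A` is an absolute retract if every continuous map from a
closed subset of a metric space into `A` extends continuously to the whole space. -/
def IsAbsoluteRetract (A : Type*) [TopologicalSpace A] : Prop :=
  TopologicalSpace.MetrizableSpace A ∧
  ∀ (Y : Type*) [MetricSpace Y] (M : Set Y), IsClosed M →
    ∀ f : M → A, Continuous f →
      ∃ g : Y → A, Continuous g ∧ ∀ m : M, g m = f m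

/-! ### Kuhn's labelling lemma -/

section Kuhn
variable {ι : Type*} [DecidableEq ι]

/-- A mod 2 count of monotone lattice paths. A path starts at `v`, steps by a unit vector in some
direction `d ∈ D`, never reusing a direction, and makes one step for each entry of the list `l`; it
is counted when, for every `k`, the labelling `f i` at the `k`-th entry `i` of `l` changes along its
`k`-th step. When `D` consists of the entries of a duplicate-free `l`, the paths are the simplices
of the Freudenthal triangulation of a unit cube, and this is the value of the cup product of the
coboundaries of the `f i` on that cube. -/
def kuhnSum (f : ι → (ι → ℕ) → ZMod 2) : List ι → Finset ι → (ι → ℕ) → ZMod 2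
  | [], _, _ => 1
  | i :: l, D, v => ∑ d ∈ D, (f i (v + Pi.single d 1) + f i v) *
      kuhnSum f l (D.erase d) (v + Pi.single d 1)

lemma sum_sum_erase_comm {M : Type*} [AddCommMonoid M] (D : Finset ι) (s : ι → ι → M) :
    ∑ d ∈ D, ∑ e ∈ D.erase d, s d e = ∑ d ∈ D, ∑ e ∈ D.erase d, s e d := by
  apply Finset.sum_comm'
  intro x y
  simp only [Finset.mem_erase]
  tauto

lemma sum_sum_erase_eq_zero (D : Finset ι) (s : ι → ι → ZMod 2) (hs : ∀ d e, s d e = s e d) :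
    ∑ d ∈ D, ∑ e ∈ D.erase d, s d e = 0 := by
  rw [Finset.sum_sigma']
  refine Finset.sum_involution (fun p _ => ⟨p.2, p.1⟩) ?_ ?_ ?_ ?_
  · rintro ⟨d, e⟩ _
    simp only [hs e d]
    exact CharTwo.add_self_eq_zero _
  · rintro ⟨d, e⟩ h _ h'
    simp at h h'
    exact h.2.1 h'.1
  · rintro ⟨d, e⟩ h
    simp at h ⊢
    tauto
  · rintro ⟨d, e⟩ _
    rfl

/-- The cup product of coboundaries is a cocycle: its values on the facets of a unit cube in the
directions `D` add up to zero. -/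
lemma kuhnSum_closed (f : ι → (ι → ℕ) → ZMod 2) (l : List ι) (D : Finset ι) (v : ι → ℕ) :
    ∑ d ∈ D, kuhnSum f l (D.erase d) (v + Pi.single d 1) = ∑ d ∈ D, kuhnSum f l (D.erase d) v := by
  induction l generalizing D v with
  | nil => simp [kuhnSum]
  | cons i l ih =>
    have hc : ∀ d e : ι, v + Pi.single e 1 + Pi.single d 1 = v + Pi.single d 1 + Pi.single e 1 :=
      fun d e => add_right_comm _ _ _
    have hL : ∑ d ∈ D, kuhnSum f (i :: l) (D.erase d) (v + Pi.single d 1) =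
        ∑ d ∈ D, f i (v + Pi.single d 1) *
          ∑ e ∈ D.erase d, kuhnSum f l ((D.erase d).erase e) (v + Pi.single d 1) := by
      have h0 := sum_sum_erase_eq_zero D
        (fun d e => f i (v + Pi.single d 1 + Pi.single e 1) *
          kuhnSum f l ((D.erase d).erase e) (v + Pi.single d 1 + Pi.single e 1))
        (fun d e => by rw [hc, Finset.erase_right_comm])
      simp only [kuhnSum, add_mul, Finset.sum_add_distrib]
      rw [h0, zero_add]
      refine Finset.sum_congr rfl fun d _ => ?_
      rw [← Finset.mul_sum, ih]
    have hR : ∑ d ∈ D, kuhnSum f (i :: l) (D.erase d) v =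
        ∑ d ∈ D, f i (v + Pi.single d 1) *
          ∑ e ∈ D.erase d, kuhnSum f l ((D.erase d).erase e) (v + Pi.single d 1) := by
      have h0 := sum_sum_erase_eq_zero D
        (fun d e => f i v * kuhnSum f l ((D.erase d).erase e) v)
        (fun d e => by rw [Finset.erase_right_comm])
      have h1 : ∑ d ∈ D, ∑ e ∈ D.erase d, f i v *
          kuhnSum f l ((D.erase d).erase e) (v + Pi.single e 1) = 0 := by
        rw [← h0]
        refine Finset.sum_congr rfl fun d _ => ?_
        rw [← Finset.mul_sum, ih, Finset.mul_sum]
      simp only [kuhnSum, add_mul, Finset.sum_add_distrib]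
      rw [h1, add_zero, sum_sum_erase_comm]
      refine Finset.sum_congr rfl fun d _ => ?_
      rw [Finset.mul_sum]
      refine Finset.sum_congr rfl fun e _ => ?_
      rw [Finset.erase_right_comm]
    rw [hL, hR]

/-- Discrete Stokes formula on a unit cube: `δf ∪ c = δ(f ∪ c)` for a cocycle `c`. -/
lemma kuhnSum_cons (f : ι → (ι → ℕ) → ZMod 2) (i : ι) (l : List ι) (D : Finset ι) (v : ι → ℕ) :
    kuhnSum f (i :: l) D v = ∑ d ∈ D, (f i (v + Pi.single d 1) *
      kuhnSum f l (D.erase d) (v + Pi.single d 1) - f i v * kuhnSum f l (D.erase d) v) := by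
  simp only [kuhnSum, add_mul, Finset.sum_add_distrib, Finset.sum_sub_distrib]
  rw [← Finset.mul_sum, ← Finset.mul_sum, kuhnSum_closed, CharTwo.sub_eq_add]

/-- On a face of the grid orthogonal to the direction `d`, the labelling `f d` is constant, so no
path inside the face can see it change. -/
lemma kuhnSum_face (f : ι → (ι → ℕ) → ZMod 2) {N : ℕ}
    (h0 : ∀ i v, v i = 0 → f i v = 0) (h1 : ∀ i v, v i = N → f i v = 1)
    {d : ι} (l : List ι) (hd : d ∈ l) (D : Finset ι) (hD : d ∉ D) (v : ι → ℕ)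
    (hv : v d = 0 ∨ v d = N) : kuhnSum f l D v = 0 := by
  induction l generalizing D v with
  | nil => simp at hd
  | cons i l ih =>
    refine Finset.sum_eq_zero fun e he => ?_
    have hed : d ≠ e := by rintro rfl; exact hD he
    have hve : (v + Pi.single e 1 : ι → ℕ) d = v d := by simp [hed]
    rcases List.mem_cons.1 hd with rfl | hd
    · rcases hv with hv | hv
      · rw [h0 _ _ hv, h0 _ _ (hve.trans hv)]; simp
      · rw [h1 _ _ hv, h1 _ _ (hve.trans hv), CharTwo.add_self_eq_zero, zero_mul]
    · rw [ih hd _ (fun h => hD (Finset.mem_of_mem_erase h)) _ (by rwa [hve]), mul_zero]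

/-- A nonzero count exhibits a path in the unit cube at `v` along which every labelling changes. -/
lemma exists_of_kuhnSum_ne_zero (f : ι → (ι → ℕ) → ZMod 2) (l : List ι) (D : Finset ι)
    (v : ι → ℕ) (h : kuhnSum f l D v ≠ 0) :
    ∀ i ∈ l, ∃ w w' : ι → ℕ, f i w ≠ f i w' ∧
      (∀ j, v j ≤ w j ∧ w j ≤ v j + if j ∈ D then 1 else 0) ∧
      (∀ j, v j ≤ w' j ∧ w' j ≤ v j + if j ∈ D then 1 else 0) := by
  induction l generalizing D v with
  | nil => simp
  | cons i l ih =>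
    obtain ⟨d, hd, hne⟩ := Finset.exists_ne_zero_of_sum_ne_zero h
    have key : ∀ w : ι → ℕ, (∀ j, (v + Pi.single d 1 : ι → ℕ) j ≤ w j ∧
        w j ≤ (v + Pi.single d 1 : ι → ℕ) j + if j ∈ D.erase d then 1 else 0) → ∀ j, v j ≤ w j ∧ w j ≤ v j + if j ∈ D then 1 else 0 := by
      intro w hw j
      have := hw j
      by_cases hj : j = d
      · subst hj
        simp [hd] at this ⊢
        omega
      · simpa [hj] using this
    intro j hj
    rcases List.mem_cons.1 hj with rfl | hj
    · refine ⟨v + Pi.single d 1, v, fun h => left_ne_zero_of_mul hne ?_, key _ ?_, ?_⟩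
      · rw [h, CharTwo.add_self_eq_zero]
      · intro j; simp
      · intro j; simp
    · obtain ⟨w, w', h1, h2, h3⟩ := ih _ _ (right_ne_zero_of_mul hne) j hj
      exact ⟨w, w', h1, key _ h2, key _ h3⟩

variable [Fintype ι]

lemma sum_box_slice (s : ι → Finset ℕ) (d : ι) (g : (ι → ℕ) → ZMod 2) :
    ∑ v ∈ Fintype.piFinset s, g v =
      ∑ x ∈ s d, ∑ v ∈ Fintype.piFinset (Function.update s d {x}), g v := by
  rw [← Finset.sum_fiberwise_of_maps_to (g := fun v : ι → ℕ => v d) (t := s d)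
    (fun v hv => Fintype.mem_piFinset.1 hv d)]
  refine Finset.sum_congr rfl fun x hx => Finset.sum_congr ?_ fun _ _ => rfl
  ext v
  simp only [Finset.mem_filter, Fintype.mem_piFinset]
  constructor
  · rintro ⟨h, rfl⟩ j
    by_cases hj : j = d
    · subst hj; simp
    · simp [hj, h j]
  · intro h
    have hd : v d = x := by simpa using h d
    refine ⟨fun j => ?_, hd⟩
    by_cases hj : j = d
    · subst hj; rwa [hd]
    · simpa [hj] using h j

lemma sum_box_shift (s : ι → Finset ℕ) (d : ι) (x : ℕ) (g : (ι → ℕ) → ZMod 2) :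
    ∑ v ∈ Fintype.piFinset (Function.update s d {x}), g (v + Pi.single d 1) =
      ∑ v ∈ Fintype.piFinset (Function.update s d {x + 1}), g v := by
  refine Finset.sum_nbij' (fun v => v + Pi.single d 1) (fun v => v - Pi.single d 1) ?_ ?_ ?_ ?_ ?_
  · intro v hv
    rw [Fintype.mem_piFinset] at hv ⊢
    intro j
    have := hv j
    by_cases hj : j = d
    · subst hj; simpa using this
    · simpa [hj] using this
  · intro v hv
    rw [Fintype.mem_piFinset] at hv ⊢
    intro j
    have := hv j
    by_cases hj : j = d
    · subst hj; simp at this; simp [this]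
    · simpa [hj] using this
  · intro v _
    simp
  · intro v hv
    rw [Fintype.mem_piFinset] at hv
    have hd : v d = x + 1 := by simpa using hv d
    ext j
    by_cases hj : j = d
    · subst hj; simp [hd]
    · simp [hj]
  · intro v _; rfl

lemma sum_box_telescope (s : ι → Finset ℕ) (d : ι) {N : ℕ} (hs : s d = Finset.range N)
    (g : (ι → ℕ) → ZMod 2) :
    ∑ v ∈ Fintype.piFinset s, (g (v + Pi.single d 1) - g v) =
      ∑ v ∈ Fintype.piFinset (Function.update s d {N}), g v -
      ∑ v ∈ Fintype.piFinset (Function.update s d {0}), g v := by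
  rw [sum_box_slice s d, hs]
  simp only [Finset.sum_sub_distrib, sum_box_shift]
  rw [← Finset.sum_sub_distrib]
  exact Finset.sum_range_sub
    (fun x => ∑ v ∈ Fintype.piFinset (Function.update s d {x}), g v) N

/-- The total count over the grid is odd. By the Stokes formula it equals the sum of `f i * c`, with
`c` the count for the remaining labellings, over the boundary of the grid. Only the far face in the
direction `i` contributes: `c` vanishes on the faces in the other directions, and `f i` on the near
face. The coordinates outside `l` are frozen so that the induction can pass to this face. -/
lemma sum_kuhnSum (f : ι → (ι → ℕ) → ZMod 2) {N : ℕ}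
    (h0 : ∀ i v, v i = 0 → f i v = 0) (h1 : ∀ i v, v i = N → f i v = 1)
    (l : List ι) (hl : l.Nodup) (s : ι → Finset ℕ) (hs : ∀ i ∈ l, s i = Finset.range N)
    (hs' : ∀ i, i ∉ l → ∃ c, s i = {c}) :
    ∑ v ∈ Fintype.piFinset s, kuhnSum f l l.toFinset v = 1 := by
  induction l generalizing s with
  | nil =>
    choose c hc using fun i => hs' i (by simp)
    simp [kuhnSum, hc]
  | cons i l ih =>
    rw [List.nodup_cons] at hl
    have hface : ∀ (d : ι) (c : ℕ) (v : ι → ℕ),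
        v ∈ Fintype.piFinset (Function.update s d {c}) → v d = c := by
      intro d c v hv
      simpa using Fintype.mem_piFinset.1 hv d
    simp only [kuhnSum_cons]
    rw [Finset.sum_comm, Finset.sum_eq_single_of_mem i (by simp)]
    · rw [sum_box_telescope s i (hs i (by simp))
        (fun v => f i v * kuhnSum f l ((i :: l).toFinset.erase i) v)]
      have hD : (i :: l).toFinset.erase i = l.toFinset := by
        simp [hl.1]
      rw [hD, Finset.sum_congr rfl (fun v hv => by rw [h1 i v (hface i N v hv), one_mul]),
        Finset.sum_congr (s₁ := Fintype.piFinset (Function.update s i {0})) rfl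
          (fun v hv => by rw [h0 i v (hface i 0 v hv), zero_mul]), Finset.sum_const_zero, sub_zero]
      refine ih hl.2 _ (fun j hj => ?_) (fun j hj => ?_)
      · have : j ≠ i := by rintro rfl; exact hl.1 hj
        simp [this, hs j (List.mem_cons_of_mem _ hj)]
      · by_cases hji : j = i
        · subst hji; exact ⟨N, by simp⟩
        · simpa [hji] using hs' j (by simp [hji, hj])
    · intro d hd hdi
      have hdl : d ∈ l := by simpa [hdi] using hd
      rw [sum_box_telescope s d (hs d (by simp [hdl]))
        (fun v => f i v * kuhnSum f l ((i :: l).toFinset.erase d) v),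
        Finset.sum_eq_zero, Finset.sum_eq_zero, sub_zero]
      · intro v hv
        rw [kuhnSum_face f h0 h1 l hdl _ (by simp) v (Or.inl (hface d 0 v hv)), mul_zero]
      · intro v hv
        rw [kuhnSum_face f h0 h1 l hdl _ (by simp) v (Or.inr (hface d N v hv)), mul_zero]

/-- **Kuhn's cubical labelling lemma**: if each `f i` is `0` on the face `v i = 0` and `1` on the face
`v i = N`, then on some unit cube of the grid every `f i` takes both values. -/
theorem kuhn_labelling (f : ι → (ι → ℕ) → ZMod 2) {N : ℕ}
    (h0 : ∀ i v, v i = 0 → f i v = 0) (h1 : ∀ i v, v i = N → f i v = 1) :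
    ∃ v : ι → ℕ, (∀ j, v j < N) ∧ ∀ i, ∃ w w' : ι → ℕ, f i w ≠ f i w' ∧
      (∀ j, v j ≤ w j ∧ w j ≤ v j + 1) ∧ (∀ j, v j ≤ w' j ∧ w' j ≤ v j + 1) := by
  have hsum := sum_kuhnSum f h0 h1 Finset.univ.toList (Finset.nodup_toList _)
    (fun _ => Finset.range N) (by simp) (by simp)
  obtain ⟨v, hv, hne⟩ := Finset.exists_ne_zero_of_sum_ne_zero (hsum.trans_ne one_ne_zero)
  refine ⟨v, by simpa using hv, fun i => ?_⟩
  simpa using exists_of_kuhnSum_ne_zero f _ _ v hne i (by simp)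

end Kuhn

open unitInterval Topology

/-! ### Fixed points in cubes -/

/-- **Brouwer's fixed point theorem** for a finite-dimensional cube. -/
theorem brouwer_cube {ι : Type*} [Fintype ι] (F : (ι → I) → (ι → I)) (hF : Continuous F) :
    ∃ x, F x = x := by
  classical
  -- By compactness it suffices to find approximate fixed points.
  have approx : ∀ ε > 0, ∃ x, dist (F x) x ≤ ε := by
    intro ε hε
    have huc : ∀ i, UniformContinuous fun x : ι → I => (F x i : ℝ) - x i := fun i =>
      CompactSpace.uniformContinuous_of_continuous (by fun_prop)
    have hδ : ∀ i, ∃ δ > 0, ∀ x y : ι → I, dist x y < δ →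
        dist ((F x i : ℝ) - x i) ((F y i : ℝ) - y i) < ε := fun i =>
      let ⟨δ, h, h'⟩ := Metric.uniformContinuous_iff.1 (huc i) ε hε
      ⟨δ, h, fun x y hxy => h' hxy⟩
    choose δ hδ0 hδ using hδ
    obtain ⟨η, hη0, hη⟩ : ∃ η > 0, ∀ i, η ≤ δ i := by
      obtain ⟨η, h1, h2⟩ := Set.Finite.exists_between' (Set.finite_singleton (0 : ℝ))
        (Set.finite_range δ) (by rintro x rfl y ⟨i, rfl⟩; exact hδ0 i)
      exact ⟨η, h1 0 rfl, fun i => (h2 _ ⟨i, rfl⟩).le⟩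
    obtain ⟨n, hn⟩ := exists_nat_one_div_lt hη0
    set N := n + 1 with hN
    have hNpos : (0 : ℝ) < N := by positivity
    let p : (ι → ℕ) → ι → I := fun v i => Set.projIcc 0 1 zero_le_one ((v i : ℝ) / N)
    -- The label of `v` records the sign of `F (p v) i - p v i`, with its value forced where Kuhn's
    -- lemma demands it; there it is still a correct weak sign, as `F` maps into the cube.
    let f : ι → (ι → ℕ) → ZMod 2 := fun i v =>
      if v i = 0 then 0 else if v i = N then 1 else if (p v i : ℝ) ≤ F (p v) i then 0 else 1
    obtain ⟨v, hvN, hv⟩ := kuhn_labelling f (N := N) (fun i v h => by simp [f, h])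
      (fun i v h => by simp [f, h, hN])
    have hclose : ∀ w : ι → ℕ, (∀ j, v j ≤ w j ∧ w j ≤ v j + 1) → dist (p v) (p w) < η := by
      intro w hw
      rw [dist_pi_lt_iff hη0]
      intro j
      refine lt_of_le_of_lt ?_ hn
      have h1 : dist (p v j) (p w j) ≤ |(v j : ℝ) / N - (w j : ℝ) / N| := by
        simpa [Real.dist_eq] using
          (LipschitzWith.projIcc (zero_le_one (α := ℝ))).dist_le_mul ((v j : ℝ) / N) ((w j : ℝ) / N)
      refine h1.trans ?_
      rw [← sub_div, abs_div, abs_of_pos hNpos, hN]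
      push_cast
      gcongr
      have a1 : (v j : ℝ) ≤ w j := by exact_mod_cast (hw j).1
      have a2 : (w j : ℝ) ≤ v j + 1 := by exact_mod_cast (hw j).2
      rw [abs_le]; constructor <;> linarith
    have hlab0 : ∀ i w, f i w = 0 → (0 : ℝ) ≤ F (p w) i - p w i := by
      intro i w h
      by_cases h0 : w i = 0
      · simp [p, h0, (F _ i).2.1]
      · by_cases h1 : w i = N
        · simp [f, h1, hN] at h
        · by_contra hc
          have : ¬ ((p w i : ℝ) ≤ F (p w) i) := fun h => hc (sub_nonneg.2 h)
          simp only [f, h0, h1, this, if_false] at h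
          exact one_ne_zero h
    have hlab1 : ∀ i w, f i w ≠ 0 → (F (p w) i : ℝ) - p w i ≤ 0 := by
      intro i w h
      by_cases h0 : w i = 0
      · simp [f, h0] at h
      · by_cases h1 : w i = N
        · have : p w i = 1 := by
            simp only [p, h1]
            rw [div_self hNpos.ne']
            exact Set.projIcc_right zero_le_one
          rw [this]
          simpa using (F _ i).2.2
        · by_contra hc
          have : (p w i : ℝ) ≤ F (p w) i := by linarith
          simp only [f, h0, h1, this, if_false, if_true] at h
          exact h rfl
    refine ⟨p v, (dist_pi_le_iff hε.le).2 fun i => ?_⟩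
    obtain ⟨w, w', hne, hw, hw'⟩ := hv i
    wlog h : f i w = 0 generalizing w w'
    · refine this w' w hne.symm hw' hw ?_
      revert hne h
      generalize f i w = x
      generalize f i w' = y
      revert x y
      decide
    have b0 := hlab0 i w h
    have b1 := hlab1 i w' (fun h' => hne (h.trans h'.symm))
    have c0 := hδ i _ _ ((hclose w hw).trans_le (hη i))
    have c1 := hδ i _ _ ((hclose w' hw').trans_le (hη i))
    rw [Real.dist_eq, abs_lt] at c0 c1
    rw [Subtype.dist_eq, Real.dist_eq, abs_le]
    constructor <;> linarith
  obtain ⟨x, -, hx⟩ := isCompact_univ.exists_isMinOn (univ_nonempty (α := ι → I))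
    (f := fun x => dist (F x) x) (by fun_prop)
  refine ⟨x, dist_le_zero.1 (le_of_forall_pos_le_add fun ε hε => ?_)⟩
  obtain ⟨y, hy⟩ := approx ε hε
  rw [zero_add]
  exact (hx (mem_univ y)).trans hy

/-- Fixed point theorem for a cube of arbitrary dimension. For a finite set `s` of coordinates, the
points whose `s`-coordinates are fixed by `F` form a closed set, nonempty by Brouwer's theorem with
the other coordinates frozen at `0`; compactness gives a point in all of these sets. -/
theorem brouwer_tychonoff_cube {κ : Type*} (F : (κ → I) → (κ → I)) (hF : Continuous F) :
    ∃ x, F x = x := by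
  classical
  let K : Finset κ → Set (κ → I) := fun s => {x | ∀ i ∈ s, F x i = x i}
  have hcl : ∀ s, IsClosed (K s) := by
    intro s
    simp only [K, Set.ofPred_forall]
    exact isClosed_biInter fun i _ => isClosed_eq (by fun_prop) (by fun_prop)
  have hne : ∀ s, (K s).Nonempty := by
    intro s
    let E : (s → I) → κ → I := fun x k => if h : k ∈ s then x ⟨k, h⟩ else 0
    have hE : Continuous E := by
      refine continuous_pi fun k => ?_
      by_cases h : k ∈ s
      · simpa [E, h] using continuous_apply _
      · simpa [E, h] using continuous_const
    obtain ⟨x, hx⟩ := brouwer_cube (fun (x : s → I) (i : s) => F (E x) i) (by fun_prop)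
    refine ⟨E x, fun i hi => ?_⟩
    have := congrFun hx ⟨i, hi⟩
    simpa [E, hi] using this
  obtain ⟨x, hx⟩ := IsCompact.nonempty_iInter_of_directed_nonempty_isCompact_isClosed K
    (fun s t => ⟨s ∪ t, fun x hx i hi => hx i (Finset.mem_union_left _ hi),
      fun x hx i hi => hx i (Finset.mem_union_right _ hi)⟩)
    hne (fun s => (hcl s).isCompact) hcl
  refine ⟨x, funext fun i => ?_⟩
  exact Set.mem_iInter.1 hx {i} i (Finset.mem_singleton_self i)

/-- The expansive theorem over a cube. Reflecting the first component of `S` about `t` and clamping,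
i.e. replacing `S₁` by `2 t - S₁` forced into `[a, b]`, gives a self-map of the cylinder; the
boundary conditions ensure that its fixed points are fixed points of `S`. -/
theorem cube_cylinder_expansive {κ : Type*} {a b : ℝ} (hab : a < b)
    (S₁ : ℝ → (κ → I) → ℝ) (S₂ : ℝ → (κ → I) → κ → I)
    (h₁ : Continuous fun z : ℝ × (κ → I) => S₁ z.1 z.2)
    (h₂ : Continuous fun z : ℝ × (κ → I) => S₂ z.1 z.2)
    (ha : ∀ q, S₁ a q ≤ a) (hb : ∀ q, b ≤ S₁ b q) :
    ∃ t ∈ Icc a b, ∃ q, S₁ t q = t ∧ S₂ t q = q := by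
  let c : I → ℝ := fun s => a + s * (b - a)
  have hc : Continuous c := by fun_prop
  have hcm : ∀ s, c s ∈ Icc a b := by
    intro s
    have := s.2.1; have := s.2.2
    constructor <;> simp only [c] <;> nlinarith
  let P : (Option κ → I) → ℝ × (κ → I) := fun x => (c (x none), fun k => x (some k))
  have hP : Continuous P := by fun_prop
  have k₁ : Continuous fun x => S₁ (P x).1 (P x).2 := h₁.comp hP
  have k₂ : Continuous fun x => S₂ (P x).1 (P x).2 := h₂.comp hP
  -- The coordinate `none` parametrizes `[a, b]`, the coordinates `some k` the base of the cylinder.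
  let F : (Option κ → I) → Option κ → I := fun x o => o.elim
    (Set.projIcc 0 1 zero_le_one ((2 * (P x).1 - S₁ (P x).1 (P x).2 - a) / (b - a)))
    (fun k => S₂ (P x).1 (P x).2 k)
  have hF : Continuous F := by
    refine continuous_pi fun o => ?_
    cases o with
    | none => exact continuous_projIcc.comp (by fun_prop)
    | some k => exact (continuous_apply k).comp k₂
  obtain ⟨x, hx⟩ := brouwer_tychonoff_cube F hF
  refine ⟨(P x).1, (hcm _), (P x).2, ?_, funext fun k => congrFun hx (some k)⟩
  have h := congrArg Subtype.val (congrFun hx none)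
  have hba : 0 < b - a := sub_pos.2 hab
  simp only [F, Option.elim, Set.coe_projIcc] at h
  have hPx : (P x).1 = a + x none * (b - a) := rfl
  set q := (P x).2
  set t := (P x).1
  set y := (2 * t - S₁ t q - a) / (b - a) with hy
  have hy' : y * (b - a) = 2 * t - S₁ t q - a := div_mul_cancel₀ _ hba.ne'
  rcases le_or_gt y 0 with h0 | h0
  · have hx0 : (x none : ℝ) = 0 := by rw [← h, min_eq_right (by linarith), max_eq_left h0]
    have hta : t = a := by rw [hPx, hx0]; ring
    have := ha q
    rw [hta] at hy' ⊢
    nlinarith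
  rcases le_or_gt 1 y with h1 | h1
  · have hx0 : (x none : ℝ) = 1 := by rw [← h, min_eq_left h1, max_eq_right zero_le_one]
    have hta : t = b := by rw [hPx, hx0]; ring
    have := hb q
    rw [hta] at hy' ⊢
    nlinarith
  · rw [min_eq_right h1.le, max_eq_right h0.le] at h
    rw [← h] at hPx
    linarith

/-! ### Reduction to the Hilbert cube -/

universe u v in
/-- A compact subset `K` of an absolute retract factors through the Hilbert cube: `e` embeds `K` in the
cube, and `g` extends the inverse of `e` to the whole cube. -/
lemma exists_cube_factor {A : Type u} [TopologicalSpace A] (hAR : IsAbsoluteRetract.{u, v} A)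
    {K : Set A} (hK : IsCompact K) :
    ∃ (e : K → ℕ → I) (g : (ℕ → I) → A), Continuous e ∧ Continuous g ∧ ∀ x : K, g (e x) = x := by
  obtain ⟨hA, hext⟩ := hAR
  let := TopologicalSpace.metrizableSpaceMetric A
  have : CompactSpace K := isCompact_iff_compactSpace.1 hK
  obtain ⟨e, he⟩ := Metric.PiNatEmbed.exists_embedding_to_hilbert_cube (X := K)
  -- The extension property speaks about metric spaces in the universe `v` only.
  have : TopologicalSpace.MetrizableSpace (ULift.{v} (ℕ → I)) :=
    Homeomorph.ulift.isEmbedding.metrizableSpace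
  let : MetricSpace (ULift.{v} (ℕ → I)) := TopologicalSpace.metrizableSpaceMetric _
  have hj : IsClosedEmbedding fun x : K => (ULift.up (e x) : ULift.{v} (ℕ → I)) :=
    (continuous_uliftUp.comp he.continuous).isClosedEmbedding
      (fun x y h => he.injective (ULift.up_injective h))
  let φ := hj.isEmbedding.toHomeomorph
  obtain ⟨g, hg, hg'⟩ := hext (ULift.{v} (ℕ → I)) _ hj.isClosed_range
    (fun m => (φ.symm m : A)) (continuous_subtype_val.comp φ.symm.continuous)
  refine ⟨e, fun q => g (ULift.up q), he.continuous, by fun_prop, fun x => ?_⟩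
  have := hg' (φ x)
  rw [φ.symm_apply_apply] at this
  exact this

/-- **Kwong-type theorem on a cylinder, expansive form.** -/
theorem kwong_cylinder_expansive
    {A : Type*} [TopologicalSpace A] (hAR : IsAbsoluteRetract A)
    (a b : ℝ) (hab : a < b)
    (T : ℝ × A → ℝ × A)
    (hT_cont : ContinuousOn T (Icc a b ×ˢ (univ : Set A)))
    (hT_comp : IsCompact (closure (T '' (Icc a b ×ˢ (univ : Set A)))))
    (hEa : ∀ z ∈ Icc a b ×ˢ (univ : Set A), z.1 = a → (T z).1 ≤ a)
    (hEb : ∀ z ∈ Icc a b ×ˢ (univ : Set A), z.1 = b → b ≤ (T z).1) :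
    ∃ z ∈ Icc a b ×ˢ (univ : Set A), T z = z := by
  set K := Prod.snd '' closure (T '' (Icc a b ×ˢ (univ : Set A)))
  obtain ⟨e, g, he, hg, heg⟩ := exists_cube_factor hAR (K := K) (hT_comp.image continuous_snd)
  have hTK : ∀ z ∈ Icc a b ×ˢ (univ : Set A), (T z).2 ∈ K := fun z hz =>
    ⟨T z, subset_closure ⟨z, hz, rfl⟩, rfl⟩
  let r : ℝ → Icc a b := Set.projIcc a b hab.le
  have hr : ∀ t (y : A), ((r t : ℝ), y) ∈ Icc a b ×ˢ (univ : Set A) :=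
    fun t y => ⟨(r t).2, mem_univ _⟩
  have hTr : Continuous fun z : ℝ × (ℕ → I) => T (r z.1, g z.2) :=
    hT_cont.comp_continuous (by fun_prop) fun z => hr _ _
  obtain ⟨t, ht, q, h1, h2⟩ := cube_cylinder_expansive hab
    (fun t q => (T (r t, g q)).1) (fun t q => e ⟨(T (r t, g q)).2, hTK _ (hr _ _)⟩)
    hTr.fst (he.comp (hTr.snd.subtype_mk _))
    (fun q => hEa _ (hr _ _) (by simp [r]))
    (fun q => hEb _ (hr _ _) (by simp [r]))
  have hrt : (r t : ℝ) = t := by simp [r, Set.projIcc_of_mem _ ht]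
  refine ⟨(t, g q), ⟨ht, mem_univ _⟩, Prod.ext (by simpa only [hrt] using h1) ?_⟩
  have h3 := (heg _).symm.trans (congrArg g h2)
  simpa only [hrt] using h3
end

section
/- Let A be an absolute retract, let a < b be real numbers, and set C = [a,b] × A, C_l = {a} × A, C_r = {b} × A. Let T = (T₁, T₂) : C → ℝ × A be a compact map satisfying the compressive conditions: T₁(z) ≥ a for all z ∈ C_l, and T₁(z) ≤ b for all z ∈ C_r. Then T has at least one fixed point in C, i.e. there exists z ∈ C with T(z) = z. -/
/-!
Clamping the first coordinate of `T` to `[a, b]` gives a self-map of the cylinder. A fixed point of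
the clamped map is a fixed point of `T`: the clamp could only act at an end of the interval, and the
compressive conditions exclude that.

The clamped map `S` has its second coordinate in a compact set `K ⊆ A`. Embed `K` in the Hilbert cube
by `j`, and extend the inverse `j '' K → A` to a continuous map `g` on all of `ℕ → ℝ`, which is
possible as `A` is an absolute retract. Then `(t, q) ↦ ((S (t, g q)).1, j (S (t, g q)).2)` is a
self-map of a product of countably many intervals, and a fixed point `(t, q)` of it yields the
fixed point `(t, g q)` of `S`, because `g` inverts `j`. So everything reduces to the fixed point
property of a countable product of intervals (`exists_fixedPoint_nat`), which follows from Brouwer's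
theorem by truncating to finitely many coordinates and extracting a convergent subsequence.

Brouwer's theorem (`brouwer`) is proved analytically, in the spirit of Milnor and Rogers. After
smoothing and cutting off, it says that `x ↦ x + u x` has a zero whenever `u` is `C¹` with compact
support (`exists_add_eq_zero`). For small `t ≥ 0` the map `h_t = id + t u` is a bijection of a large
ball `B` with positive Jacobian, so `∫_B w(h_t) det Dh_t = ∫_B w` for every `w`. If `w` is a polynomial,
the left side is a polynomial in `t`, hence the identity persists at `t = 1`
(`integral_comp_mul_det`). With `w = (1 - |y|² / R)^k` peaking at the origin and `k → ∞`, this is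
impossible if `h_1` avoids the origin on `B`.
-/

open Set

/-! ### Polynomial dependence on the deformation parameter -/

open Polynomial in
/-- Lagrange interpolation at nodes in `[0, ε]`: the value at `1` of a polynomial of bounded degree is
a fixed affine combination of its values at those nodes. -/
lemma exists_extrapolation (N : ℕ) {ε : ℝ} (hε : 0 < ε) :
    ∃ c t : Fin (N + 1) → ℝ, (∀ i, 0 ≤ t i ∧ t i ≤ ε) ∧ ∑ i, c i = 1 ∧
      ∀ p : ℝ[X], p.natDegree ≤ N → p.eval 1 = ∑ i, c i * p.eval (t i) := by
  let t : Fin (N + 1) → ℝ := fun i => ε * ((i : ℕ) / (N + 1 : ℝ))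
  have hN : (0 : ℝ) < N + 1 := by positivity
  have ht : InjOn t (Finset.univ : Finset (Fin (N + 1))) := by
    intro i _ j _ h
    have := mul_left_cancel₀ hε.ne' h
    rw [div_left_inj' hN.ne'] at this
    exact Fin.ext (by exact_mod_cast this)
  refine ⟨fun i => (Lagrange.basis Finset.univ t i).eval 1, t, ?_, ?_, ?_⟩
  · intro i
    refine ⟨by positivity, mul_le_of_le_one_right hε.le ?_⟩
    rw [div_le_one hN]
    exact_mod_cast i.2.le
  · rw [← Polynomial.eval_finsetSum, Lagrange.sum_basis ht Finset.univ_nonempty]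
    simp
  · intro p hp
    have hdeg : p.degree < (Finset.univ : Finset (Fin (N + 1))).card := by
      rw [Finset.card_univ, Fintype.card_fin]
      exact lt_of_le_of_lt p.degree_le_natDegree (by exact_mod_cast Nat.lt_succ_of_le hp)
    conv_lhs => rw [Lagrange.eq_interpolate ht hdeg, Lagrange.interpolate_apply]
    rw [Polynomial.eval_finsetSum]
    exact Finset.sum_congr rfl fun i _ => by simp [mul_comm]

open Polynomial in
/-- The integrand of `integral_comp_mul_det`, along the segment `x + t v`, is polynomial in `t`, of degree
bounded independently of the point. -/
lemma exists_polynomial_jacobian {n : ℕ} (L : (Fin n → ℝ) →L[ℝ] (Fin n → ℝ))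
    (x v : Fin n → ℝ) (r : ℝ) (k : ℕ) :
    ∃ p : ℝ[X], p.natDegree ≤ 2 * k + n ∧ ∀ t : ℝ,
      p.eval t = (1 - r * ∑ i, (x + t • v) i ^ 2) ^ k *
        (ContinuousLinearMap.id ℝ (Fin n → ℝ) + t • L).det := by
  let M := LinearMap.toMatrix' (L : (Fin n → ℝ) →ₗ[ℝ] (Fin n → ℝ))
  refine ⟨(1 - C r * ∑ i, (C (x i) + X * C (v i)) ^ 2) ^ k *
    ((X : ℝ[X]) • M.map C + (1 : Matrix (Fin n) (Fin n) ℝ).map C).det, ?_, ?_⟩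
  · refine natDegree_mul_le.trans (add_le_add ?_ ?_)
    · refine natDegree_pow_le.trans ?_
      rw [mul_comm]
      refine Nat.mul_le_mul_right _ ?_
      refine (natDegree_sub_le _ _).trans (max_le (by simp) ?_)
      refine (natDegree_C_mul_le _ _).trans ?_
      refine natDegree_sum_le_of_forall_le _ _ fun i _ => ?_
      compute_degree
    · simpa using natDegree_det_X_add_C_le M 1
  · intro t
    have hdet : ((ContinuousLinearMap.id ℝ (Fin n → ℝ) + t • L).det) = (1 + t • M).det := by
      rw [ContinuousLinearMap.det, ← LinearMap.det_toMatrix']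
      congr 1
      simp [M]
    rw [hdet, eval_mul, ← coe_evalRingHom, RingHom.map_det]
    congr 1
    · simp [eval_finsetSum, mul_comm t]
    · congr 1
      ext i j
      rcases eq_or_ne i j with rfl | h
      · simp
        ring
      · simp [h, mul_comm t]

/-! ### Change of variables for compactly supported perturbations of the identity -/

/-- The determinant is positive since it does not vanish on the path `s ↦ id + s L`, `0 ≤ s ≤ t`. -/
lemma det_id_add_pos {n : ℕ} (L : (Fin n → ℝ) →L[ℝ] (Fin n → ℝ)) {t : ℝ} (ht : 0 ≤ t)
    (hL : t * ‖L‖ < 1) : 0 < (ContinuousLinearMap.id ℝ (Fin n → ℝ) + t • L).det := by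
  by_contra! hneg
  have hcont : Continuous fun s : ℝ => (ContinuousLinearMap.id ℝ (Fin n → ℝ) + s • L).det :=
    ContinuousLinearMap.continuous_det.comp (by fun_prop)
  have h0 : (ContinuousLinearMap.id ℝ (Fin n → ℝ) + (0 : ℝ) • L).det = 1 := by
    simp [ContinuousLinearMap.det]
  obtain ⟨s, hs, hs0⟩ := intermediate_value_Icc' ht hcont.continuousOn
    (show (0 : ℝ) ∈ Icc _ _ from ⟨hneg, by simp only [h0]; norm_num⟩)
  have hs0 : LinearMap.det
    ((ContinuousLinearMap.id ℝ (Fin n → ℝ) + s • L : (Fin n → ℝ) →L[ℝ] (Fin n → ℝ)) :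
      (Fin n → ℝ) →ₗ[ℝ] (Fin n → ℝ)) = 0 := hs0
  obtain ⟨v, hv, hv0⟩ := Submodule.exists_mem_ne_zero_of_ne_bot
    (LinearMap.bot_lt_ker_of_det_eq_zero hs0).ne'
  have hv : v + s • L v = 0 := by simpa using hv
  have h1 : ‖v‖ = s * ‖L v‖ := by
    rw [eq_neg_of_add_eq_zero_left hv, norm_neg, norm_smul, Real.norm_of_nonneg hs.1,
      ← eq_neg_of_add_eq_zero_left hv]
  have h2 : s * ‖L v‖ ≤ t * (‖L‖ * ‖v‖) :=
    mul_le_mul hs.2 (L.le_opNorm v) (norm_nonneg _) ht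
  have h3 : 0 < ‖v‖ := norm_pos_iff.2 hv0
  nlinarith

open MeasureTheory Metric in
/-- For small `t` the map `id + t u` permutes the ball (it is a bijection of the whole space, and the
identity off the ball), so this is the change of variables formula. -/
lemma integral_comp_mul_det_of_small {n : ℕ} {u : (Fin n → ℝ) → (Fin n → ℝ)}
    (hu : ContDiff ℝ 1 u) {K : NNReal} (hK : LipschitzWith K u) {ρ : ℝ}
    (hsupp : ∀ x, x ∉ closedBall 0 ρ → u x = 0) {t : ℝ} (ht : 0 ≤ t) (htK : t * K < 1)
    (w : (Fin n → ℝ) → ℝ) :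
    ∫ x in closedBall 0 ρ, w (x + t • u x) *
        (ContinuousLinearMap.id ℝ (Fin n → ℝ) + t • fderiv ℝ u x).det =
      ∫ x in closedBall 0 ρ, w x := by
  set h : (Fin n → ℝ) → (Fin n → ℝ) := fun x => x + t • u x with hh
  have hinj : Function.Injective h := by
    intro x y hxy
    by_contra hne
    have h1 : x - y = t • (u y - u x) := by
      simp only [hh] at hxy
      rw [smul_sub, sub_eq_sub_iff_add_eq_add, hxy, add_comm]
    have h2 : ‖x - y‖ ≤ t * (K * ‖x - y‖) := by
      conv_lhs => rw [h1, norm_smul, Real.norm_of_nonneg ht, norm_sub_rev]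
      exact mul_le_mul_of_nonneg_left (hK.norm_sub_le x y) ht
    have h3 : 0 < ‖x - y‖ := norm_pos_iff.2 (sub_ne_zero.2 hne)
    nlinarith
  have hsurj : Function.Surjective h := by
    intro y
    -- `x` solves `x + t u x = y` exactly when it is fixed by the contraction `x ↦ y - t u x`.
    have hc : ContractingWith (t.toNNReal * K) fun x => y - t • u x := by
      refine ⟨NNReal.coe_lt_coe.1 (by simpa [ht] using htK), LipschitzWith.of_dist_le_mul fun a b => ?_⟩
      rw [dist_eq_norm, sub_sub_sub_cancel_left, ← smul_sub, norm_smul, Real.norm_of_nonneg ht,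
        norm_sub_rev, NNReal.coe_mul, Real.coe_toNNReal t ht, mul_assoc, dist_eq_norm]
      exact mul_le_mul_of_nonneg_left (hK.norm_sub_le a b) ht
    refine ⟨hc.fixedPoint, ?_⟩
    have := hc.fixedPoint_isFixedPt
    simp only [Function.IsFixedPt] at this
    simp only [hh]
    nth_rewrite 1 [← this]
    simp
  have hout : ∀ x, x ∉ closedBall (0 : Fin n → ℝ) ρ → h x = x := fun x hx => by
    simp [hh, hsupp x hx]
  have himg : h '' closedBall 0 ρ = closedBall 0 ρ := by
    ext y
    constructor
    · rintro ⟨x, hx, rfl⟩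
      by_contra hy
      have := hinj (hout _ hy)
      rw [this] at hy
      exact hy hx
    · intro hy
      obtain ⟨x, rfl⟩ := hsurj y
      refine ⟨x, ?_, rfl⟩
      by_contra hx
      rw [hout x hx] at hy
      exact hx hy
  have hder : ∀ x ∈ closedBall (0 : Fin n → ℝ) ρ, HasFDerivWithinAt h
      (ContinuousLinearMap.id ℝ (Fin n → ℝ) + t • fderiv ℝ u x) (closedBall 0 ρ) x := fun x _ =>
    ((hasFDerivAt_id x).add
      (((hu.differentiable one_ne_zero) x).hasFDerivAt.const_smul t)).hasFDerivWithinAt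
  have key := integral_image_eq_integral_abs_det_fderiv_smul volume
    measurableSet_closedBall hder hinj.injOn w
  rw [himg] at key
  rw [key]
  refine integral_congr_ae (Filter.Eventually.of_forall fun x => ?_)
  have hpos : 0 < (ContinuousLinearMap.id ℝ (Fin n → ℝ) + t • fderiv ℝ u x).det :=
    det_id_add_pos _ ht (lt_of_le_of_lt
      (mul_le_mul_of_nonneg_left (norm_fderiv_le_of_lipschitz ℝ hK) ht) htK)
  simp only [abs_of_pos hpos, smul_eq_mul]
  rw [mul_comm]

open MeasureTheory Metric in
/-- Both sides agree for `id + t u` with `t` small, by `integral_comp_mul_det_of_small`; as the integrand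
is polynomial in `t`, extrapolation carries the identity to `t = 1`. -/
lemma integral_comp_mul_det {n : ℕ} {u : (Fin n → ℝ) → (Fin n → ℝ)}
    (hu : ContDiff ℝ 1 u) {K : NNReal} (hK : LipschitzWith K u) {ρ : ℝ}
    (hsupp : ∀ x, x ∉ closedBall 0 ρ → u x = 0) (r : ℝ) (k : ℕ) :
    ∫ x in closedBall 0 ρ, (1 - r * ∑ i, (x + u x) i ^ 2) ^ k *
        (ContinuousLinearMap.id ℝ (Fin n → ℝ) + fderiv ℝ u x).det =
      ∫ x in closedBall (0 : Fin n → ℝ) ρ, (1 - r * ∑ i, x i ^ 2) ^ k := by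
  have hε : (0 : ℝ) < 1 / (K + 1) := by positivity
  obtain ⟨c, t, ht, hc, hp⟩ := exists_extrapolation (2 * k + n) hε
  have hpt : ∀ x, (1 - r * ∑ i, (x + u x) i ^ 2) ^ k *
        (ContinuousLinearMap.id ℝ (Fin n → ℝ) + fderiv ℝ u x).det =
      ∑ j, c j * ((1 - r * ∑ i, (x + t j • u x) i ^ 2) ^ k *
        (ContinuousLinearMap.id ℝ (Fin n → ℝ) + t j • fderiv ℝ u x).det) := by
    intro x
    obtain ⟨p, hpd, hpe⟩ := exists_polynomial_jacobian (fderiv ℝ u x) x (u x) r k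
    have := hp p hpd
    simp only [hpe, one_smul] at this
    exact this
  have hfd : Continuous (fderiv ℝ u) := hu.continuous_fderiv one_ne_zero
  have huc : Continuous u := hu.continuous
  simp only [hpt]
  rw [integral_finsetSum]
  · have : ∀ j, ∫ x in closedBall (0 : Fin n → ℝ) ρ,
        c j * ((1 - r * ∑ i, (x + t j • u x) i ^ 2) ^ k *
        (ContinuousLinearMap.id ℝ (Fin n → ℝ) + t j • fderiv ℝ u x).det) =
        c j * ∫ x in closedBall (0 : Fin n → ℝ) ρ, (1 - r * ∑ i, x i ^ 2) ^ k := by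
      intro j
      rw [integral_const_mul]
      congr 1
      refine integral_comp_mul_det_of_small hu hK hsupp (ht j).1 ?_
        (fun y => (1 - r * ∑ i, y i ^ 2) ^ k)
      have hK0 : (0 : ℝ) ≤ K := K.2
      calc t j * K ≤ 1 / (K + 1) * K := mul_le_mul_of_nonneg_right (ht j).2 hK0
        _ < 1 := by rw [one_div_mul_eq_div, div_lt_one (by positivity)]; linarith
    simp only [this]
    rw [← Finset.sum_mul, hc, one_mul]
  · intro j _
    refine ContinuousOn.integrableOn_compact (isCompact_closedBall _ _) (Continuous.continuousOn ?_)
    have h1 : Continuous fun x =>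
        (ContinuousLinearMap.id ℝ (Fin n → ℝ) + t j • fderiv ℝ u x).det :=
      ContinuousLinearMap.continuous_det.comp (by fun_prop)
    fun_prop

open MeasureTheory Metric in
/-- A `C¹` perturbation of the identity with compact support has a zero. -/
lemma exists_add_eq_zero {n : ℕ} {u : (Fin n → ℝ) → (Fin n → ℝ)}
    (hu : ContDiff ℝ 1 u) (hs : HasCompactSupport u) : ∃ x, x + u x = 0 := by
  by_contra! hne
  obtain ⟨K, hK⟩ := hu.lipschitzWith_of_hasCompactSupport hs one_ne_zero
  obtain ⟨ρ, hρ, hsub⟩ := hs.isBounded.subset_closedBall_lt 0 (0 : Fin n → ℝ)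
  have hsupp : ∀ x, x ∉ closedBall 0 ρ → u x = 0 := fun x hx =>
    image_eq_zero_of_notMem_tsupport fun h => hx (hsub h)
  set B := closedBall (0 : Fin n → ℝ) ρ
  have hB : IsCompact B := isCompact_closedBall _ _
  have hzero : (0 : Fin n → ℝ) ∈ B := mem_closedBall_self hρ.le
  let q : (Fin n → ℝ) → ℝ := fun y => ∑ i, y i ^ 2
  have hq0 : ∀ y, 0 ≤ q y := fun y => Finset.sum_nonneg fun i _ => sq_nonneg _
  have hqc : Continuous q := by fun_prop
  have huc : Continuous u := hu.continuous
  have hqh : Continuous fun x => q (x + u x) := by fun_prop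
  obtain ⟨x₀, hx₀, hmin⟩ := hB.exists_isMinOn ⟨0, hzero⟩ hqh.continuousOn
  -- `δ` is the least value of `|x + u x|²` on `B`, and `R` below bounds `|x|²` and `|x + u x|²` there.
  set δ := q (x₀ + u x₀) with hδ
  have hδ0 : 0 < δ := by
    refine lt_of_le_of_ne (hq0 _) fun h => hne x₀ ?_
    have := (Finset.sum_eq_zero_iff_of_nonneg fun i _ => sq_nonneg _).1 h.symm
    ext i
    exact pow_eq_zero_iff two_ne_zero |>.1 (this i (Finset.mem_univ i))
  obtain ⟨R₁, hR₁⟩ := hB.exists_bound_of_continuousOn hqh.continuousOn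
  obtain ⟨R₂, hR₂⟩ := hB.exists_bound_of_continuousOn hqc.continuousOn
  set R := max R₁ R₂
  have hR₁ : ∀ x ∈ B, q (x + u x) ≤ R := fun x hx =>
    (le_abs_self _).trans ((hR₁ x hx).trans (le_max_left _ _))
  have hR₂ : ∀ x ∈ B, q x ≤ R := fun x hx =>
    (le_abs_self _).trans ((hR₂ x hx).trans (le_max_right _ _))
  have hδR : δ ≤ R := hR₁ x₀ hx₀
  have hR : 0 < R := hδ0.trans_le hδR
  -- The weight is at most `a ^ k` on the image of `B`, but at least `b ^ k` near the origin.
  set a := 1 - R⁻¹ * δ with ha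
  set b := 1 - R⁻¹ * (δ / 2) with hb
  have hRi : 0 < R⁻¹ := inv_pos.2 hR
  have hRδ : R⁻¹ * δ ≤ 1 := by rw [inv_mul_le_one₀ hR]; exact hδR
  have ha0 : 0 ≤ a := by linarith
  have hab : a < b := by have := mul_pos hRi hδ0; linarith
  have hb0 : 0 < b := ha0.trans_lt hab
  let D : (Fin n → ℝ) → ℝ := fun x => (ContinuousLinearMap.id ℝ (Fin n → ℝ) + fderiv ℝ u x).det
  have hfd : Continuous (fderiv ℝ u) := hu.continuous_fderiv one_ne_zero
  have hD : Continuous D := ContinuousLinearMap.continuous_det.comp (by fun_prop)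
  let V : Set (Fin n → ℝ) := ball 0 ρ ∩ {x | q x < δ / 2}
  have hVo : IsOpen V := isOpen_ball.inter (isOpen_lt hqc continuous_const)
  have hVB : V ⊆ B := fun x hx => ball_subset_closedBall hx.1
  have hVfin : volume V < ⊤ := (measure_mono hVB).trans_lt hB.measure_lt_top
  have hVpos : 0 < volume.real V := by
    refine ENNReal.toReal_pos (hVo.measure_pos volume ⟨0, mem_ball_self hρ, ?_⟩).ne' hVfin.ne
    simp [q, hδ0]
  set I := ∫ x in B, |D x| with hI
  have hineq : ∀ k : ℕ, b ^ k * volume.real V ≤ a ^ k * I := by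
    intro k
    calc b ^ k * volume.real V = ∫ x in V, b ^ k := by simp [mul_comm]
      _ ≤ ∫ x in V, (1 - R⁻¹ * q x) ^ k := by
        refine setIntegral_mono_on (integrableOn_const hVfin.ne) ?_ hVo.measurableSet ?_
        · exact (ContinuousOn.integrableOn_compact hB
            (Continuous.continuousOn (by fun_prop))).mono_set hVB
        · intro x hx
          refine pow_le_pow_left₀ hb0.le ?_ k
          have : q x < δ / 2 := hx.2
          have := mul_lt_mul_of_pos_left this hRi
          linarith
      _ ≤ ∫ x in B, (1 - R⁻¹ * q x) ^ k := by
        refine setIntegral_mono_set (ContinuousOn.integrableOn_compact hB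
            (Continuous.continuousOn (by fun_prop))) ?_ hVB.eventuallyLE
        refine (ae_restrict_iff' hB.measurableSet).2 (Filter.Eventually.of_forall fun x hx => ?_)
        refine pow_nonneg (sub_nonneg.2 ?_) k
        rw [inv_mul_le_one₀ hR]
        exact hR₂ x hx
      _ = ∫ x in B, (1 - R⁻¹ * q (x + u x)) ^ k * D x :=
        (integral_comp_mul_det hu hK hsupp R⁻¹ k).symm
      _ ≤ ∫ x in B, a ^ k * |D x| := by
        refine setIntegral_mono_on ?_ ?_ hB.measurableSet ?_
        · exact ContinuousOn.integrableOn_compact hB (Continuous.continuousOn (by fun_prop))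
        · exact ContinuousOn.integrableOn_compact hB (Continuous.continuousOn (by fun_prop))
        · intro x hx
          have h1 : 0 ≤ 1 - R⁻¹ * q (x + u x) := by
            rw [sub_nonneg, inv_mul_le_one₀ hR]
            exact hR₁ x hx
          have h2 : 1 - R⁻¹ * q (x + u x) ≤ a := by
            have := mul_le_mul_of_nonneg_left (hmin hx : δ ≤ q (x + u x)) hRi.le
            linarith
          exact (mul_le_mul_of_nonneg_left (le_abs_self _) (pow_nonneg h1 k)).trans
              (mul_le_mul_of_nonneg_right (pow_le_pow_left₀ h1 h2 k) (abs_nonneg _))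
      _ = a ^ k * I := integral_const_mul _ _
  have hlim : Filter.Tendsto (fun k : ℕ => (a / b) ^ k * I) Filter.atTop (nhds 0) := by
    simpa using (tendsto_pow_atTop_nhds_zero_of_lt_one (div_nonneg ha0 hb0.le)
      ((div_lt_one hb0).2 hab)).mul_const I
  refine absurd (ge_of_tendsto' hlim fun k => ?_) (not_le.2 hVpos)
  rw [div_pow, div_mul_eq_mul_div, le_div_iff₀ (pow_pos hb0 k), mul_comm]
  exact hineq k

/-! ### Brouwer's theorem and countable products of intervals -/

open Metric in
/-- Approximate fixed points: replace `F` by a `C¹` map with values in the same ball, multiply it by a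
bump function, and apply `exists_add_eq_zero`. -/
lemma exists_dist_lt_of_norm_le {n : ℕ} {F : (Fin n → ℝ) → (Fin n → ℝ)} (hF : Continuous F)
    {R : ℝ} (hR : 0 < R) (hFR : ∀ x, ‖F x‖ ≤ R) {ε : ℝ} (hε : 0 < ε) :
    ∃ x ∈ closedBall (0 : Fin n → ℝ) R, dist x (F x) < ε := by
  obtain ⟨g, hg⟩ := exists_contMDiffMap_forall_mem_convex_of_local_const
    (n := 1) (modelWithCornersSelf ℝ (Fin n → ℝ))
    (t := fun x : Fin n → ℝ => ball (F x) ε ∩ closedBall 0 R)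
    (fun x => (convex_ball _ _).inter (convex_closedBall _ _))
    (fun x => ⟨F x, by
      filter_upwards [hF.continuousAt.eventually (ball_mem_nhds (F x) hε)] with y hy
      exact ⟨mem_ball_comm.1 hy, by simpa using hFR x⟩⟩)
  have hgc : ContDiff ℝ 1 g := g.contMDiff.contDiff
  let χ : ContDiffBump (0 : Fin n → ℝ) := ⟨R, R + 1, hR, by linarith⟩
  have hχ : ContDiff ℝ 1 χ := χ.contDiff
  obtain ⟨x, hx⟩ := exists_add_eq_zero (u := fun x => χ x • -g x) (hχ.smul hgc.neg)
    χ.hasCompactSupport.smul_right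
  have hx : x = χ x • g x := by
    rw [smul_neg, add_neg_eq_zero] at hx
    exact hx
  have hgR : ‖g x‖ ≤ R := by simpa using (hg x).2
  have hxR : x ∈ closedBall (0 : Fin n → ℝ) R := by
    rw [mem_closedBall_zero_iff, hx, norm_smul, Real.norm_of_nonneg χ.nonneg]
    exact (mul_le_of_le_one_left (norm_nonneg _) χ.le_one).trans hgR
  rw [χ.one_of_mem_closedBall hxR, one_smul] at hx
  refine ⟨x, hxR, ?_⟩
  nth_rewrite 1 [hx]
  exact (hg x).1

open Metric in
/-- **Brouwer's fixed point theorem** for a bounded map of `ℝⁿ`, with the sup norm. -/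
theorem brouwer {n : ℕ} {F : (Fin n → ℝ) → (Fin n → ℝ)} (hF : Continuous F)
    {R : ℝ} (hR : 0 < R) (hFR : ∀ x, ‖F x‖ ≤ R) : ∃ x, F x = x := by
  obtain ⟨x, hx, hmin⟩ := (isCompact_closedBall (0 : Fin n → ℝ) R).exists_isMinOn
    ⟨0, mem_closedBall_self hR.le⟩ (f := fun x => dist x (F x))
    (Continuous.continuousOn (by fun_prop))
  refine ⟨x, (dist_le_zero.1 (le_of_forall_pos_le_add fun ε hε => ?_)).symm⟩
  obtain ⟨y, hy, hyε⟩ := exists_dist_lt_of_norm_le hF hR hFR hε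
  have : dist x (F x) ≤ dist y (F y) := hmin hy
  linarith

/-- Fixed point property of a countable product of intervals: the limit of fixed points of the
truncations of `Φ` to the first `n` coordinates. -/
theorem exists_fixedPoint_nat {Φ : (ℕ → ℝ) → (ℕ → ℝ)} (hΦ : Continuous Φ)
    {R : ℝ} (hR : 0 < R) (hΦR : ∀ x i, |Φ x i| ≤ R) : ∃ x, Φ x = x := by
  let e : ∀ n, (Fin n → ℝ) → (ℕ → ℝ) := fun n y j => if h : j < n then y ⟨j, h⟩ else 0
  have he : ∀ n, Continuous (e n) := by
    intro n
    refine continuous_pi fun j => ?_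
    by_cases h : j < n
    · simp only [e, h, dif_pos]; fun_prop
    · simp only [e, h, dif_neg, not_false_eq_true]; fun_prop
  -- `e n` pads a vector with zeros; the truncation of `Φ` is its first `n` coordinates on such points.
  have hfix : ∀ n, ∃ y : Fin n → ℝ, (fun i : Fin n => Φ (e n y) i) = y := by
    intro n
    refine brouwer (F := fun y (i : Fin n) => Φ (e n y) i) ?_ hR fun y => ?_
    · exact continuous_pi fun i => (continuous_apply _).comp (hΦ.comp (he n))
    · exact (pi_norm_le_iff_of_nonneg hR.le).2 fun i => hΦR _ _
  choose y hy using hfix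
  have hyi : ∀ n i, i < n → Φ (e n (y n)) i = e n (y n) i := by
    intro n i hi
    simpa [e, hi] using congrFun (hy n) ⟨i, hi⟩
  have hK : IsCompact (univ.pi fun _ : ℕ => Icc (-R) R) :=
    isCompact_univ_pi fun _ => isCompact_Icc
  have hmem : ∀ n, e n (y n) ∈ univ.pi fun _ : ℕ => Icc (-R) R := by
    intro n i _
    by_cases h : i < n
    · rw [← hyi n i h]; exact abs_le.1 (hΦR _ _)
    · simp [e, h, hR.le]
  obtain ⟨x, -, φ, hφ, hlim⟩ := hK.tendsto_subseq hmem
  refine ⟨x, funext fun i => ?_⟩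
  have h1 : Filter.Tendsto (fun n => Φ (e (φ n) (y (φ n))) i) Filter.atTop (nhds (Φ x i)) :=
    (((continuous_apply i).comp hΦ).tendsto x).comp hlim
  have h2 : Filter.Tendsto (fun n => e (φ n) (y (φ n)) i) Filter.atTop (nhds (x i)) :=
    ((continuous_apply i).tendsto x).comp hlim
  refine tendsto_nhds_unique h1 (h2.congr' ?_)
  filter_upwards [Filter.eventually_gt_atTop i] with n hn
  exact (hyi _ i (hn.trans_le (hφ.id_le n))).symm

/-! ### Compact maps on the cylinder -/

universe u v in
/-- The extension property applied to closed subsets of `ℕ → ℝ`, whatever the universe in which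
`hAR` is stated. -/
theorem IsAbsoluteRetract.exists_extend_pi_nat {A : Type u} [TopologicalSpace A]
    (hAR : IsAbsoluteRetract.{u, v} A) {M : Set (ℕ → ℝ)} (hM : IsClosed M) (f : M → A)
    (hf : Continuous f) : ∃ g : (ℕ → ℝ) → A, Continuous g ∧ ∀ m : M, g m = f m := by
  -- `ℕ → ℝ` lives in `Type 0`, whereas `hAR` only speaks about metric spaces in `Type v`.
  have : TopologicalSpace.MetrizableSpace (ULift.{v} (ℕ → ℝ)) :=
    Homeomorph.ulift.isEmbedding.metrizableSpace
  let : MetricSpace (ULift.{v} (ℕ → ℝ)) := TopologicalSpace.metrizableSpaceMetric _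
  obtain ⟨g, hg, hgf⟩ := hAR.2 (ULift.{v} (ℕ → ℝ)) (ULift.down ⁻¹' M)
    (hM.preimage continuous_uliftDown) (fun m => f ⟨m.1.down, m.2⟩) (by fun_prop)
  exact ⟨g ∘ ULift.up, hg.comp continuous_uliftUp, fun m => hgf ⟨ULift.up m.1, m.2⟩⟩

universe u v in
/-- **Schauder's theorem** for a compact self-map of the cylinder `[a, b] × A`. -/
theorem IsAbsoluteRetract.exists_fixedPoint {A : Type u} [TopologicalSpace A]
    (hAR : IsAbsoluteRetract.{u, v} A) {a b : ℝ} (hab : a ≤ b) {S : ℝ × A → ℝ × A}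
    (hS : ContinuousOn S (Icc a b ×ˢ univ)) (hSab : MapsTo S (Icc a b ×ˢ univ) (Icc a b ×ˢ univ))
    {K : Set A} (hK : IsCompact K) (hSK : ∀ z ∈ Icc a b ×ˢ (univ : Set A), (S z).2 ∈ K) :
    ∃ z ∈ Icc a b ×ˢ (univ : Set A), S z = z := by
  have := hAR.1
  let : MetricSpace A := TopologicalSpace.metrizableSpaceMetric A
  have : CompactSpace K := isCompact_iff_compactSpace.1 hK
  obtain ⟨ι, hι⟩ := Metric.PiNatEmbed.exists_embedding_to_hilbert_cube (X := K)
  let j : K → ℕ → ℝ := fun x n => ι x n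
  have hjc : Continuous j := continuous_pi fun n =>
    continuous_subtype_val.comp ((continuous_apply n).comp hι.continuous)
  have hji : Function.Injective j := fun x y h =>
    hι.injective (funext fun n => Subtype.ext (congrFun h n))
  have hj : Topology.IsClosedEmbedding j := hjc.isClosedEmbedding hji
  let e : K ≃ₜ range j := hj.isEmbedding.toHomeomorph
  obtain ⟨g, hg, hgf⟩ := hAR.exists_extend_pi_nat hj.isClosed_range (fun m => (e.symm m : A))
    (continuous_subtype_val.comp e.symm.continuous)
  have hgj : ∀ x : K, g (j x) = x := fun x => by
    have := hgf ⟨j x, mem_range_self x⟩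
    rw [this]
    exact congrArg Subtype.val (e.symm_apply_apply x)
  -- A point `p` of the cube is read as the point `(p 0, g (p 1, p 2, …))` of the cylinder.
  let P : (ℕ → ℝ) → ℝ × A := fun p => (projIcc a b hab (p 0), g fun n => p (n + 1))
  have hPmem : ∀ p, P p ∈ Icc a b ×ˢ (univ : Set A) := fun p =>
    ⟨(projIcc a b hab (p 0)).2, mem_univ _⟩
  have hP : Continuous P := by
    refine Continuous.prodMk ?_ ?_
    · exact continuous_subtype_val.comp (continuous_projIcc.comp (continuous_apply 0))
    · exact hg.comp (continuous_pi fun n => continuous_apply _)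
  have hSP : Continuous fun p => S (P p) := hS.comp_continuous hP hPmem
  let Φ : (ℕ → ℝ) → ℕ → ℝ := fun p n =>
    n.casesOn (S (P p)).1 fun m => j ⟨(S (P p)).2, hSK _ (hPmem p)⟩ m
  have hΦ : Continuous Φ := by
    refine continuous_pi fun n => ?_
    cases n with
    | zero => exact hSP.fst
    | succ m => exact (continuous_apply m).comp (hjc.comp (hSP.snd.subtype_mk _))
  obtain ⟨p, hp⟩ := exists_fixedPoint_nat hΦ (R := max 1 (max |a| |b|)) (by positivity) (by
    intro p n
    cases n with
    | zero =>
      exact (abs_le_max_abs_abs (hSab (hPmem p)).1.1 (hSab (hPmem p)).1.2).trans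
        (le_max_right _ _)
    | succ m =>
      refine le_max_of_le_left ?_
      have := (ι ⟨(S (P p)).2, hSK _ (hPmem p)⟩ m).2
      exact abs_le.2 ⟨by linarith [this.1], this.2⟩)
  have hp0 : (S (P p)).1 = p 0 := congrFun hp 0
  have hp1 : j ⟨(S (P p)).2, hSK _ (hPmem p)⟩ = fun n => p (n + 1) :=
    funext fun n => congrFun hp (n + 1)
  refine ⟨P p, hPmem p, Prod.ext ?_ ?_⟩
  · have : p 0 ∈ Icc a b := hp0 ▸ (hSab (hPmem p)).1
    exact hp0.trans (by simp only [P]; rw [projIcc_of_mem hab this])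
  · change _ = g fun n => p (n + 1)
    rw [← hp1, hgj]

/-- **Kwong-type theorem on a cylinder, compressive form.** -/
theorem kwong_cylinder_compressive
    {A : Type*} [TopologicalSpace A] (hAR : IsAbsoluteRetract A)
    (a b : ℝ) (hab : a < b)
    (T : ℝ × A → ℝ × A)
    (hT_cont : ContinuousOn T (Icc a b ×ˢ (univ : Set A)))
    (hT_comp : IsCompact (closure (T '' (Icc a b ×ˢ (univ : Set A)))))
    (hCa : ∀ z ∈ Icc a b ×ˢ (univ : Set A), z.1 = a → a ≤ (T z).1)
    (hCb : ∀ z ∈ Icc a b ×ˢ (univ : Set A), z.1 = b → (T z).1 ≤ b) :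
    ∃ z ∈ Icc a b ×ˢ (univ : Set A), T z = z := by
  obtain ⟨z, hz, hfix⟩ := hAR.exists_fixedPoint hab.le
    (S := fun z => (projIcc a b hab.le (T z).1, (T z).2))
    (ContinuousOn.prodMk
      ((continuous_subtype_val.comp continuous_projIcc).comp_continuousOn
        (continuous_fst.comp_continuousOn hT_cont))
      (continuous_snd.comp_continuousOn hT_cont))
    (fun z _ => ⟨(projIcc a b hab.le (T z).1).2, mem_univ _⟩)
    (hT_comp.image continuous_snd)
    (fun z hz => ⟨T z, subset_closure (mem_image_of_mem T hz), rfl⟩)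
  have h1 : max a (min b (T z).1) = z.1 := by
    simpa [coe_projIcc] using congrArg Prod.fst hfix
  have h2 : (T z).2 = z.2 := by
    have := congrArg Prod.snd hfix
    exact this
  refine ⟨z, hz, Prod.ext ?_ h2⟩
  -- The clamp can only be active at an end of the interval, where the hypotheses exclude it.
  rcases lt_or_ge (T z).1 a with h | h
  · have hza : z.1 = a := by rw [← h1, min_eq_right (h.le.trans hab.le), max_eq_left h.le]
    exact absurd (hCa z hz hza) (not_le.2 h)
  · rcases lt_or_ge b (T z).1 with h' | h'
    · have hzb : z.1 = b := by rw [← h1, min_eq_left h'.le, max_eq_right hab.le]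
      exact absurd (hCb z hz hzb) (not_le.2 h')
    · rw [← h1, min_eq_right h', max_eq_right h]
end

section
/- Let X be a normed linear space, let R > 0, let n ≥ 1, and let (B[x_i, r_i])_{i=1}^{2n} be a collection of 2n closed balls (r_i > 0) that are pairwise disjoint and all contained in the closed ball B[0, R]. Define L = B[0, R] \ ⋃_{i=1}^{2n} B(x_i, r_i), where B(x_i, r_i) denotes the open ball. Let T : L → B[0, R] be a compact map such that T maps each sphere {x : ‖x − x_i‖ = r_i} into the closed ball B[x_i, r_i], for every i ∈ {1, …, 2n}. Then T has at least one fixed point in L. -/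
open Metric

/-!
Write `L` for the ball with the holes removed and suppose `T` has no fixed point in `L`. Compactness
of `T` gives `δ > 0` with `δ ≤ ‖z - T z‖` on `L` (`exists_pos_le_norm_sub`). Let `F` be the span of
the centres and of a finite `δ / 3`-net of `T L`; by a partition of unity there is a continuous map
`f : F → F` with `‖f z - T z‖ < δ / 3` on `L ∩ F` (`exists_approx`). Then `f` has no fixed point
in `L ∩ F`. Moreover, on the sphere of the `i`-th hole, the segment from `f` to the constant `x i`
passes through fixed-point-free maps, because `T` sends that sphere into the hole; likewise on the
outer sphere, with the constant `0` (`norm_sub_le_of_ray`).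

Urysohn functions therefore allow `f` to be modified inside each hole and outside the big ball
so that the new map `k` is constantly `x i` near `x i`, vanishes far away, and has no fixed points
other than the `x i` (`exists_zone_cutoff`, `odd_card_holes`). Each `x i` is a fixed point of local
index one and the total index is one, so the number of holes is odd, which `2 * n` is not.

Degree theory enters only modulo 2, and is replaced by a Sperner-type count
(`odd_card_fixedPoints`): for a continuous map of `ℝ^d` that vanishes outside a ball and is constant
near each of its fixed points, the number of fixed points is odd. Label a point `z` of a fine
lattice by the first coordinate in which `z - g z` is negative, or by the extra label `d` if there
is none, and count the simplices of the Freudenthal (Kuhn) triangulation carrying all `d + 1`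
labels. The parity of that number does not change when finitely many labels do (`parity`).
If `g` is constant, there is exactly one such simplex (`canon_rainbow`, `rainbow_unique`). For
general `g` every such simplex lies near a fixed point, and each fixed point accounts for exactly
one. As the labels agree outside a bounded set with those of the constant `0`, the number of fixed
points is odd.
-/

/-! ### The Freudenthal triangulation and invariance of the rainbow parity -/

namespace EvenHoles

/-- The edge directions of the Freudenthal triangulation of `ℤ^d`: the `d` unit vectors and, at
index `Fin.last d`, the vector `(-1, …, -1)`. The `d + 1` directions sum to zero. -/
def kstep (d : ℕ) (j : Fin (d + 1)) (i : Fin d) : ℤ :=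
  if j = Fin.last d then -1 else if j = i.castSucc then 1 else 0

theorem kstep_last (d : ℕ) (i : Fin d) : kstep d (Fin.last d) i = -1 := by simp [kstep]

theorem kstep_castSucc {d : ℕ} (j i : Fin d) :
    kstep d j.castSucc i = if j = i then 1 else 0 := by
  simp [kstep, (Fin.castSucc_lt_last j).ne]

theorem kstep_nonneg {d : ℕ} {j : Fin (d + 1)} (hj : j ≠ Fin.last d) (i : Fin d) :
    0 ≤ kstep d j i := by
  unfold kstep; rw [if_neg hj]; split_ifs <;> simp

theorem neg_one_ne {d : ℕ} (hd : 0 < d) : (-1 : Fin (d + 1)) ≠ 0 := by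
  obtain ⟨m, rfl⟩ := Nat.exists_eq_succ_of_ne_zero hd.ne'
  exact neg_ne_zero.2 one_ne_zero

/-- A simplex of the Freudenthal triangulation with a chosen starting vertex: its vertices in
cyclic order, consecutive ones differing by the directions `kstep`, each used once in the order `s`.
Indices are taken modulo `d + 1`, so each geometric simplex occurs `d + 1` times, once for
each starting vertex. -/
@[ext] structure KSimp (d : ℕ) where
  v : Fin (d + 1) → Fin d → ℤ
  s : Equiv.Perm (Fin (d + 1))
  step : ∀ k, v (k + 1) = v k + kstep d (s k)

namespace KSimp
variable {d : ℕ}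

theorem v_eq (σ : KSimp d) (k : Fin (d + 1)) :
    σ.v k = σ.v 0 + ∑ j ∈ Finset.univ.filter (· < k), kstep d (σ.s j) := by
  induction k using Fin.induction with
  | zero => simp
  | succ k ih =>
    have h := σ.step k.castSucc
    rw [Fin.coeSucc_eq_succ] at h
    have : Finset.univ.filter (· < k.succ) =
        insert k.castSucc (Finset.univ.filter (· < k.castSucc)) := by
      ext m
      simp only [Finset.mem_filter, Finset.mem_univ, true_and, Finset.mem_insert, Fin.lt_def,
        Fin.ext_iff, Fin.val_succ, Fin.val_castSucc]
      omega
    rw [h, ih, this, Finset.sum_insert (by simp)]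
    abel

theorem abs_v_sub_zero (σ : KSimp d) (k : Fin (d + 1)) (i : Fin d) :
    |σ.v k i - σ.v 0 i| ≤ 1 := by
  classical
  have h1 : ∀ j, kstep d j i = (if j = i.castSucc then 1 else 0) -
      (if j = Fin.last d then (1 : ℤ) else 0) := by
    intro j
    unfold kstep
    by_cases h : j = Fin.last d
    · subst h; simp [(Fin.castSucc_lt_last i).ne']
    · simp [h]
  have h2 : σ.v k i - σ.v 0 i =
      (if i.castSucc ∈ (Finset.univ.filter (· < k)).map σ.s.toEmbedding then 1 else 0) -
      (if Fin.last d ∈ (Finset.univ.filter (· < k)).map σ.s.toEmbedding then (1 : ℤ) else 0) := by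
    have h3 : ∑ j ∈ Finset.univ.filter (· < k), kstep d (σ.s j) =
        ∑ j ∈ (Finset.univ.filter (· < k)).map σ.s.toEmbedding, kstep d j := by
      rw [Finset.sum_map]; rfl
    rw [σ.v_eq k, h3, Pi.add_apply, Finset.sum_apply, Finset.sum_congr rfl (fun j _ => h1 j),
      Finset.sum_sub_distrib, Finset.sum_ite_eq', Finset.sum_ite_eq']
    ring
  rw [h2]
  split_ifs <;> simp

theorem abs_v_sub (σ : KSimp d) (k l : Fin (d + 1)) (i : Fin d) :
    |σ.v k i - σ.v l i| ≤ 2 := by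
  have h1 := abs_le.1 (σ.abs_v_sub_zero k i)
  have h2 := abs_le.1 (σ.abs_v_sub_zero l i)
  rw [abs_le]; constructor <;> linarith [h1.1, h1.2, h2.1, h2.2]

/-- The same geometric simplex, started at position `c`. -/
def rot (σ : KSimp d) (c : Fin (d + 1)) : KSimp d where
  v k := σ.v (k + c)
  s := (Equiv.addRight c).trans σ.s
  step k := by
    have := σ.step (k + c)
    rw [show k + 1 + c = k + c + 1 by abel, this]; rfl

/-- The neighbouring simplex across the facet opposite to the vertex in position `0`. -/
def pivot (σ : KSimp d) : KSimp d where
  v := Function.update σ.v 0 (σ.v (-1) + kstep d (σ.s 0))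
  s := (Equiv.swap (-1) 0).trans σ.s
  step k := by
    by_cases hd : d = 0
    · subst hd; ext i; exact i.elim0
    have hm : (-1 : Fin (d + 1)) ≠ 0 := neg_one_ne (Nat.pos_of_ne_zero hd)
    have h10 : (1 : Fin (d + 1)) ≠ 0 := by simpa using hm
    by_cases h0 : k = 0
    · subst h0
      have a := σ.step 0
      have b := σ.step (-1)
      simp only [zero_add, neg_add_cancel] at a b
      simp [Function.update_of_ne h10, a, b]
      abel
    by_cases h1 : k = -1
    · subst h1
      simp [Function.update_of_ne hm]
    have h2 : k + 1 ≠ 0 := fun h => h1 (eq_neg_of_add_eq_zero_left h)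
    simp [Function.update_of_ne h0, Function.update_of_ne h2, Equiv.swap_apply_of_ne_of_ne h1 h0,
      σ.step k]

theorem pivot_pivot (σ : KSimp d) : σ.pivot.pivot = σ := by
  by_cases hd : d = 0
  · subst hd
    ext k i
    · exact i.elim0
    · omega
  have h10 := neg_one_ne (Nat.pos_of_ne_zero hd)
  have b := σ.step (-1)
  simp only [neg_add_cancel] at b
  apply KSimp.ext
  · funext k
    by_cases h0 : k = 0
    · subst h0; simp [pivot, Function.update_of_ne h10, b]
    · simp [pivot, Function.update_of_ne h0]
  · ext k; simp [pivot]

theorem pivot_ne (hd : 0 < d) (σ : KSimp d) : σ.pivot ≠ σ := by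
  have h10 := neg_one_ne hd
  intro h
  have h1 : σ.pivot.s 0 = σ.s 0 := by rw [h]
  simp [pivot] at h1
  exact h10 (by simpa using h1)

/-- The facet opposite to position `0` carries each label other than `Fin.last d` exactly once.
Equivalently, the labelling becomes bijective once position `0` is relabelled `Fin.last d`. -/
def Door (l : (Fin d → ℤ) → Fin (d + 1)) (σ : KSimp d) : Prop :=
  Function.Bijective (Function.update (fun k => l (σ.v k)) 0 (Fin.last d))

/-- All labels occur, and the starting vertex is the one labelled `Fin.last d`. The second condition
singles out one of the `d + 1` representatives of a geometric simplex. -/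
def Rainbow (l : (Fin d → ℤ) → Fin (d + 1)) (σ : KSimp d) : Prop :=
  Function.Bijective (fun k => l (σ.v k)) ∧ l (σ.v 0) = Fin.last d

theorem rainbow_iff {l : (Fin d → ℤ) → Fin (d + 1)} {σ : KSimp d} :
    Rainbow l σ ↔ Door l σ ∧ l (σ.v 0) = Fin.last d := by
  unfold Rainbow Door
  refine and_congr_left fun h => ?_
  rw [← h, Function.update_eq_self_iff.2 rfl]

theorem door_pivot {l : (Fin d → ℤ) → Fin (d + 1)} {σ : KSimp d} (h : Door l σ) :
    Door l σ.pivot := by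
  unfold Door at *
  convert h using 1
  funext k
  by_cases h0 : k = 0
  · subst h0; simp
  · simp [Function.update_of_ne h0, pivot]

/-- A door whose starting vertex is not labelled `Fin.last d` has a second facet that is a door,
opposite to the other vertex with the repeated label. -/
theorem exists_rot {l : (Fin d → ℤ) → Fin (d + 1)} {σ : KSimp d} (h : Door l σ)
    (h' : l (σ.v 0) ≠ Fin.last d) :
    ∃ k, k ≠ 0 ∧ l (σ.v k) = l (σ.v 0) := by
  obtain ⟨k, hk⟩ := h.2 (l (σ.v 0))
  by_cases h0 : k = 0
  · subst h0; simp at hk; exact (h' hk.symm).elim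
  · exact ⟨k, h0, by simpa [Function.update_of_ne h0] using hk⟩

theorem rot_unique {l : (Fin d → ℤ) → Fin (d + 1)} {σ : KSimp d} (h : Door l σ)
    {k m : Fin (d + 1)} (hk : k ≠ 0) (hm : m ≠ 0) (e : l (σ.v k) = l (σ.v m)) : k = m := by
  apply h.1
  simpa [Function.update_of_ne hk, Function.update_of_ne hm] using e

theorem door_rot {l : (Fin d → ℤ) → Fin (d + 1)} {σ : KSimp d} (h : Door l σ)
    {k : Fin (d + 1)} (hk : k ≠ 0) (e : l (σ.v k) = l (σ.v 0)) : Door l (σ.rot k) := by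
  unfold Door at *
  have := h.comp ((Equiv.addRight k).trans (Equiv.swap 0 k)).bijective
  convert this using 1
  funext m
  by_cases h0 : m = 0
  · subst h0; simp
  by_cases h1 : m = -k
  · subst h1; simp [Function.update_of_ne h0, Function.update_of_ne hk, rot, e]
  have h2 : m + k ≠ 0 := fun h => h1 (eq_neg_of_add_eq_zero_left h)
  have h3 : m + k ≠ k := by simpa using h0
  simp [Function.update_of_ne h0, Equiv.swap_apply_of_ne_of_ne h2 h3, Function.update_of_ne h2, rot]

end KSimp

theorem even_card_of_involution {α : Type*} (s : Finset α) (g : ∀ a ∈ s, α)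
    (hne : ∀ a ha, g a ha ≠ a) (hmem : ∀ a ha, g a ha ∈ s)
    (hinv : ∀ a ha, g (g a ha) (hmem a ha) = a) : Even s.card := by
  have := Finset.sum_involution (s := s) (f := fun _ => (1 : ZMod 2)) g
    (fun _ _ => by decide) (fun a ha _ => hne a ha) hmem hinv
  rw [Finset.sum_const, nsmul_one] at this
  exact (ZMod.natCast_eq_zero_iff_even).1 this

open KSimp in
/-- Two labellings which agree outside a bounded box have numbers of rainbow simplices of the same
parity. Doors are the rainbow simplices together with those whose repeated label lets `rot` pair
them off, so for one labelling rainbow simplices and doors (near the box) are equinumerous modulo 2.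
The simplices that are doors for exactly one of the labellings are paired off by `pivot`, which
fixes the door facet. -/
theorem parity {d : ℕ} (hd : 0 < d) (l l' : (Fin d → ℤ) → Fin (d + 1)) (M : ℤ)
    (hM : ∀ z, ¬ (∀ i, |z i| ≤ M) → l z = l' z) (A B : Finset (KSimp d))
    (hA : ∀ σ, σ ∈ A ↔ Rainbow l σ) (hB : ∀ σ, σ ∈ B ↔ Rainbow l' σ) :
    Even (A.card + B.card) := by
  classical
  -- `K` consists of the simplices meeting the box; all others see the same labels either way.
  have hfin : {σ : KSimp d | ∃ k, ∀ i, |σ.v k i| ≤ M}.Finite := by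
    have h1 : (Set.Icc (fun _ _ => -(M + 2)) (fun _ _ => M + 2) :
      Set (Fin (d + 1) → Fin d → ℤ)).Finite := Set.finite_Icc _ _
    have h2 := h1.prod (Set.finite_univ (α := Equiv.Perm (Fin (d + 1))))
    refine Set.Finite.of_injOn (f := fun σ : KSimp d => (σ.v, σ.s)) ?_ ?_ h2
    · rintro σ ⟨k, hk⟩
      refine ⟨⟨fun m i => ?_, fun m i => ?_⟩, trivial⟩
      all_goals
        have h3 := abs_le.1 (hk i)
        have h4 := abs_le.1 (σ.abs_v_sub m k i)
        simp only
        linarith [h3.1, h3.2, h4.1, h4.2]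
    · rintro σ - τ - h
      simp only [Prod.mk.injEq] at h
      exact KSimp.ext h.1 h.2
  set K := hfin.toFinset with hKdef
  have hK : ∀ σ, σ ∈ K ↔ ∃ k, ∀ i, |σ.v k i| ≤ M := by simp [hKdef]
  have hrot : ∀ l : (Fin d → ℤ) → Fin (d + 1),
      Even ((K.filter fun σ => Door l σ ∧ l (σ.v 0) ≠ Fin.last d).card) := by
    intro l
    have key : ∀ σ ∈ K.filter (fun σ => Door l σ ∧ l (σ.v 0) ≠ Fin.last d),
        ∃ k, k ≠ 0 ∧ l (σ.v k) = l (σ.v 0) := fun σ hσ =>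
      exists_rot (Finset.mem_filter.1 hσ).2.1 (Finset.mem_filter.1 hσ).2.2
    choose c hc0 hc using key
    have hmem : ∀ (σ : KSimp d) hσ, σ.rot (c σ hσ) ∈
        K.filter (fun σ => Door l σ ∧ l (σ.v 0) ≠ Fin.last d) := by
      intro σ hσ
      obtain ⟨h1, h2, h3⟩ := Finset.mem_filter.1 hσ
      refine Finset.mem_filter.2 ⟨?_, door_rot h2 (hc0 σ hσ) (hc σ hσ), ?_⟩
      · obtain ⟨k, hk⟩ := (hK σ).1 h1
        exact (hK _).2 ⟨k - c σ hσ, by simpa [rot] using hk⟩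
      · simpa [rot, hc σ hσ] using h3
    refine even_card_of_involution _ (fun (σ : KSimp d) hσ => σ.rot (c σ hσ)) ?_ hmem ?_
    · intro σ hσ h
      have h1 : (σ.rot (c σ hσ)).s 0 = σ.s 0 := by rw [h]
      simp only [rot, Equiv.trans_apply, Equiv.coe_addRight, zero_add] at h1
      exact hc0 σ hσ (σ.s.injective h1)
    · intro σ hσ
      have h1 : c _ (hmem σ hσ) = - c σ hσ := by
        refine rot_unique (Finset.mem_filter.1 (hmem σ hσ)).2.1 (hc0 _ _)
          (by simpa using hc0 σ hσ) ?_
        rw [hc _ (hmem σ hσ)]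
        simp [rot, hc σ hσ]
      simp only [h1]
      apply KSimp.ext
      · funext k; simp [rot]
      · ext k; simp [rot]
  have hflip : Even (symmDiff (K.filter (Door l)) (K.filter (Door l'))).card := by
    have hx : ∀ σ, σ ∈ symmDiff (K.filter (Door l)) (K.filter (Door l')) ↔
        σ ∈ K ∧ ¬ (Door l σ ↔ Door l' σ) := by
      intro σ
      simp only [Finset.mem_symmDiff, Finset.mem_filter]
      tauto
    have hfl : ∀ l (σ : KSimp d), Door l σ.pivot ↔ Door l σ := fun l σ =>
      ⟨fun h => by simpa [pivot_pivot] using door_pivot h, door_pivot⟩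
    refine even_card_of_involution _ (fun σ _ => σ.pivot) (fun σ _ => pivot_ne hd σ) ?_
      (fun σ _ => pivot_pivot σ)
    intro σ hσ
    rw [hx] at hσ ⊢
    rw [hfl, hfl]
    refine ⟨?_, hσ.2⟩
    rw [hK]
    -- If the pivoted simplex misses the box, so does the shared facet, and then `l` and `l'` give
    -- the same door status.
    by_contra hcon
    push Not at hcon
    apply hσ.2
    unfold Door
    have : Function.update (fun k => l (σ.v k)) 0 (Fin.last d) =
        Function.update (fun k => l' (σ.v k)) 0 (Fin.last d) := by
      funext k
      by_cases h0 : k = 0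
      · subst h0; simp
      · simp only [Function.update_of_ne h0]
        apply hM
        push Not
        simpa [pivot, Function.update_of_ne h0] using hcon k
    rw [this]
  have hsplit : ∀ (l : (Fin d → ℤ) → Fin (d + 1)) (A : Finset (KSimp d)),
      (∀ σ, σ ∈ A ↔ Rainbow l σ) → (K.filter (Door l)).card =
      (A.filter (· ∈ K)).card +
        (K.filter fun σ => Door l σ ∧ l (σ.v 0) ≠ Fin.last d).card := by
    intro l A hA
    rw [← Finset.card_filter_add_card_filter_not (s := K.filter (Door l))
      (fun σ => l (σ.v 0) = Fin.last d), Finset.filter_filter, Finset.filter_filter]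
    congr 2
    ext σ
    simp only [Finset.mem_filter, hA, rainbow_iff]
    tauto
  have hAB : A.filter (· ∉ K) = B.filter (· ∉ K) := by
    ext σ
    simp only [Finset.mem_filter, hA, hB]
    refine and_congr_left fun h => ?_
    rw [hK] at h
    push Not at h
    have : (fun k => l (σ.v k)) = fun k => l' (σ.v k) := by
      funext k
      apply hM
      push Not
      exact h k
    unfold Rainbow
    rw [this, show l (σ.v 0) = l' (σ.v 0) from congrFun this 0]
  have e1 := Finset.card_filter_add_card_filter_not (s := A) (· ∈ K)
  have e2 := Finset.card_filter_add_card_filter_not (s := B) (· ∈ K)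
  rw [hAB] at e1
  have e3 := hsplit l A hA
  have e4 := hsplit l' B hB
  have e5 := Finset.card_union_add_card_inter (K.filter (Door l)) (K.filter (Door l'))
  have e6 : (symmDiff (K.filter (Door l)) (K.filter (Door l'))).card +
      ((K.filter (Door l)) ∩ (K.filter (Door l'))).card =
      ((K.filter (Door l)) ∪ (K.filter (Door l'))).card := by
    rw [← Finset.card_union_of_disjoint]
    · congr 1
      ext σ
      simp only [Finset.mem_symmDiff, Finset.mem_union, Finset.mem_inter]
      tauto
    · rw [Finset.disjoint_left]
      intro σ
      simp only [Finset.mem_symmDiff, Finset.mem_inter]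
      tauto
  have r1 := hrot l
  have r2 := hrot l'
  rw [Nat.even_iff] at *
  omega

end EvenHoles


/-! ### Labels of constant maps -/

namespace EvenHoles
open KSimp

open Classical in
/-- The least element of `S`, or `Fin.last d` if `S` is empty (the infimum over the empty set
being the top element). -/
noncomputable def lab {d : ℕ} (S : Set (Fin d)) : Fin (d + 1) :=
  (Finset.univ.filter (· ∈ S)).inf Fin.castSucc

section lab
variable {d : ℕ} {S S' : Set (Fin d)}

theorem le_lab_iff {j : Fin (d + 1)} : j ≤ lab S ↔ ∀ i ∈ S, j ≤ i.castSucc := by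
  simp [lab, Finset.le_inf_iff]

theorem lab_anti (h : S ⊆ S') : lab S' ≤ lab S :=
  le_lab_iff.2 fun i hi => le_lab_iff.1 le_rfl i (h hi)

theorem notMem_of_lt_lab {i : Fin d} (h : i.castSucc < lab S) : i ∉ S := fun hi =>
  absurd (le_lab_iff.1 le_rfl i hi) (not_le.2 h)

theorem mem_of_lab_eq {i : Fin d} (h : lab S = i.castSucc) : i ∈ S := by
  classical
  by_contra hi
  have : i.succ ≤ lab S := le_lab_iff.2 fun j hj => by
    have h1 : i.castSucc ≤ j.castSucc := h ▸ le_lab_iff.1 le_rfl j hj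
    have h2 : i ≠ j := fun e => hi (e ▸ hj)
    rw [Fin.le_def] at *
    rw [Ne, Fin.ext_iff] at h2
    simp only [Fin.val_succ, Fin.val_castSucc] at *
    omega
  rw [h, Fin.le_def] at this
  simp at this

theorem lab_eq_last_iff : lab S = Fin.last d ↔ S = ∅ := by
  rw [← Fin.last_le_iff, le_lab_iff, Set.eq_empty_iff_forall_notMem]
  refine forall_congr' fun i => ?_
  have := Fin.castSucc_lt_last i
  simp only [not_le.2 this, imp_false]

end lab

/-- The labelling of `ℤ^d` by the sign pattern of `z - q`, as produced by a map constantly equal to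
(a point rounded up to) `q`. -/
noncomputable def latLab {d : ℕ} (q z : Fin d → ℤ) : Fin (d + 1) := lab {i | z i < q i}

/-- The rainbow simplex of `latLab q`: it runs from `q` to `q - (1, …, 1)` and back to `q` by raising
the coordinates one at a time in increasing order. -/
def canon {d : ℕ} (q : Fin d → ℤ) : KSimp d where
  v k i := q i - if k - 1 ≤ i.castSucc then 1 else 0
  s := Equiv.subRight 1
  step k := by
    obtain ⟨m, rfl⟩ : ∃ m, k = m + 1 := ⟨k - 1, by simp⟩
    funext i
    simp only [add_sub_cancel_right, Equiv.subRight_apply, Pi.add_apply]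
    induction m using Fin.lastCases with
    | last =>
      rw [kstep_last, Fin.last_add_one, if_pos (Fin.zero_le _),
        if_neg (not_le.2 (Fin.castSucc_lt_last i))]
      ring
    | cast m =>
      rw [kstep_castSucc, Fin.coeSucc_eq_succ]
      simp only [Fin.le_def, Fin.val_succ, Fin.val_castSucc, Fin.ext_iff]
      split_ifs <;> omega

theorem canon_lab {d : ℕ} (q : Fin d → ℤ) (k : Fin (d + 1)) :
    latLab q ((canon q).v k) = k - 1 := by
  have : {i | (canon q).v k i < q i} = {i : Fin d | k - 1 ≤ i.castSucc} := by
    ext i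
    simp only [canon, Set.mem_ofPred_eq]
    split_ifs with h <;> simp [h]
  rw [latLab, this]
  apply le_antisymm
  · by_contra h
    rw [not_le] at h
    generalize k - 1 = j at *
    induction j using Fin.lastCases with
    | last => exact absurd h (not_lt.2 (Fin.le_last _))
    | cast j => exact notMem_of_lt_lab h (by simp)
  · exact le_lab_iff.2 fun i hi => hi

theorem neg_one_eq_last (d : ℕ) : (-1 : Fin (d + 1)) = Fin.last d :=
  (eq_neg_of_add_eq_zero_left (Fin.last_add_one d)).symm

theorem canon_rainbow {d : ℕ} (q : Fin d → ℤ) : Rainbow (latLab q) (canon q) := by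
  constructor
  · simp only [canon_lab]
    exact (Equiv.subRight (1 : Fin (d + 1))).bijective
  · rw [canon_lab, zero_sub, neg_one_eq_last]

theorem canon_bounds {d : ℕ} (q : Fin d → ℤ) (k : Fin (d + 1)) (i : Fin d) :
    q i - 1 ≤ (canon q).v k i ∧ (canon q).v k i ≤ q i := by
  simp only [canon]; split_ifs <;> omega

/-- The first direction of a rainbow simplex must be `(-1, …, -1)`, since any other would keep all
coordinates at least `q` and repeat the label `Fin.last d`. From then on the vertices increase, so
their labels do too; a bijective increasing labelling is the identity, which fixes the order of
the directions and the starting vertex. -/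
theorem rainbow_unique {d : ℕ} (hd : 0 < d) (q : Fin d → ℤ) (σ : KSimp d)
    (h : Rainbow (latLab q) σ) : σ = canon q := by
  have hinj := h.1.1
  have h10 : (1 : Fin (d + 1)) ≠ 0 := by simpa using neg_one_ne hd
  have hv0 : ∀ i, q i ≤ σ.v 0 i := by
    have := lab_eq_last_iff.1 h.2
    intro i
    by_contra hi
    have : i ∈ (∅ : Set (Fin d)) := this ▸ (not_le.1 hi)
    exact this
  have hs0 : σ.s 0 = Fin.last d := by
    by_contra hne
    apply h10
    apply hinj
    simp only
    rw [h.2, latLab, lab_eq_last_iff, Set.eq_empty_iff_forall_notMem]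
    intro i hi
    have h1 := congrFun (σ.step 0) i
    rw [zero_add, Pi.add_apply] at h1
    have h2 := kstep_nonneg hne i
    have h3 := hv0 i
    simp only [Set.mem_ofPred_eq] at hi
    omega
  have hmono : Monotone fun j : Fin (d + 1) => σ.v (j + 1) := by
    rw [Fin.monotone_iff_le_succ]
    intro j i
    have h1 := congrFun (σ.step j.succ) i
    have h2 : σ.s j.succ ≠ Fin.last d := fun e =>
      (Fin.succ_ne_zero j) (σ.s.injective (e.trans hs0.symm))
    have h3 := kstep_nonneg h2 i
    simp only [Fin.coeSucc_eq_succ]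
    rw [h1, Pi.add_apply]
    omega
  have hlab : ∀ j : Fin (d + 1), latLab q (σ.v (j + 1)) = j := by
    have hb : Function.Bijective fun j : Fin (d + 1) => latLab q (σ.v (j + 1)) :=
      h.1.comp (Equiv.addRight (1 : Fin (d + 1))).bijective
    have hm : StrictMono fun j : Fin (d + 1) => latLab q (σ.v (j + 1)) := by
      refine Monotone.strictMono_of_injective ?_ hb.1
      intro a b hab
      exact lab_anti fun i hi => lt_of_le_of_lt (hmono hab i) hi
    have := (StrictMono.range_inj hm strictMono_id).1 (by rw [hb.2.range_eq]; simp)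
    exact fun j => congrFun this j
  have hs : ∀ j : Fin d, σ.s j.succ = j.castSucc := by
    intro j
    have h1 : σ.v j.succ j < q j := by
      have := hlab j.castSucc
      rw [Fin.coeSucc_eq_succ] at this
      exact mem_of_lab_eq this
    have h2 : q j ≤ σ.v (j.succ + 1) j := by
      have := hlab j.succ
      exact not_lt.1 (notMem_of_lt_lab (S := {i | σ.v (j.succ + 1) i < q i})
        (show _ < latLab _ _ by rw [this]; exact Fin.castSucc_lt_succ))
    have h3 := congrFun (σ.step j.succ) j
    rw [Pi.add_apply] at h3
    by_contra hne
    have : kstep d (σ.s j.succ) j ≤ 0 := by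
      unfold kstep; rw [if_neg hne]; split_ifs <;> simp
    omega
  have hq : σ.v 0 = q := by
    funext j
    have h1 : σ.v j.succ j < q j := by
      have := hlab j.castSucc
      rw [Fin.coeSucc_eq_succ] at this
      exact mem_of_lab_eq this
    have h2 := hmono (Fin.zero_le j.castSucc) j
    simp only [Fin.coeSucc_eq_succ] at h2
    have h3 := congrFun (σ.step 0) j
    rw [Pi.add_apply, hs0, kstep_last] at h3
    have h4 := hv0 j
    omega
  have hs' : σ.s = (canon q).s := by
    ext k
    congr 1
    induction k using Fin.cases with
    | zero => rw [hs0]; simp [canon, neg_one_eq_last]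
    | succ j => simp [hs, canon, eq_sub_iff_add_eq, Fin.coeSucc_eq_succ]
  have hq' : (canon q).v 0 = q := by
    funext i
    simp only [canon, zero_sub, neg_one_eq_last]
    rw [if_neg (not_le.2 (Fin.castSucc_lt_last i)), sub_zero]
  apply KSimp.ext _ hs'
  funext k
  rw [σ.v_eq k, (canon q).v_eq k, hq, hq', hs']

end EvenHoles

/-! ### Parity of the number of fixed points in `ℝ^d` -/

namespace EvenHoles
open KSimp Topology Filter

theorem rainbow_congr {d : ℕ} {l l' : (Fin d → ℤ) → Fin (d + 1)} {σ : KSimp d}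
    (h : ∀ k, l (σ.v k) = l' (σ.v k)) : Rainbow l σ ↔ Rainbow l' σ := by
  simp only [Rainbow, h]

/-- A continuous self-map of `ℝ^d` that vanishes outside a ball and is constant near each of its
fixed points has an odd number of them. -/
theorem odd_card_fixedPoints {d : ℕ} (hd : 0 < d) (g : (Fin d → ℝ) → Fin d → ℝ)
    (hg : Continuous g) (ρ : ℝ) (hρ0 : 0 < ρ) (hρ : ∀ x, ρ ≤ ‖x‖ → g x = 0)
    (P : Finset (Fin d → ℝ)) (hfix : ∀ x, g x = x → x ∈ P)
    (hloc : ∀ p ∈ P, ∀ᶠ x in 𝓝 p, g x = p) : Odd P.card := by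
  classical
  obtain ⟨η, hη0, hη⟩ : ∃ η > 0, ∀ p ∈ P, ∀ x, dist x p < η → g x = p := by
    have h1 : ∀ p ∈ P, ∀ᶠ η in 𝓝[>] (0 : ℝ), ∀ x, dist x p < η → g x = p := by
      intro p hp
      obtain ⟨δ, hδ, h⟩ := Metric.eventually_nhds_iff.1 (hloc p hp)
      filter_upwards [Ioo_mem_nhdsGT hδ] with η hη x hx
      exact h (hx.trans hη.2)
    obtain ⟨η, h, h0⟩ := (((Finset.eventually_all P).2 h1).and self_mem_nhdsWithin).exists
    exact ⟨η, h0, h⟩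
  have hgP : ∀ p ∈ P, g p = p := fun p hp => hη p hp p (by simpa using hη0)
  set u : (Fin d → ℝ) → Fin d → ℝ := fun x => x - g x with hu
  have huc : Continuous u := continuous_id.sub hg
  obtain ⟨ε, hε0, hε⟩ : ∃ ε > 0, ∀ x, (∀ p ∈ P, η / 2 ≤ dist x p) → ε ≤ ‖u x‖ := by
    have hC : IsCompact (closedBall (0 : Fin d → ℝ) ρ ∩ {x | ∀ p ∈ P, η / 2 ≤ dist x p}) := by
      refine (isCompact_closedBall _ _).inter_right ?_
      have : {x | ∀ p ∈ P, η / 2 ≤ dist x p} = ⋂ p ∈ P, {x : Fin d → ℝ | η / 2 ≤ dist x p} := by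
        ext; simp
      rw [this]
      exact isClosed_biInter fun p _ => isClosed_le continuous_const
        (continuous_id.dist continuous_const)
    obtain ⟨a, ha0, ha⟩ := hC.exists_forall_le' (f := fun x => ‖u x‖) (a := 0)
      huc.norm.continuousOn (fun x hx => by
        refine norm_pos_iff.2 fun h0 => ?_
        have hxP := hfix x (sub_eq_zero.1 h0).symm
        have := hx.2 x hxP
        rw [dist_self] at this
        linarith)
    refine ⟨min a ρ, lt_min ha0 hρ0, fun x hx => ?_⟩
    by_cases hxρ : ‖x‖ ≤ ρ
    · exact (min_le_left _ _).trans (ha x ⟨by simpa using hxρ, hx⟩)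
    · simp only [hu, hρ x (not_le.1 hxρ).le, sub_zero]
      exact (min_le_right _ _).trans (not_le.1 hxρ).le
  have huu : UniformContinuous u := by
    refine uniformContinuous_id.sub ?_
    refine HasCompactSupport.uniformContinuous_of_continuous ?_ hg
    refine HasCompactSupport.intro (isCompact_closedBall (0 : Fin d → ℝ) ρ) fun x hx => hρ x ?_
    simp at hx
    exact hx.le
  -- The mesh `h`: a simplex has diameter at most `2 * h`, over which `u` varies by less than `ε`,
  -- and a simplex with a vertex within `η / 2` of `p` stays where `g` is constantly `p`.
  obtain ⟨h, hh0, hhη, hh⟩ : ∃ h > 0, 2 * h < η / 2 ∧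
      ∀ x y, dist x y ≤ 2 * h → dist (u x) (u y) < ε := by
    obtain ⟨δ, hδ0, hδ⟩ := Metric.uniformContinuous_iff.1 huu ε hε0
    refine ⟨min (δ / 4) (η / 8), by positivity, ?_, fun x y hxy => hδ (hxy.trans_lt ?_)⟩
    · linarith [min_le_right (δ / 4) (η / 8)]
    · linarith [min_le_left (δ / 4) (η / 8)]
  set pt : (Fin d → ℤ) → Fin d → ℝ := fun z i => h * z i with hpt
  set l : (Fin d → ℤ) → Fin (d + 1) := fun z => lab {i | u (pt z) i < 0} with hl
  set q : (Fin d → ℝ) → Fin d → ℤ := fun p i => ⌈p i / h⌉ with hq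
  have hptd : ∀ (σ : KSimp d) k m, dist (pt (σ.v k)) (pt (σ.v m)) ≤ 2 * h := by
    intro σ k m
    refine (dist_pi_le_iff (by positivity)).2 fun i => ?_
    have h1 : (|σ.v k i - σ.v m i| : ℝ) ≤ 2 := by exact_mod_cast σ.abs_v_sub k m i
    simp only [hpt]
    rw [Real.dist_eq, ← mul_sub, abs_mul, abs_of_pos hh0]
    nlinarith
  have hlp : ∀ p ∈ P, ∀ z, dist (pt z) p < η → l z = latLab (q p) z := by
    intro p hp z hz
    simp only [hl, latLab]
    congr 1
    ext i
    have hz' : u (pt z) = pt z - p := by rw [← hη p hp _ hz]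
    rw [hz']
    simp only [hpt, hq, Set.mem_ofPred_eq, Pi.sub_apply, Int.lt_ceil,
      lt_div_iff₀ hh0, sub_neg, mul_comm]
  have hcanon : ∀ p k, dist (pt ((canon (q p)).v k)) p ≤ h := by
    intro p k
    refine (dist_pi_le_iff hh0.le).2 fun i => ?_
    obtain ⟨h1, h2⟩ := canon_bounds (q p) k i
    have h1' : ((q p i : ℝ) - 1) ≤ (canon (q p)).v k i := by exact_mod_cast h1
    have h2' : ((canon (q p)).v k i : ℝ) ≤ q p i := by exact_mod_cast h2
    have h3 : p i / h ≤ q p i := Int.le_ceil _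
    have h4 : (q p i : ℝ) < p i / h + 1 := Int.ceil_lt_add_one _
    have h5 : |((canon (q p)).v k i : ℝ) - p i / h| ≤ 1 := by
      rw [abs_le]; constructor <;> linarith
    have h6 : pt ((canon (q p)).v k) i - p i = h * ((canon (q p)).v k i - p i / h) := by
      simp only [hpt]; field_simp
    rw [Real.dist_eq, h6, abs_mul, abs_of_pos hh0]
    nlinarith
  have hA : ∀ σ, σ ∈ P.image (fun p => canon (q p)) ↔ Rainbow l σ := by
    intro σ
    rw [Finset.mem_image]
    constructor
    · rintro ⟨p, hp, rfl⟩
      refine (rainbow_congr fun k => hlp p hp _ ?_).2 (canon_rainbow _)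
      linarith [hcanon p k]
    · intro hσ
      -- At the starting vertex all coordinates of `u` are nonnegative, while each is negative at some
      -- other vertex of the simplex; hence all of them are small.
      have hsmall : ‖u (pt (σ.v 0))‖ < ε := by
        refine (pi_norm_lt_iff hε0).2 fun i => ?_
        obtain ⟨k, hk⟩ := hσ.1.2 i.castSucc
        have hk' : u (pt (σ.v k)) i < 0 := mem_of_lab_eq hk
        have h0' : 0 ≤ u (pt (σ.v 0)) i := not_lt.1 fun hi => by
          have := lab_eq_last_iff.1 hσ.2
          exact (this ▸ hi : i ∈ (∅ : Set (Fin d)))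
        have h1 := (dist_le_pi_dist (u (pt (σ.v 0))) (u (pt (σ.v k))) i).trans_lt
          (hh _ _ (hptd σ 0 k))
        rw [Real.dist_eq, abs_lt] at h1
        rw [Real.norm_eq_abs, abs_lt]
        constructor <;> linarith [h1.2]
      obtain ⟨p, hp, hpd⟩ : ∃ p ∈ P, dist (pt (σ.v 0)) p < η / 2 := by
        by_contra hcon
        push Not at hcon
        exact absurd (hε _ hcon) (not_le.2 hsmall)
      refine ⟨p, hp, (rainbow_unique hd _ _ ?_).symm⟩
      refine (rainbow_congr fun k => hlp p hp _ ?_).1 hσ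
      linarith [dist_triangle (pt (σ.v k)) (pt (σ.v 0)) p, hptd σ k 0]
  have hcard : (P.image (fun p => canon (q p))).card = P.card := by
    refine Finset.card_image_of_injOn fun p hp p' hp' he => ?_
    have he : canon (q p) = canon (q p') := he
    have h1 := hcanon p 0
    have h2 := hcanon p' 0
    rw [he] at h1
    have h3 := hη p hp p' (by
      linarith [dist_triangle_left p' p (pt ((canon (q p')).v 0))])
    rw [hgP p' hp'] at h3
    exact h3.symm
  -- The comparison labelling is that of the constant map `0`.
  have hB : ∀ σ, σ ∈ ({canon 0} : Finset (KSimp d)) ↔ Rainbow (latLab 0) σ := by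
    intro σ
    rw [Finset.mem_singleton]
    exact ⟨fun h => h ▸ canon_rainbow 0, rainbow_unique hd 0 σ⟩
  have := parity hd l (latLab 0) ⌈ρ / h⌉ ?_ _ _ hA hB
  · rw [hcard, Finset.card_singleton, Nat.even_add_one] at this
    exact Nat.not_even_iff_odd.1 this
  · intro z hz
    push Not at hz
    obtain ⟨i, hi⟩ := hz
    have h1 : ρ / h < |(z i : ℝ)| := (Int.le_ceil _).trans_lt (by exact_mod_cast hi)
    have h2 : ρ ≤ ‖pt z‖ := by
      refine le_trans ?_ (norm_le_pi_norm (pt z) i)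
      simp only [hpt]
      rw [Real.norm_eq_abs, abs_mul, abs_of_pos hh0]
      rw [div_lt_iff₀ hh0] at h1
      linarith
    simp only [hl, latLab]
    congr 1
    ext j
    have hz' : u (pt z) = pt z := by rw [hu]; simp only [hρ _ h2, sub_zero]
    rw [hz']
    simp only [Set.mem_ofPred_eq, hpt, Pi.zero_apply]
    rw [← neg_pos, ← mul_neg, mul_pos_iff_of_pos_left hh0, neg_pos]
    exact_mod_cast Iff.rfl

end EvenHoles

/-! ### Filling in the holes -/

namespace EvenHoles
open Topology Filter

/-- If no stage of the straight-line homotopy from `c` to `f` has a fixed point on the boundary of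
`U`, there is a cutoff supported in `U` which equals one on `W` and at every point of `U` fixed by
some stage. Hence `f + a • (c - f)` has no fixed point in `U` except possibly `c`. The set of points
fixed by some stage is closed, being a projection along the compact interval. -/
theorem exists_zone_cutoff {F : Type*} [NormedAddCommGroup F] [NormedSpace ℝ F] {f : F → F}
    (hf : Continuous f) {U W : Set F} (c : F) (hU : IsOpen U) (hW : IsClosed W) (hWU : W ⊆ U)
    (hfr : ∀ x ∈ closure U, x ∉ U → ∀ s ∈ Set.Icc (0 : ℝ) 1, x ≠ c + s • (f x - c)) :
    ∃ a : C(F, ℝ), (∀ x, a x ∈ Set.Icc (0 : ℝ) 1) ∧ (∀ x ∉ U, a x = 0) ∧ (∀ x ∈ W, a x = 1) ∧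
      ∀ x ∈ U, ∀ s ∈ Set.Icc (0 : ℝ) 1, x = c + s • (f x - c) → a x = 1 := by
  set Z : Set F := Prod.snd '' {p : Set.Icc (0 : ℝ) 1 × F |
    p.2 ∈ closure U ∧ p.2 = c + (p.1 : ℝ) • (f p.2 - c)} with hZ
  have hZc : IsClosed Z := by
    refine isClosedMap_snd_of_compactSpace _ ?_
    refine (isClosed_closure.preimage continuous_snd).inter
      (isClosed_eq continuous_snd ?_)
    fun_prop
  obtain ⟨a, h0, h1, ha⟩ := exists_continuous_zero_one_of_isClosed (s := Uᶜ) (t := Z ∪ W)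
    hU.isClosed_compl (hZc.union hW) (by
      rw [Set.disjoint_left]
      rintro x hx (⟨p, ⟨hp1, hp2⟩, rfl⟩ | hx')
      · exact hfr _ hp1 hx p.1 p.1.2 hp2
      · exact hx (hWU hx'))
  refine ⟨a, ha, fun x hx => h0 hx, fun x hx => h1 (Or.inr hx), fun x hx s hs he => ?_⟩
  exact h1 (Or.inl ⟨(⟨s, hs⟩, x), ⟨subset_closure hx, he⟩, rfl⟩)

/-- A fixed-point-free map on a finite-dimensional ball with holes, homotopic along rays without
fixed points to the centre on the boundary of each hole and to `0` on the outer sphere, forces the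
number of holes to be odd. -/
theorem odd_card_holes {F : Type*} [NormedAddCommGroup F] [NormedSpace ℝ F]
    [FiniteDimensional ℝ F] [Nontrivial F] {ι : Type*} [Fintype ι] {f : F → F}
    (hf : Continuous f) {R : ℝ} (hR : 0 < R) (c : ι → F) (r : ι → ℝ) (hr : ∀ i, 0 < r i)
    (hdisj : ∀ i j, i ≠ j → Disjoint (ball (c i) (r i)) (ball (c j) (r j)))
    (hsub : ∀ i, ball (c i) (r i) ⊆ ball 0 R)
    (hin : ∀ i, ∀ x, ‖x - c i‖ = r i → ∀ s ∈ Set.Icc (0 : ℝ) 1, x ≠ c i + s • (f x - c i))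
    (hout : ∀ x, ‖x‖ = R → ∀ s ∈ Set.Icc (0 : ℝ) 1, x ≠ s • f x)
    (hL : ∀ x, ‖x‖ ≤ R → (∀ i, x ∉ ball (c i) (r i)) → f x ≠ x) : Odd (Fintype.card ι) := by
  classical
  have hz : ∀ i, ∃ a : C(F, ℝ), (∀ x, a x ∈ Set.Icc (0 : ℝ) 1) ∧
      (∀ x ∉ ball (c i) (r i), a x = 0) ∧ (∀ x ∈ closedBall (c i) (r i / 2), a x = 1) ∧
      ∀ x ∈ ball (c i) (r i), ∀ s ∈ Set.Icc (0 : ℝ) 1, x = c i + s • (f x - c i) → a x = 1 := by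
    intro i
    refine exists_zone_cutoff hf (c i) isOpen_ball isClosed_closedBall
      (closedBall_subset_ball (by linarith [hr i])) fun x hx hx' => hin i x ?_
    have h1 := closure_ball_subset_closedBall hx
    rw [mem_closedBall, dist_eq_norm] at h1
    rw [mem_ball, dist_eq_norm, not_lt] at hx'
    exact le_antisymm h1 hx'
  choose a ha ha0 haW ha1 using hz
  obtain ⟨b, hb, hb0, hbW, hb1⟩ := exists_zone_cutoff hf (U := {x | R < ‖x‖})
    (W := {x | 2 * R ≤ ‖x‖}) 0 (isOpen_lt continuous_const continuous_norm)
    (isClosed_le continuous_const continuous_norm)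
    (fun x (hx : 2 * R ≤ ‖x‖) => show R < ‖x‖ by linarith) (by
      intro x hx hx'
      have h1 : R ≤ ‖x‖ := closure_minimal (t := {x : F | R ≤ ‖x‖})
        (fun y (hy : R < ‖y‖) => hy.le) (isClosed_le continuous_const continuous_norm) hx
      simpa using hout x (le_antisymm (not_lt.1 hx') h1))
  -- At each point at most one of the cutoffs is nonzero, the balls and the exterior being disjoint.
  set k : F → F := fun x => f x + ∑ i, a i x • (c i - f x) + b x • (0 - f x) with hk
  have hkc : Continuous k := by fun_prop
  have hkin : ∀ i, ∀ x ∈ ball (c i) (r i), k x = c i + (1 - a i x) • (f x - c i) := by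
    intro i x hx
    have hbx : b x = 0 := hb0 x (not_lt.2 (by simpa using (mem_ball.1 (hsub i hx)).le))
    simp only [hk, hbx]
    rw [Finset.sum_eq_single i (fun j _ hj => by
      rw [ha0 j x fun hx' => Set.disjoint_left.1 (hdisj j i hj) hx' hx, zero_smul])
      (fun h => absurd (Finset.mem_univ _) h)]
    module
  have hkout : ∀ x, (∀ i, x ∉ ball (c i) (r i)) → k x = f x + b x • (0 - f x) := by
    intro x hx
    simp only [hk]
    rw [Finset.sum_eq_zero fun i _ => by rw [ha0 i x (hx i), zero_smul], add_zero]
  have hnotin : ∀ x : F, R < ‖x‖ → ∀ i, x ∉ ball (c i) (r i) := fun x hx i hxi => by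
    have := mem_ball.1 (hsub i hxi)
    rw [dist_zero_right] at this
    linarith
  have hkfix : ∀ x, k x = x → ∃ i, c i = x := by
    intro x hx
    by_cases hxi : ∃ i, x ∈ ball (c i) (r i)
    · obtain ⟨i, hi⟩ := hxi
      have h1 := hkin i x hi
      rw [hx] at h1
      have h2 := ha1 i x hi (1 - a i x) ⟨by linarith [(ha i x).2], by linarith [(ha i x).1]⟩ h1
      rw [h2, sub_self, zero_smul, add_zero] at h1
      exact ⟨i, h1.symm⟩
    · push Not at hxi
      have h1 := hkout x hxi
      rw [hx] at h1
      exfalso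
      by_cases hxR : R < ‖x‖
      · have h2 := hb1 x hxR (1 - b x) ⟨by linarith [(hb x).2], by linarith [(hb x).1]⟩ (by
          rw [zero_add, sub_zero, sub_smul, one_smul]
          nth_rewrite 1 [h1]
          module)
        rw [h2, one_smul, zero_sub, add_neg_cancel] at h1
        rw [h1, norm_zero] at hxR
        linarith
      · rw [hb0 x hxR, zero_smul, add_zero] at h1
        exact hL x (not_lt.1 hxR) hxi h1.symm
  have hkloc : ∀ i, ∀ᶠ x in 𝓝 (c i), k x = c i := by
    intro i
    filter_upwards [closedBall_mem_nhds (c i) (half_pos (hr i))] with x hx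
    rw [hkin i x (closedBall_subset_ball (by linarith [hr i]) hx), haW i x hx]
    simp
  have hk0 : ∀ x, 2 * R ≤ ‖x‖ → k x = 0 := by
    intro x hx
    rw [hkout x (hnotin x (by linarith)), hbW x hx]
    simp
  have hcinj : Function.Injective c := by
    intro i j hij
    by_contra hne
    exact Set.disjoint_left.1 (hdisj i j hne) (mem_ball_self (hr i))
      (hij ▸ mem_ball_self (hr j))
  let φ : F ≃L[ℝ] (Fin (Module.finrank ℝ F) → ℝ) :=
    ContinuousLinearEquiv.ofFinrankEq (by simp)
  have := odd_card_fixedPoints (Module.finrank_pos (R := ℝ) (M := F))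
    (fun y => φ (k (φ.symm y))) (by fun_prop)
    (‖(φ : F →L[ℝ] (Fin (Module.finrank ℝ F) → ℝ))‖ * (2 * R) + 1) (by positivity)
    (fun y hy => by
      have h1 : 2 * R ≤ ‖φ.symm y‖ := by
        by_contra hcon
        have h2 := (φ : F →L[ℝ] (Fin (Module.finrank ℝ F) → ℝ)).le_opNorm (φ.symm y)
        simp only [ContinuousLinearEquiv.coe_coe, ContinuousLinearEquiv.apply_symm_apply] at h2
        have h3 := mul_le_mul_of_nonneg_left (not_le.1 hcon).le
          (norm_nonneg (φ : F →L[ℝ] (Fin (Module.finrank ℝ F) → ℝ)))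
        linarith
      rw [hk0 _ h1, map_zero])
    (Finset.univ.image fun i => φ (c i))
    (fun y hy => by
      obtain ⟨i, hi⟩ := hkfix (φ.symm y) (φ.injective (by simpa using hy))
      exact Finset.mem_image.2 ⟨i, Finset.mem_univ _, by rw [hi]; simp⟩)
    (by
      intro p hp
      obtain ⟨i, -, rfl⟩ := Finset.mem_image.1 hp
      have h1 : Tendsto φ.symm (𝓝 (φ (c i))) (𝓝 (c i)) := by
        have := φ.symm.continuous.tendsto (φ (c i))
        rwa [φ.symm_apply_apply] at this
      filter_upwards [h1.eventually (hkloc i)] with y hy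
      rw [hy])
  have hcard := Finset.card_image_of_injective (Finset.univ : Finset ι)
    (show Function.Injective (fun i => φ (c i)) from φ.injective.comp hcinj)
  rwa [hcard, Finset.card_univ] at this

/-! ### Finite-dimensional approximation -/

/-- If a point `x` of the sphere of centre `c` lies on the segment from `c` to a point `y` which is
`ε`-close to some `z` in the ball, then `x` is `2 * ε`-close to `z`: `y` overshoots the sphere
by at most `ε`. -/
theorem norm_sub_le_of_ray {X : Type*} [NormedAddCommGroup X] [NormedSpace ℝ X] {x y z c : X}
    {r ε s : ℝ} (hx : ‖x - c‖ = r) (hz : ‖z - c‖ ≤ r) (hy : ‖y - z‖ ≤ ε)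
    (hs : s ∈ Set.Icc (0 : ℝ) 1) (h : x = c + s • (y - c)) : ‖x - z‖ ≤ 2 * ε := by
  have h1 : ‖y - c‖ ≤ r + ε := by
    have := norm_add_le (y - z) (z - c)
    rw [sub_add_sub_cancel] at this
    linarith
  have h2 : s * ‖y - c‖ = r := by
    rw [← hx, h, add_sub_cancel_left, norm_smul, Real.norm_of_nonneg hs.1]
  have h3 : ‖x - y‖ = (1 - s) * ‖y - c‖ := by
    have : x - y = -((1 - s) • (y - c)) := by rw [h]; module
    rw [this, norm_neg, norm_smul, Real.norm_of_nonneg (by linarith [hs.2])]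
  have h4 := norm_add_le (x - y) (y - z)
  rw [sub_add_sub_cancel] at h4
  nlinarith

/-- A compact map without fixed points on a closed set moves points by a definite amount. -/
theorem exists_pos_le_norm_sub {X : Type*} [NormedAddCommGroup X] {L : Set X} (hL : IsClosed L)
    {T : X → X} (hT : ContinuousOn T L) (hK : IsCompact (closure (T '' L)))
    (hfix : ∀ z ∈ L, T z ≠ z) : ∃ δ > 0, ∀ z ∈ L, δ ≤ ‖z - T z‖ := by
  by_contra! hcon
  choose z hz hz' using fun n : ℕ => hcon (1 / ((n : ℝ) + 1)) (by positivity)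
  obtain ⟨y, -, φ, hφ, hy⟩ := hK.tendsto_subseq
    (fun n => subset_closure (Set.mem_image_of_mem T (hz n)))
  have h0 : Tendsto (fun n => z n - T (z n)) atTop (𝓝 0) :=
    squeeze_zero_norm (fun n => (hz' n).le) tendsto_one_div_add_atTop_nhds_zero_nat
  have h1 : Tendsto (fun n => z (φ n)) atTop (𝓝 y) := by
    simpa using (h0.comp hφ.tendsto_atTop).add hy
  have hyL : y ∈ L := hL.mem_of_tendsto h1 (Eventually.of_forall fun n => hz _)
  have h2 : Tendsto (fun n => T (z (φ n))) atTop (𝓝 (T y)) :=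
    (hT y hyL).tendsto.comp (tendsto_nhdsWithin_iff.2 ⟨h1, Eventually.of_forall fun n => hz _⟩)
  exact hfix y hyL (tendsto_nhds_unique h2 hy)

/-- Schauder approximation: if `F` comes `ε`-close to every value of `T`, there is a continuous map
`F → F` which is `ε`-close to `T` on `L ∩ F`. -/
theorem exists_approx {X : Type*} [NormedAddCommGroup X] [NormedSpace ℝ X] {L : Set X}
    (hL : IsClosed L) {T : X → X} (hT : ContinuousOn T L) (F : Submodule ℝ X) {ε : ℝ}
    (hF : ∀ z ∈ L, ∃ w ∈ F, ‖w - T z‖ < ε) :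
    ∃ f : C(F, F), ∀ z : F, (z : X) ∈ L → ‖(f z : X) - T z‖ < ε := by
  refine exists_continuous_forall_mem_convex_of_local_const
    (t := fun z : F => {w : F | (z : X) ∈ L → ‖(w : X) - T z‖ < ε}) ?_ ?_
  · intro z
    by_cases hz : (z : X) ∈ L
    · have := (convex_ball (T z) ε).linear_preimage F.subtype
      have e : {w : F | (z : X) ∈ L → ‖(w : X) - T z‖ < ε} = F.subtype ⁻¹' ball (T z) ε := by
        ext w
        rw [Set.mem_preimage, mem_ball, dist_eq_norm]
        exact ⟨fun h => h hz, fun h _ => h⟩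
      rwa [e]
    · simp [hz, convex_univ]
  · intro z
    by_cases hz : (z : X) ∈ L
    · obtain ⟨w, hw, hwz⟩ := hF z hz
      refine ⟨⟨w, hw⟩, ?_⟩
      have h1 : ∀ᶠ y in 𝓝[L] (z : X), ‖w - T y‖ < ε :=
        ((continuousWithinAt_const.sub (hT z hz)).norm).eventually_lt_const hwz
      exact (continuous_subtype_val.tendsto z).eventually (eventually_nhdsWithin_iff.1 h1)
    · refine ⟨0, ?_⟩
      filter_upwards [(hL.isOpen_compl.preimage continuous_subtype_val).mem_nhds hz] with y hy hy'
      exact absurd hy' hy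

end EvenHoles

/-- **Kwong-type theorem on a ball with an even number of holes.** -/
theorem fixed_point_ball_with_even_holes
    {X : Type*} [NormedAddCommGroup X] [NormedSpace ℝ X]
    (R : ℝ) (hR : 0 < R) (n : ℕ) (hn : 1 ≤ n)
    (x : Fin (2 * n) → X) (r : Fin (2 * n) → ℝ) (hr : ∀ i, 0 < r i)
    (hdisj : ∀ i j, i ≠ j → Disjoint (closedBall (x i) (r i)) (closedBall (x j) (r j)))
    (hsub : ∀ i, closedBall (x i) (r i) ⊆ closedBall (0 : X) R)
    (T : X → X)
    (hT_cont : ContinuousOn T (closedBall (0 : X) R \ ⋃ i, ball (x i) (r i)))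
    (hT_maps : T '' (closedBall (0 : X) R \ ⋃ i, ball (x i) (r i)) ⊆ closedBall (0 : X) R)
    (hT_comp : IsCompact (closure (T '' (closedBall (0 : X) R \ ⋃ i, ball (x i) (r i)))))
    (hspheres : ∀ i, ∀ z ∈ sphere (x i) (r i), T z ∈ closedBall (x i) (r i)) :
    ∃ z ∈ closedBall (0 : X) R \ ⋃ i, ball (x i) (r i), T z = z := by
  by_contra! hfix
  set L := closedBall (0 : X) R \ ⋃ i, ball (x i) (r i) with hLdef
  have hLmem : ∀ z, z ∈ L ↔ ‖z‖ ≤ R ∧ ∀ i, z ∉ ball (x i) (r i) := by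
    intro z; simp [hLdef]
  have hLc : IsClosed L := by
    rw [hLdef, Set.sdiff_eq]
    exact isClosed_closedBall.inter (isOpen_iUnion fun i => isOpen_ball).isClosed_compl
  obtain ⟨δ, hδ0, hδ⟩ := EvenHoles.exists_pos_le_norm_sub hLc hT_cont hT_comp hfix
  have hε : 0 < δ / 3 := by positivity
  obtain ⟨t, -, htf, ht⟩ := hT_comp.finite_cover_balls hε
  set F := Submodule.span ℝ (t ∪ Set.range x) with hF
  have : FiniteDimensional ℝ F :=
    FiniteDimensional.span_of_finite ℝ (htf.union (Set.finite_range x))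
  let c : Fin (2 * n) → F := fun i => ⟨x i, Submodule.subset_span (Or.inr ⟨i, rfl⟩)⟩
  have hsub' : ∀ i, ball (x i) (r i) ⊆ ball 0 R := by
    intro i
    rw [← interior_closedBall (0 : X) hR.ne']
    exact interior_maximal (ball_subset_closedBall.trans (hsub i)) isOpen_ball
  have : Nontrivial F := by
    refine ⟨c ⟨0, by omega⟩, c ⟨1, by omega⟩, fun h => ?_⟩
    have h1 : x ⟨0, by omega⟩ = x ⟨1, by omega⟩ := congrArg Subtype.val h
    refine Set.disjoint_left.1 (hdisj ⟨0, by omega⟩ ⟨1, by omega⟩ (by simp))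
      (mem_closedBall_self (hr _).le) ?_
    rw [h1]
    exact mem_closedBall_self (hr _).le
  obtain ⟨f, hf⟩ := EvenHoles.exists_approx hLc hT_cont F (ε := δ / 3) (by
    intro z hz
    obtain ⟨w, hw, hwz⟩ := Set.mem_iUnion₂.1 (ht (subset_closure (Set.mem_image_of_mem T hz)))
    refine ⟨w, Submodule.subset_span (Or.inl hw), ?_⟩
    rwa [mem_ball, dist_comm, dist_eq_norm] at hwz)
  have hodd := EvenHoles.odd_card_holes (F := F) f.continuous hR c r hr
    (fun i j hij => by
      rw [Set.disjoint_left]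
      intro z hz hz'
      have h1 : (z : X) ∈ ball (x i) (r i) := hz
      have h2 : (z : X) ∈ ball (x j) (r j) := hz'
      exact Set.disjoint_left.1 (hdisj i j hij) (ball_subset_closedBall h1)
        (ball_subset_closedBall h2))
    (fun i z hz => hsub' i hz)
    (fun i z hz s hs he => by
      have hz1 : ‖(z : X) - x i‖ = r i := hz
      have hzs : (z : X) ∈ sphere (x i) (r i) := by rwa [mem_sphere, dist_eq_norm]
      have hzL : (z : X) ∈ L := by
        refine (hLmem _).2 ⟨by simpa using hsub i (sphere_subset_closedBall hzs), fun j hj => ?_⟩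
        by_cases hij : i = j
        · subst hij
          exact (mem_ball.1 hj).ne (mem_sphere.1 hzs)
        · exact Set.disjoint_left.1 (hdisj i j hij) (sphere_subset_closedBall hzs)
            (ball_subset_closedBall hj)
      have h1 := EvenHoles.norm_sub_le_of_ray hz1
        (by simpa [dist_eq_norm] using hspheres i z hzs) (hf z hzL).le hs (congrArg Subtype.val he)
      linarith [hδ z hzL])
    (fun z hz s hs he => by
      have hz1 : ‖(z : X) - 0‖ = R := by rw [sub_zero]; exact hz
      have hz2 : ‖(z : X)‖ = R := hz
      have hzL : (z : X) ∈ L := by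
        refine (hLmem _).2 ⟨hz2.le, fun j hj => ?_⟩
        have := mem_ball.1 (hsub' j hj)
        rw [dist_zero_right] at this
        exact this.ne hz2
      have h1 := EvenHoles.norm_sub_le_of_ray hz1
        (by simpa using hT_maps (Set.mem_image_of_mem T hzL)) (hf z hzL).le hs
        (by simpa using congrArg Subtype.val he)
      linarith [hδ z hzL])
    (fun z hz hzi he => by
      have hzL : (z : X) ∈ L := (hLmem _).2 ⟨hz, fun i hi => hzi i hi⟩
      have h1 := hf z hzL
      rw [he] at h1
      linarith [hδ z hzL])
  rw [Fintype.card_fin] at hodd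
  exact Nat.not_odd_iff_even.2 (even_two_mul n) hodd
end

section
/- Let X be an infinite-dimensional normed linear space. Fix real numbers r₁, r₂ with 0 < r₁ < r₂, and define the annulus A = {x ∈ X : r₁ ≤ ‖x‖ ≤ r₂} and the spheres A_d = {x ∈ X : ‖x‖ = d} for d ≥ 0. Let T : A → X be a compact map satisfying the expansive conditions: ‖T(x)‖ ≤ ‖x‖ for all x ∈ A_{r₁}, and ‖T(x)‖ ≥ ‖x‖ for all x ∈ A_{r₂}. Then T has at least one fixed point in A. -/
/-!
Reflecting the radius in the annulus turns the expansive boundary conditions into compressive ones.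
With `α x = (r₁ + r₂ - ‖x‖) / ‖x‖`, the map `x ↦ α x • x` is an involution of the annulus exchanging
the two boundary spheres, and `S x = (α x)⁻¹ • T (α x • x)` satisfies `‖S x‖ ≥ r₁` on the inner
sphere and `‖S x‖ ≤ r₂` on the outer one. A fixed point `x` of `S` gives the fixed point `α x • x`
of `T`.

In the compressive case (`annulus_compressive`), `S` extends over the inner ball to a compact map
whose values there have norm at least `r₁` (`inner_extension`). This is where infinite dimension
enters: the compact set `S (inner sphere)` avoids some ray `{-s • e}` (`exists_dir`), because the
unit ball is not compact, so that the image can be contracted to `e` without meeting `0` and then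
pushed radially out of the open ball of radius `r₁`. Composing with the radial retraction onto the
ball of radius `r₂`, Schauder's theorem yields a fixed point; the norm conditions force it into the
annulus and make both modifications invisible at that point.

Schauder's theorem is reduced to Brouwer's theorem on a standard simplex through partitions of unity
subordinate to finite nets. Brouwer's theorem is obtained from Scarf's combinatorial lemma
(`scarf`), a purely order-theoretic form of Sperner's lemma proved by a parity count: it requires no
triangulation, only one linear order per coordinate on the points of a fine grid in the simplex.
-/

/-! ### Scarf's lemma -/

/-- A finite set `R` is dominant, for a family of orders given by ranking functions `h i`, if no
point `y` exceeds the `h i`-minimum of `R` for every `i` simultaneously. The dominant sets are the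
simplices of an abstract complex. -/
def Dominant {I V : Type*} (h : I → V → ℕ) (R : Finset V) : Prop :=
  ∀ y, ∃ i, ∀ x ∈ R, h i y ≤ h i x

theorem Dominant.mono {I V : Type*} {h : I → V → ℕ} {R S : Finset V}
    (hS : Dominant h S) (hRS : R ⊆ S) : Dominant h R := fun y =>
  (hS y).imp fun _ hi x hx => hi x (hRS hx)

/-- `y` lies strictly above the point `μ j` in every order `j` other than `a`. In use, `μ j` is the
`h j`-minimum of a fixed dominant set. -/
def Above {I V : Type*} (h : I → V → ℕ) (μ : I → V) (a : I) (y : V) : Prop :=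
  ∀ j, j ≠ a → h j (μ j) < h j y

/-- `x` is a greatest element, in the order `a`, of the points satisfying `Above h μ a`. -/
def IsTopAbove {I V : Type*} (h : I → V → ℕ) (μ : I → V) (a : I) (x : V) : Prop :=
  Above h μ a x ∧ ∀ y, Above h μ a y → h a y ≤ h a x

/-- In a dominant set with one point fewer than there are orders, every point is the minimum for
some order, so exactly one pair of orders `a ≠ b` shares its minimum. -/
theorem door_minima {I V : Type*} [Fintype I] [DecidableEq I] [DecidableEq V]
    {h : I → V → ℕ} (hinj : ∀ i, Function.Injective (h i)) {τ : Finset V}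
    (hne : τ.Nonempty) (hcard : τ.card + 1 = Fintype.card I) (hdom : Dominant h τ) :
    ∃ (μ : I → V) (a b : I), a ≠ b ∧ μ a = μ b ∧ (∀ i, μ i ∈ τ) ∧
      (∀ i, ∀ z ∈ τ, h i (μ i) ≤ h i z) ∧ (∀ z ∈ τ, ∃ i, μ i = z) ∧
      (∀ i j, i ≠ j → μ i = μ j → (i = a ∧ j = b) ∨ (i = b ∧ j = a)) := by
  choose μ hμ hmin using fun i => Finset.exists_min_image τ (h i) hne
  have hsurj : ∀ z ∈ τ, ∃ i, μ i = z := fun z hz => by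
    obtain ⟨i, hi⟩ := hdom z
    exact ⟨i, hinj i (le_antisymm (hmin i z hz) (hi _ (hμ i)))⟩
  obtain ⟨a, -, b, -, hab, hμab⟩ := Finset.exists_ne_map_eq_of_card_lt_of_maps_to
    (s := Finset.univ) (t := τ) (by rw [Finset.card_univ]; omega)
    (f := μ) (fun i _ => hμ i)
  have key : ∀ a b, a ≠ b → μ a = μ b → Set.InjOn μ (Finset.univ.erase a : Finset I) := by
    intro a b hab hμab
    have himg : (Finset.univ.erase a).image μ = τ := by
      ext z
      simp only [Finset.mem_image, Finset.mem_erase, Finset.mem_univ, and_true]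
      constructor
      · rintro ⟨i, -, rfl⟩; exact hμ i
      · intro hz
        obtain ⟨i, rfl⟩ := hsurj z hz
        by_cases hi : i = a
        · exact ⟨b, hab.symm, by rw [hi, hμab]⟩
        · exact ⟨i, hi, rfl⟩
    apply Finset.card_image_iff.mp
    rw [himg, Finset.card_erase_of_mem (Finset.mem_univ a), Finset.card_univ]; omega
  have ka := key a b hab hμab
  have kb := key b a hab.symm hμab.symm
  refine ⟨μ, a, b, hab, hμab, hμ, hmin, hsurj, fun i j hij he => ?_⟩
  have h1 : i = a ∨ j = a := by
    by_contra! hc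
    exact hij (ka (by simp [hc.1]) (by simp [hc.2]) he)
  have h2 : i = b ∨ j = b := by
    by_contra! hc
    exact hij (kb (by simp [hc.1]) (by simp [hc.2]) he)
  grind

/-- A point completing `τ` to a larger dominant set becomes the minimum for one of the two orders
`a`, `b` sharing their minimum in `τ`, since every point of `τ` has to remain the minimum for some
order; dominance then makes it the greatest candidate. -/
theorem isTop_of_insert {I V : Type*} [DecidableEq V]
    {h : I → V → ℕ} (hinj : ∀ i, Function.Injective (h i)) {τ : Finset V} {μ : I → V} {a b : I}
    (hμ : ∀ i, μ i ∈ τ) (hmin : ∀ i, ∀ z ∈ τ, h i (μ i) ≤ h i z)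
    (huniq : ∀ i j, i ≠ j → μ i = μ j → (i = a ∧ j = b) ∨ (i = b ∧ j = a))
    {x : V} (hx : x ∉ τ) (hdom : Dominant h (insert x τ)) :
    IsTopAbove h μ a x ∨ IsTopAbove h μ b x := by
  have hlt : ∀ i, (∀ z ∈ insert x τ, h i x ≤ h i z) → ∀ z ∈ τ, h i x < h i z := by
    intro i hi z hz
    refine lt_of_le_of_ne (hi z (Finset.mem_insert_of_mem hz)) fun he => hx ?_
    rw [hinj i he]; exact hz
  -- an index at which `μ i` is still minimal after adding `x`
  have hwit : ∀ i, ∃ k, μ k = μ i ∧ h k (μ i) ≤ h k x := by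
    intro i
    obtain ⟨k, hk⟩ := hdom (μ i)
    exact ⟨k, hinj k (le_antisymm (hmin k _ (hμ i))
      (hk _ (Finset.mem_insert_of_mem (hμ k)))), hk x (Finset.mem_insert_self _ _)⟩
  obtain ⟨i, hi⟩ := hdom x
  have hiab : i = a ∨ i = b := by
    obtain ⟨k, hk, hkx⟩ := hwit i
    have hki : k ≠ i := by
      rintro rfl
      exact absurd (hlt k hi _ (hμ k)) (not_lt.mpr hkx)
    rcases huniq k i hki hk with h1 | h1
    · exact Or.inr h1.2
    · exact Or.inl h1.2
  have habove : Above h μ i x := by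
    intro j hji
    by_contra hc
    have hjx : h j x < h j (μ j) :=
      lt_of_le_of_ne (not_lt.mp hc) fun he => hx (by rw [hinj j he]; exact hμ j)
    obtain ⟨k, hk, hkx⟩ := hwit j
    have hkj : k ≠ j := by
      rintro rfl
      exact absurd hjx (not_lt.mpr hkx)
    have hki : k ≠ i := by
      rintro rfl
      exact absurd (hlt k hi _ (hμ j)) (not_lt.mpr hkx)
    grind
  have htop : IsTopAbove h μ i x := by
    refine ⟨habove, fun y hy => ?_⟩
    obtain ⟨k, hk⟩ := hdom y
    have hki : k = i := by
      by_contra hne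
      exact absurd (hy k hne) (not_lt.mpr (hk _ (Finset.mem_insert_of_mem (hμ k))))
    subst hki
    exact hk x (Finset.mem_insert_self _ _)
  rcases hiab with rfl | rfl
  · exact Or.inl htop
  · exact Or.inr htop

/-- Converse of `isTop_of_insert`: a greatest candidate for `a` completes `τ` to a dominant set. -/
theorem insert_of_isTop {I V : Type*} [DecidableEq V]
    {h : I → V → ℕ} {τ : Finset V} {μ : I → V} {a b : I}
    (hab : b ≠ a) (hμab : μ a = μ b)
    (hμ : ∀ i, μ i ∈ τ) (hmin : ∀ i, ∀ z ∈ τ, h i (μ i) ≤ h i z)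
    (hsurj : ∀ z ∈ τ, ∃ i, μ i = z) (hdom : Dominant h τ)
    {x : V} (hx : IsTopAbove h μ a x) :
    x ∉ τ ∧ Dominant h (insert x τ) := by
  refine ⟨fun hxτ => ?_, fun y => ?_⟩
  · obtain ⟨j, rfl⟩ := hsurj x hxτ
    by_cases hj : j = a
    · subst hj
      have := hx.1 b hab
      rw [hμab] at this
      exact lt_irrefl _ this
    · exact lt_irrefl _ (hx.1 j hj)
  · by_cases hy : Above h μ a y
    · obtain ⟨k, hk⟩ := hdom x
      have hka : k = a := by
        by_contra hne
        exact absurd (hx.1 k hne) (not_lt.mpr (hk _ (hμ k)))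
      subst hka
      refine ⟨k, fun z hz => ?_⟩
      rcases Finset.mem_insert.mp hz with rfl | hz
      · exact hx.2 y hy
      · exact (hx.2 y hy).trans (hk z hz)
    · simp only [Above, not_forall, not_lt] at hy
      obtain ⟨j, hja, hj⟩ := hy
      refine ⟨j, fun z hz => ?_⟩
      rcases Finset.mem_insert.mp hz with rfl | hz
      · exact hj.trans (hx.1 j hja).le
      · exact hj.trans (hmin j z hz)

theorem exists_isTop {I V : Type*} [Finite V] {h : I → V → ℕ} {μ : I → V} {a : I} {y : V}
    (hy : Above h μ a y) : ∃ x, IsTopAbove h μ a x := by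
  obtain ⟨x, hx, hmax⟩ := Set.exists_max_image {y | Above h μ a y} (h a) (Set.toFinite _) ⟨y, hy⟩
  exact ⟨x, hx, hmax⟩

theorem IsTopAbove.unique {I V : Type*} {h : I → V → ℕ} (hinj : ∀ i, Function.Injective (h i))
    {μ : I → V} {a : I} {x y : V}
    (hx : IsTopAbove h μ a x) (hy : IsTopAbove h μ a y) : x = y :=
  hinj a (le_antisymm (hy.2 x hx.1) (hx.2 y hy.1))

open Classical in
/-- If `R` misses some colour, then the number of facets of `R` carrying exactly the colours other
than `i₀` is even: it is zero, or two points of `R` have the same colour and removing either gives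
such a facet. -/
theorem even_room {I V : Type*} [Fintype I] {c : V → I} (i₀ : I) {R : Finset V}
    (hcard : R.card = Fintype.card I) (hR : R.image c ≠ Finset.univ) :
    Even (R.filter fun x => (R.erase x).image c = Finset.univ.erase i₀).card := by
  rcases Finset.eq_empty_or_nonempty
    (R.filter fun x => (R.erase x).image c = Finset.univ.erase i₀) with he | ⟨x, hx⟩
  · rw [he]; simp
  have hinj : ∀ y ∈ R, (R.erase y).image c = Finset.univ.erase i₀ →
      Set.InjOn c (R.erase y : Finset V) := by
    intro y hy hyc
    apply Finset.card_image_iff.mp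
    rw [hyc, Finset.card_erase_of_mem hy, Finset.card_erase_of_mem (Finset.mem_univ _), hcard,
      Finset.card_univ]
  obtain ⟨hxR, hxc⟩ := Finset.mem_filter.mp hx
  have hcx : c x ∈ (R.erase x).image c := by
    rw [hxc, Finset.mem_erase]
    refine ⟨fun he => hR ?_, Finset.mem_univ _⟩
    rw [← Finset.insert_erase hxR, Finset.image_insert, hxc, he,
      Finset.insert_erase (Finset.mem_univ _)]
  obtain ⟨x', hx', hcx'⟩ := Finset.mem_image.mp hcx
  obtain ⟨hne, hx'R⟩ := Finset.mem_erase.mp hx'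
  have : (R.filter fun x => (R.erase x).image c = Finset.univ.erase i₀) = {x, x'} := by
    ext y
    simp only [Finset.mem_filter, Finset.mem_insert, Finset.mem_singleton]
    constructor
    · rintro ⟨hy, hyc⟩
      by_contra! hc
      exact hne (hinj y hy hyc (by simp [hc.2.symm, hx'R]) (by simp [hc.1.symm, hxR]) hcx')
    · rintro (rfl | rfl)
      · exact ⟨hxR, hxc⟩
      · refine ⟨hx'R, ?_⟩
        rw [← hxc]
        ext i
        simp only [Finset.mem_image, Finset.mem_erase]
        constructor
        · rintro ⟨z, ⟨hz, hzR⟩, rfl⟩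
          by_cases hzx : z = x
          · exact ⟨y, ⟨hne, hx'R⟩, by rw [hzx, hcx']⟩
          · exact ⟨z, ⟨hzx, hzR⟩, rfl⟩
        · rintro ⟨z, ⟨hz, hzR⟩, rfl⟩
          by_cases hzx : z = y
          · exact ⟨x, ⟨hne.symm, hxR⟩, by rw [hzx, hcx']⟩
          · exact ⟨z, ⟨hzx, hzR⟩, rfl⟩
  rw [this, Finset.card_pair hne.symm]
  exact even_two

open Classical in
/-- A dominant set of size `|I| - 1` with a point that is not a slack point has exactly two
one-point dominant extensions. For each of the two orders sharing a minimum, the corresponding slack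
point is a candidate. -/
theorem card_rooms_of_mem {I V : Type*} [Fintype I] [Fintype V]
    {h : I → V → ℕ} (hinj : ∀ i, Function.Injective (h i)) {s : I → V}
    (hmax : ∀ i j, j ≠ i → ∀ v, v ∉ Set.range s → h j v < h j (s i))
    {τ : Finset V} (hcard : τ.card + 1 = Fintype.card I) (hdom : Dominant h τ)
    {t : V} (ht : t ∈ τ) (hts : t ∉ Set.range s) :
    (Finset.univ.filter fun x => x ∉ τ ∧ Dominant h (insert x τ)).card = 2 := by
  obtain ⟨μ, a, b, hab, hμab, hμ, hmin, hsurj, huniq⟩ := door_minima hinj ⟨t, ht⟩ hcard hdom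
  have habove : ∀ a, Above h μ a (s a) := fun a j hj => (hmin j t ht).trans_lt (hmax a j hj t hts)
  obtain ⟨x, hx⟩ := exists_isTop (habove a)
  obtain ⟨y, hy⟩ := exists_isTop (habove b)
  have hxy : x ≠ y := by
    rintro rfl
    obtain ⟨k, hk⟩ := hdom x
    by_cases hka : k = a
    · exact absurd (hy.1 k (by rw [hka]; exact hab)) (not_lt.mpr (hk _ (hμ k)))
    · exact absurd (hx.1 k hka) (not_lt.mpr (hk _ (hμ k)))
  have : (Finset.univ.filter fun x => x ∉ τ ∧ Dominant h (insert x τ)) = {x, y} := by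
    ext z
    simp only [Finset.mem_filter, Finset.mem_univ, true_and, Finset.mem_insert,
      Finset.mem_singleton]
    constructor
    · rintro ⟨hz, hzd⟩
      rcases isTop_of_insert hinj hμ hmin huniq hz hzd with h1 | h1
      · exact Or.inl (h1.unique hinj hx)
      · exact Or.inr (h1.unique hinj hy)
    · rintro (rfl | rfl)
      · exact insert_of_isTop hab.symm hμab hμ hmin hsurj hdom hx
      · exact insert_of_isTop hab hμab.symm hμ hmin hsurj hdom hy
  rw [this, Finset.card_pair hxy]

open Classical in
/-- The boundary case: the set of all slack points except that of `i₀` has exactly one one-point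
dominant extension, because for the order paired with `i₀` there is no candidate. -/
theorem card_rooms_slack {I V : Type*} [Fintype I] [Nontrivial I] [Fintype V]
    {h : I → V → ℕ} (hinj : ∀ i, Function.Injective (h i)) {s : I → V}
    (hs : Function.Injective s)
    (hlow : ∀ i v, h i (s i) ≤ h i v)
    (hmax : ∀ i j, j ≠ i → ∀ v, v ∉ Set.range s → h j v < h j (s i))
    {t : V} (hts : t ∉ Set.range s) (i₀ : I)
    (hdom : Dominant h ((Finset.univ.erase i₀).image s)) :
    (Finset.univ.filter fun x => x ∉ (Finset.univ.erase i₀).image s ∧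
      Dominant h (insert x ((Finset.univ.erase i₀).image s))).card = 1 := by
  set τ := (Finset.univ.erase i₀).image s with hτ
  have hcard : τ.card + 1 = Fintype.card I := by
    rw [hτ, Finset.card_image_of_injective _ hs, Finset.card_erase_of_mem (Finset.mem_univ _),
      Finset.card_univ]
    have := Fintype.card_pos (α := I)
    omega
  have hsτ : ∀ j, j ≠ i₀ → s j ∈ τ := fun j hj => by simp [hτ, hs.eq_iff, hj]
  obtain ⟨j₀, hj₀⟩ := exists_ne i₀
  obtain ⟨μ, a, b, hab, hμab, hμ, hmin, hsurj, huniq⟩ :=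
    door_minima hinj ⟨_, hsτ j₀ hj₀⟩ hcard hdom
  have hμs : ∀ j, j ≠ i₀ → μ j = s j := fun j hj =>
    hinj j (le_antisymm (hmin j _ (hsτ j hj)) (hlow j _))
  -- the repeated minimum involves the missing index `i₀`
  wlog ha : a = i₀ generalizing a b
  · have hb : b = i₀ := by
      by_contra hb
      rw [hμs a ha, hμs b hb] at hμab
      exact hab (hs hμab)
    exact this b a hab.symm hμab.symm (fun i j hij he => (huniq i j hij he).symm) hb
  subst ha
  have hμa : μ a = s b := by rw [hμab, hμs b hab.symm]
  obtain ⟨x, hx⟩ := exists_isTop (h := h) (μ := μ) (a := a) (y := t) (by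
    intro j hj
    rw [hμs j hj]
    exact lt_of_le_of_ne (hlow j t) fun he => hts ⟨j, hinj j he⟩)
  have hempty : ∀ y, ¬ Above h μ b y := by
    intro y hy
    have h1 := hy a hab
    rw [hμa] at h1
    by_cases hyr : y ∈ Set.range s
    · obtain ⟨j, rfl⟩ := hyr
      by_cases hja : j = a
      · subst hja
        exact absurd h1 (not_lt.mpr (hlow j _))
      by_cases hjb : j = b
      · subst hjb
        exact lt_irrefl _ h1
      · have h2 := hy j hjb
        rw [hμs j hja] at h2
        exact lt_irrefl _ h2
    · exact lt_asymm h1 (hmax b a hab y hyr)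
  rw [Finset.card_eq_one]
  refine ⟨x, ?_⟩
  ext z
  simp only [Finset.mem_filter, Finset.mem_univ, true_and, Finset.mem_singleton]
  constructor
  · rintro ⟨hz, hzd⟩
    rcases isTop_of_insert hinj hμ hmin huniq hz hzd with h1 | h1
    · exact h1.unique hinj hx
    · exact absurd h1.1 (hempty z)
  · rintro rfl
    exact insert_of_isTop hab.symm hμab hμ hmin hsurj hdom hx

open Classical in
/-- **Scarf's lemma.** Let `V` carry linear orders indexed by `I` and slack points `s i`, where `s i`
is least in the order `i` and above all non-slack points in the other orders. For every colouring of
`V` by `I` with `c (s i) = i` there is a dominant set of size `|I|` using all colours. Incident pairs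
of a dominant set of size `|I|` and a facet coloured by `I \ {i₀}` are counted in two ways, modulo
two. -/
theorem scarf {I V : Type*} [Fintype I] [Nontrivial I] [Fintype V]
    {h : I → V → ℕ} (hinj : ∀ i, Function.Injective (h i)) {s : I → V}
    (hlow : ∀ i v, h i (s i) ≤ h i v)
    (hmax : ∀ i j, j ≠ i → ∀ v, v ∉ Set.range s → h j v < h j (s i))
    {t : V} (hts : t ∉ Set.range s) {c : V → I} (hc : ∀ i, c (s i) = i) :
    ∃ R : Finset V, Dominant h R ∧ R.card = Fintype.card I ∧ R.image c = Finset.univ := by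
  by_contra! hno
  have hs : Function.Injective s := fun i j hij => by rw [← hc i, hij, hc j]
  obtain ⟨i₀⟩ : Nonempty I := inferInstance
  set rooms : Finset (Finset V) :=
    Finset.univ.filter fun R => Dominant h R ∧ R.card = Fintype.card I with hrooms
  set doors : Finset (Finset V) :=
    Finset.univ.filter fun τ => Dominant h τ ∧ τ.card + 1 = Fintype.card I ∧
      τ.image c = Finset.univ.erase i₀ with hdoors
  have hI := Fintype.card_pos (α := I)
  have hcount : ∑ R ∈ rooms,
        (R.filter fun x => (R.erase x).image c = Finset.univ.erase i₀).card =
      ∑ τ ∈ doors, (Finset.univ.filter fun x => x ∉ τ ∧ Dominant h (insert x τ)).card := by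
    rw [← Finset.card_sigma, ← Finset.card_sigma]
    refine Finset.card_bij' (fun p _ => ⟨p.1.erase p.2, p.2⟩) (fun p _ => ⟨insert p.2 p.1, p.2⟩)
      ?_ ?_ ?_ ?_
    · rintro ⟨R, x⟩ hp
      simp only [Finset.mem_sigma, hrooms, hdoors, Finset.mem_filter, Finset.mem_univ,
        true_and] at hp ⊢
      obtain ⟨⟨hR, hRc⟩, hx, hxc⟩ := hp
      refine ⟨⟨hR.mono (Finset.erase_subset _ _), ?_, hxc⟩, Finset.notMem_erase _ _, ?_⟩
      · rw [Finset.card_erase_of_mem hx]; omega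
      · rwa [Finset.insert_erase hx]
    · rintro ⟨τ, x⟩ hp
      simp only [Finset.mem_sigma, hrooms, hdoors, Finset.mem_filter, Finset.mem_univ,
        true_and] at hp ⊢
      obtain ⟨⟨hτ, hτc, hτi⟩, hx, hxd⟩ := hp
      refine ⟨⟨hxd, by rw [Finset.card_insert_of_notMem hx, hτc]⟩, Finset.mem_insert_self _ _, ?_⟩
      rwa [Finset.erase_insert hx]
    · rintro ⟨R, x⟩ hp
      simp only [Finset.mem_sigma, Finset.mem_filter] at hp
      simp [Finset.insert_erase hp.2.1]
    · rintro ⟨τ, x⟩ hp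
      simp only [Finset.mem_sigma, Finset.mem_filter] at hp
      simp [Finset.erase_insert hp.2.2.1]
  have heven : Even (∑ R ∈ rooms,
      (R.filter fun x => (R.erase x).image c = Finset.univ.erase i₀).card) := by
    refine Finset.even_sum _ fun R hR => ?_
    simp only [hrooms, Finset.mem_filter, Finset.mem_univ, true_and] at hR
    exact even_room i₀ hR.2 (hno R hR.1 hR.2)
  have hdom₀ : Dominant h ((Finset.univ.erase i₀).image s) := by
    intro y
    by_cases hy : y ∈ Set.range s
    · obtain ⟨j, rfl⟩ := hy
      exact ⟨j, fun x _ => hlow j x⟩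
    · refine ⟨i₀, fun x hx => ?_⟩
      obtain ⟨j, hj, rfl⟩ := Finset.mem_image.mp hx
      exact (hmax j i₀ (Finset.ne_of_mem_erase hj).symm y hy).le
  have hmem₀ : (Finset.univ.erase i₀).image s ∈ doors := by
    simp only [hdoors, Finset.mem_filter, Finset.mem_univ, true_and]
    refine ⟨hdom₀, ?_, ?_⟩
    · rw [Finset.card_image_of_injective _ hs, Finset.card_erase_of_mem (Finset.mem_univ _),
        Finset.card_univ]
      omega
    · rw [Finset.image_image]
      have : c ∘ s = id := funext hc
      rw [this, Finset.image_id]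
  rw [hcount, ← Finset.add_sum_erase _ _ hmem₀,
    card_rooms_slack hinj hs hlow hmax hts i₀ hdom₀] at heven
  have heven' : Even (∑ τ ∈ doors.erase ((Finset.univ.erase i₀).image s),
      (Finset.univ.filter fun x => x ∉ τ ∧ Dominant h (insert x τ)).card) := by
    refine Finset.even_sum _ fun τ hτ => ?_
    obtain ⟨hne, hτ⟩ := Finset.mem_erase.mp hτ
    simp only [hdoors, Finset.mem_filter, Finset.mem_univ, true_and] at hτ
    obtain ⟨t', ht', ht's⟩ : ∃ t' ∈ τ, t' ∉ Set.range s := by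
      by_contra! hall
      refine hne ?_
      rw [← hτ.2.2, Finset.image_image]
      have : τ.image (s ∘ c) = τ.image id := Finset.image_congr fun z hz => by
        obtain ⟨j, rfl⟩ := hall z hz
        simp [hc]
      rw [this, Finset.image_id]
    rw [card_rooms_of_mem hinj hmax hτ.2.1 hτ.1 ht' ht's]
    exact even_two
  rw [Nat.add_comm] at heven
  exact (Nat.even_add_one.mp heven) heven'

/-! ### Brouwer's theorem on a simplex -/

/-- Scarf's lemma on the points of `ℕ^I` with coordinate sum `N`, for the coordinate orders: for any
colouring there is a grid point `x` such that, for every `i`, either `x i` is at most `|I|` or a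
point of colour `i` lies within `|I|` of `x`. -/
theorem grid_sperner {I : Type*} [Fintype I] [Nontrivial I] (N : ℕ) (c : (I → ℕ) → I) :
    ∃ x : I → ℕ, ∑ i, x i = N ∧ ∀ i, x i ≤ Fintype.card I ∨
      ∃ x' : I → ℕ, ∑ j, x' j = N ∧ c x' = i ∧
        ∀ j, x j ≤ x' j + Fintype.card I ∧ x' j ≤ x j + Fintype.card I := by
  classical
  let T := {x : I → ℕ // x ∈ Finset.piAntidiag Finset.univ N}
  have hT : ∀ x : T, ∑ i, x.1 i = N := fun x => (Finset.mem_piAntidiag.mp x.2).1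
  let mk : (x : I → ℕ) → ∑ i, x i = N → T := fun x hx =>
    ⟨x, Finset.mem_piAntidiag.mpr ⟨hx, fun i _ => Finset.mem_univ i⟩⟩
  let _ : Fintype T := inferInstanceAs (Fintype {x : I → ℕ // x ∈ Finset.piAntidiag Finset.univ N})
  -- ties between equal coordinates are broken by an arbitrary enumeration `e`
  let e := Fintype.equivFin (T ⊕ I)
  let M := Fintype.card (T ⊕ I)
  -- coordinates are shifted by one to leave rank `0` for the slack point of the order
  let k : I → T ⊕ I → ℕ := fun i v =>
    Sum.elim (fun x => x.1 i + 1) (fun j => if j = i then 0 else N + 2) v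
  let h : I → T ⊕ I → ℕ := fun i v => k i v * M + e v
  have hlt : ∀ i v w, k i v < k i w → h i v < h i w := by
    intro i v w hk
    have h1 : (k i v + 1) * M ≤ k i w * M := Nat.mul_le_mul_right M hk
    have h2 : (e v : ℕ) < M := (e v).2
    have h3 : (k i v + 1) * M = k i v * M + M := by ring
    show k i v * M + e v < k i w * M + e w
    omega
  have hle : ∀ i v w, h i v ≤ h i w → k i v ≤ k i w := fun i v w hv => by
    by_contra! hc
    exact absurd (hlt i w v hc) (not_lt.mpr hv)
  have hinj : ∀ i, Function.Injective (h i) := by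
    intro i v w hvw
    have hk : k i v = k i w := le_antisymm (hle i v w hvw.le) (hle i w v hvw.ge)
    have h1 : k i v * M + (e v : ℕ) = k i w * M + e w := hvw
    rw [hk] at h1
    exact e.injective (Fin.ext (by omega))
  have hxN : ∀ (x : T) i, x.1 i ≤ N := fun x i => by
    exact (Finset.single_le_sum (f := x.1) (fun j _ => Nat.zero_le _) (Finset.mem_univ i)).trans
      (hT x).le
  have hnr : ∀ x : T, (Sum.inl x : T ⊕ I) ∉ Set.range (Sum.inr : I → T ⊕ I) := by
    rintro x ⟨j, hj⟩
    cases hj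
  obtain ⟨i₀⟩ : Nonempty I := inferInstance
  let t : T := mk (Pi.single i₀ N) (by simp)
  obtain ⟨R, hR, hRcard, hRc⟩ := scarf (h := h) hinj (s := Sum.inr)
    (by
      intro i v
      rcases eq_or_ne v (Sum.inr i) with rfl | hv
      · exact le_rfl
      refine (hlt _ _ _ ?_).le
      rcases v with x | j
      · simp [k]
      · have : j ≠ i := fun hj => hv (by rw [hj])
        simp [k, this])
    (by
      intro i j hji v hv
      rcases v with x | l
      · refine hlt _ _ _ ?_
        have := hxN x j
        simp only [k, Sum.elim_inl, Sum.elim_inr, if_neg hji.symm]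
        omega
      · exact absurd ⟨l, rfl⟩ hv)
    (hnr t) (c := Sum.elim (fun x => c x.1) id) (fun i => rfl)
  -- `R` cannot consist of slack points only
  have hslack : ∀ (y : T) i, (∀ v ∈ R, h i (Sum.inl y) ≤ h i v) → Sum.inr i ∉ R := by
    intro y i hy hi
    have := hle _ _ _ (hy _ hi)
    simp [k] at this
  obtain ⟨x, hx⟩ : ∃ x : T, Sum.inl x ∈ R := by
    by_contra! hno
    have hsub : R ⊆ Finset.univ.image (Sum.inr : I → T ⊕ I) := by
      intro v hv
      rcases v with x | j
      · exact absurd hv (hno x)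
      · simp
    have hall := Finset.eq_of_subset_of_card_le hsub (by
      rw [Finset.card_image_of_injective _ Sum.inr_injective, hRcard, Finset.card_univ])
    obtain ⟨i, hi⟩ := hR (Sum.inl t)
    exact hslack t i hi (by rw [hall]; simp)
  have hmin : ∀ i, ∃ m : ℕ, (∀ x : T, Sum.inl x ∈ R → m ≤ x.1 i) ∧
      (Sum.inr i ∈ R → m = 0) ∧ (Sum.inr i ∉ R → ∃ x : T, Sum.inl x ∈ R ∧ m = x.1 i) := by
    intro i
    by_cases hi : Sum.inr i ∈ R
    · exact ⟨0, fun _ _ => Nat.zero_le _, fun _ => rfl, fun h => absurd hi h⟩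
    · obtain ⟨x', hx', hmin⟩ := Set.exists_min_image {x : T | Sum.inl x ∈ R} (fun x => x.1 i)
        (Set.toFinite _) ⟨x, hx⟩
      exact ⟨x'.1 i, hmin, fun h => absurd h hi, fun _ => ⟨x', hx', rfl⟩⟩
  choose m hm hm0 hmR using hmin
  -- otherwise some grid point would exceed every minimum, against dominance
  have hsum : N < ∑ i, m i + Fintype.card I := by
    by_contra! hc
    obtain ⟨i₁, hi₁⟩ : ∃ i₁, Sum.inr i₁ ∉ R := (hR (Sum.inl t)).imp fun i hi => hslack t i hi
    let y : I → ℕ := fun i => m i + 1 + if i = i₁ then N - (∑ i, m i + Fintype.card I) else 0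
    have hy : ∑ i, y i = N := by
      simp only [y, Finset.sum_add_distrib, Finset.sum_const, Finset.card_univ,
        Finset.sum_ite_eq', Finset.mem_univ, if_true, smul_eq_mul, mul_one]
      omega
    obtain ⟨i, hi⟩ := hR (Sum.inl (mk y hy))
    obtain ⟨x', hx', hmx⟩ := hmR i (hslack _ i hi)
    have := hle _ _ _ (hi _ hx')
    simp only [k, mk, y, Sum.elim_inl] at this
    omega
  have hup : ∀ x : T, Sum.inl x ∈ R → ∀ i, x.1 i ≤ m i + Fintype.card I := by
    intro x hx i
    have h1 := hT x
    rw [← Finset.add_sum_erase _ _ (Finset.mem_univ i)] at h1 hsum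
    have h2 : ∑ j ∈ Finset.univ.erase i, m j ≤ ∑ j ∈ Finset.univ.erase i, x.1 j :=
      Finset.sum_le_sum fun j _ => hm j x hx
    omega
  refine ⟨x.1, hT x, fun i => ?_⟩
  by_cases hi : Sum.inr i ∈ R
  · left
    have := hup x hx i
    rwa [hm0 i hi, zero_add] at this
  · right
    have : i ∈ R.image (Sum.elim (fun x : T => c x.1) id) := by rw [hRc]; simp
    obtain ⟨v, hv, hvi⟩ := Finset.mem_image.mp this
    rcases v with x' | j
    · refine ⟨x'.1, hT x', hvi, fun j => ?_⟩
      have h1 := hup x hx j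
      have h2 := hup x' hv j
      have h3 := hm j x hx
      have h4 := hm j x' hv
      omega
    · simp only [Sum.elim_inr, id] at hvi
      exact absurd (hvi ▸ hv) hi

/-- For maps of a simplex to itself, `x i ≤ f x i + ε` for all `i` makes `x` an approximate fixed
point, because the coordinates of `x` and of `f x` have the same sum. -/
theorem brouwer_approx {I : Type*} [Fintype I] [Nontrivial I] {f : (I → ℝ) → I → ℝ}
    (hf : ContinuousOn f (stdSimplex ℝ I)) (hmaps : Set.MapsTo f (stdSimplex ℝ I) (stdSimplex ℝ I))
    {ε : ℝ} (hε : 0 < ε) : ∃ x ∈ stdSimplex ℝ I, ∀ i, x i - ε ≤ f x i := by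
  obtain ⟨δ, hδ, hunif⟩ := Metric.uniformContinuousOn_iff.mp
    ((isCompact_stdSimplex ℝ I).uniformContinuousOn_of_continuous hf) (ε / 2) (half_pos hε)
  set n : ℝ := (Fintype.card I : ℝ) with hn
  have hn0 : 0 < n := by rw [hn]; exact_mod_cast Fintype.card_pos (α := I)
  obtain ⟨N, hN⟩ := exists_nat_gt (n / min δ (ε / 2))
  have hmin : 0 < min δ (ε / 2) := lt_min hδ (half_pos hε)
  have hN0 : (0 : ℝ) < N := (div_pos hn0 hmin).trans hN
  have hnN : n / N < min δ (ε / 2) := by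
    rw [div_lt_iff₀ hmin] at hN
    rw [div_lt_iff₀ hN0]; linarith
  let g : (I → ℕ) → I → ℝ := fun x i => x i / N
  have hg : ∀ x : I → ℕ, ∑ i, x i = N → g x ∈ stdSimplex ℝ I := by
    intro x hx
    refine ⟨fun i => by positivity, ?_⟩
    simp only [g]
    rw [← Finset.sum_div, ← Nat.cast_sum, hx, div_self hN0.ne']
  -- equality of the coordinate sums provides a coordinate that `f` does not decrease
  have hcol : ∀ x : I → ℕ, ∃ i, ∑ j, x j = N → g x i ≤ f (g x) i := by
    intro x
    by_cases hx : ∑ j, x j = N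
    · obtain ⟨i, -, hi⟩ := Finset.exists_le_of_sum_le (s := Finset.univ) (f := g x) (g := f (g x))
        Finset.univ_nonempty (by rw [(hg x hx).2, (hmaps (hg x hx)).2])
      exact ⟨i, fun _ => hi⟩
    · obtain ⟨i⟩ : Nonempty I := inferInstance
      exact ⟨i, fun h => absurd h hx⟩
  choose c hc using hcol
  obtain ⟨x, hx, hxi⟩ := grid_sperner N c
  refine ⟨g x, hg x hx, fun i => ?_⟩
  rcases hxi i with h | ⟨x', hx', hci, hclose⟩
  · have h1 : g x i ≤ n / N := by
      have : (x i : ℝ) ≤ n := by rw [hn]; exact_mod_cast h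
      simp only [g]; gcongr
    have h2 := (hmaps (hg x hx)).1 i
    have := min_le_right δ (ε / 2)
    linarith
  · have habs : ∀ j, |g x j - g x' j| ≤ n / N := by
      intro j
      have h1 : (x j : ℝ) ≤ x' j + n := by rw [hn]; exact_mod_cast (hclose j).1
      have h2 : (x' j : ℝ) ≤ x j + n := by rw [hn]; exact_mod_cast (hclose j).2
      simp only [g]
      rw [← sub_div, abs_div, abs_of_pos hN0]
      gcongr
      rw [abs_le]; constructor <;> linarith
    have hd : dist (g x) (g x') < δ := by
      refine lt_of_le_of_lt ((dist_pi_le_iff (by positivity)).mpr fun j => ?_)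
        (hnN.trans_le (min_le_left _ _))
      rw [Real.dist_eq]; exact habs j
    have hfd := (dist_le_pi_dist _ _ i).trans_lt (hunif _ (hg x hx) _ (hg x' hx') hd)
    rw [Real.dist_eq, abs_lt] at hfd
    have h1 := hc x' hx'
    rw [hci] at h1
    have h2 := abs_le.mp (habs i)
    have := min_le_right δ (ε / 2)
    linarith [hfd.1]

/-- **Brouwer's fixed point theorem** on a standard simplex. -/
theorem brouwer_stdSimplex {I : Type*} [Fintype I] [Nonempty I] {f : (I → ℝ) → I → ℝ}
    (hf : ContinuousOn f (stdSimplex ℝ I))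
    (hmaps : Set.MapsTo f (stdSimplex ℝ I) (stdSimplex ℝ I)) :
    ∃ x ∈ stdSimplex ℝ I, f x = x := by
  classical
  obtain ⟨i₀⟩ : Nonempty I := inferInstance
  have hne : (stdSimplex ℝ I).Nonempty := ⟨_, single_mem_stdSimplex ℝ i₀⟩
  rcases subsingleton_or_nontrivial I with hI | hI
  · obtain ⟨x, hx⟩ := hne
    refine ⟨x, hx, funext fun i => ?_⟩
    have h1 := hx.2
    have h2 := (hmaps hx).2
    rw [Fintype.sum_subsingleton _ i] at h1 h2
    rw [h1, h2]
  have hF : ContinuousOn (fun x => ∑ i, |f x i - x i|) (stdSimplex ℝ I) := by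
    refine continuousOn_finsetSum _ fun i _ => ContinuousOn.abs (ContinuousOn.sub ?_ ?_)
    · exact (continuous_apply i).comp_continuousOn hf
    · exact (continuous_apply i).continuousOn
  obtain ⟨x, hx, hmin⟩ := (isCompact_stdSimplex ℝ I).exists_isMinOn hne hF
  refine ⟨x, hx, ?_⟩
  have hle : ∑ i, |f x i - x i| ≤ 0 := by
    refine le_of_forall_pos_le_add fun ε hε => ?_
    have hn0 : (0 : ℝ) < Fintype.card I := by exact_mod_cast Fintype.card_pos (α := I)
    obtain ⟨y, hy, hyi⟩ := brouwer_approx hf hmaps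
      (ε := ε / (2 * Fintype.card I)) (by positivity)
    refine (hmin hy).trans ?_
    calc ∑ i, |f y i - y i| ≤ ∑ i, ((f y i - y i) + 2 * (ε / (2 * Fintype.card I))) := by
          refine Finset.sum_le_sum fun i _ => ?_
          have h1 := hyi i
          have h2 : 0 < ε / (2 * Fintype.card I) := by positivity
          rw [abs_le]; constructor <;> linarith
      _ = 0 + ε := by
          rw [Finset.sum_add_distrib, Finset.sum_sub_distrib, hy.2, (hmaps hy).2,
            Finset.sum_const, Finset.card_univ, nsmul_eq_mul]
          field_simp
          ring
  have hz := (Finset.sum_eq_zero_iff_of_nonneg fun i _ => abs_nonneg (f x i - x i)).mp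
    (le_antisymm hle (Finset.sum_nonneg fun i _ => abs_nonneg _))
  funext i
  exact sub_eq_zero.mp (abs_eq_zero.mp (hz i (Finset.mem_univ i)))

/-! ### Schauder's theorem -/

/-- Approximate form of Schauder's theorem: for a finite `ε`-net `t` of `K`, the map `f` is replaced
by its convex combination of net points, viewed as a self-map of the simplex with vertex set `t`. -/
theorem schauder_approx {X : Type*} [NormedAddCommGroup X] [NormedSpace ℝ X] {B K : Set X}
    (hB : Convex ℝ B) (hK : IsCompact K) (hKB : K ⊆ B) (hKne : K.Nonempty) {f : X → X}
    (hf : ContinuousOn f B) (hfK : Set.MapsTo f B K) {ε : ℝ} (hε : 0 < ε) :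
    ∃ x ∈ B, dist x (f x) ≤ ε := by
  classical
  obtain ⟨t, htK, hcover⟩ := hK.elim_finite_subcover_image (b := K)
    (c := fun y => Metric.ball y ε) (fun y _ => Metric.isOpen_ball)
    (fun y hy => Set.mem_biUnion hy (Metric.mem_ball_self hε))
  obtain ⟨htfin, hcover⟩ := hcover
  have := htfin.fintype
  have htne : Nonempty t := by
    obtain ⟨z, hz⟩ := hKne
    obtain ⟨y, hy, -⟩ := Set.mem_iUnion₂.mp (hcover hz)
    exact ⟨⟨y, hy⟩⟩
  let φ : t → X → ℝ := fun y z => max 0 (ε - dist z y)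
  have hφc : ∀ y, Continuous (φ y) := fun y => by fun_prop
  have hφ0 : ∀ y z, 0 ≤ φ y z := fun y z => le_max_left _ _
  have hΦ : ∀ z ∈ K, 0 < ∑ y, φ y z := by
    intro z hz
    obtain ⟨y, hy, hyz⟩ := Set.mem_iUnion₂.mp (hcover hz)
    refine Finset.sum_pos' (fun y _ => hφ0 y z) ⟨⟨y, hy⟩, Finset.mem_univ _, ?_⟩
    exact lt_max_of_lt_right (sub_pos.mpr hyz)
  let p : (t → ℝ) → X := fun w => ∑ y, w y • (y : X)
  have hpc : Continuous p := by fun_prop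
  have hpB : Set.MapsTo p (stdSimplex ℝ t) B := fun w hw =>
    hB.sum_mem (fun y _ => hw.1 y) hw.2 fun y _ => hKB (htK y.2)
  let g : (t → ℝ) → t → ℝ := fun w y => φ y (f (p w)) / ∑ y', φ y' (f (p w))
  have hfp : ContinuousOn (fun w => f (p w)) (stdSimplex ℝ t) := hf.comp hpc.continuousOn hpB
  have hpos : ∀ w ∈ stdSimplex ℝ t, 0 < ∑ y', φ y' (f (p w)) := fun w hw => hΦ _ (hfK (hpB hw))
  have hg : ContinuousOn g (stdSimplex ℝ t) := by
    refine continuousOn_pi.mpr fun y => ContinuousOn.div ((hφc y).comp_continuousOn hfp) ?_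
      fun w hw => (hpos w hw).ne'
    exact continuousOn_finsetSum _ fun y' _ => (hφc y').comp_continuousOn hfp
  have hgm : Set.MapsTo g (stdSimplex ℝ t) (stdSimplex ℝ t) := fun w hw =>
    ⟨fun y => div_nonneg (hφ0 _ _) (hpos w hw).le, by
      simp only [g]
      rw [← Finset.sum_div, div_self (hpos w hw).ne']⟩
  obtain ⟨w, hw, hgw⟩ := brouwer_stdSimplex hg hgm
  refine ⟨p w, hpB hw, ?_⟩
  -- only net points within `ε` of `f (p w)` carry positive weight
  have hdist : ∀ y : t, ‖w y • ((y : X) - f (p w))‖ ≤ w y * ε := by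
    intro y
    rw [norm_smul, Real.norm_of_nonneg (hw.1 y)]
    by_cases hy : ‖(y : X) - f (p w)‖ ≤ ε
    · exact mul_le_mul_of_nonneg_left hy (hw.1 y)
    · have h0 : w y = 0 := by
        rw [← hgw]
        have : φ y (f (p w)) = 0 := by
          refine max_eq_left ?_
          rw [dist_comm, dist_eq_norm]
          linarith
        simp only [g, this, zero_div]
      simp [h0]
  have heq : p w - f (p w) = ∑ y : t, w y • ((y : X) - f (p w)) := by
    simp only [smul_sub, Finset.sum_sub_distrib, ← Finset.sum_smul, hw.2, one_smul, p]
  rw [dist_eq_norm, heq]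
  calc _ ≤ ∑ y : t, w y * ε := norm_sum_le_of_le _ fun y _ => hdist y
    _ = ε := by rw [← Finset.sum_mul, hw.2, one_mul]

/-- **Schauder's fixed point theorem** for a convex set in a normed space, which need not be complete,
and a continuous map with values in a compact subset. -/
theorem schauder {X : Type*} [NormedAddCommGroup X] [NormedSpace ℝ X] {B K : Set X}
    (hB : Convex ℝ B) (hK : IsCompact K) (hKB : K ⊆ B) (hBne : B.Nonempty) {f : X → X}
    (hf : ContinuousOn f B) (hfK : Set.MapsTo f B K) : ∃ x ∈ B, f x = x := by
  have hKne : K.Nonempty := hBne.elim fun x hx => ⟨f x, hfK hx⟩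
  choose x hxB hx using fun n : ℕ =>
    schauder_approx hB hK hKB hKne hf hfK (ε := 1 / ((n : ℝ) + 1)) (by positivity)
  obtain ⟨z, hz, ψ, hψ, hlim⟩ := hK.tendsto_subseq fun n => hfK (hxB n)
  have hdist : Filter.Tendsto (fun n => dist (f (x (ψ n))) (x (ψ n))) Filter.atTop (nhds 0) := by
    refine squeeze_zero (fun n => dist_nonneg) (fun n => ?_)
      (tendsto_one_div_add_atTop_nhds_zero_nat.comp hψ.tendsto_atTop)
    rw [dist_comm]
    exact hx (ψ n)
  have hxz : Filter.Tendsto (fun n => x (ψ n)) Filter.atTop (nhds z) :=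
    (tendsto_iff_of_dist hdist).mp hlim
  have hfz : Filter.Tendsto (fun n => f (x (ψ n))) Filter.atTop (nhds (f z)) :=
    (hf z (hKB hz)).tendsto.comp (tendsto_nhdsWithin_iff.mpr
      ⟨hxz, Filter.Eventually.of_forall fun n => hxB _⟩)
  exact ⟨z, hKB hz, tendsto_nhds_unique hfz hlim⟩

/-! ### The annulus -/

/-- In infinite dimension, a compact set bounded away from `0` can be joined by segments to some
point `e` without meeting `0`: otherwise every ray would meet `-K`, and the closed unit ball would be
a subset of the compact set `[0, 1/r] • K`. -/
theorem exists_dir {X : Type*} [NormedAddCommGroup X] [NormedSpace ℝ X]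
    (hinf : ¬ FiniteDimensional ℝ X) {K : Set X} (hK : IsCompact K) {r : ℝ} (hr : 0 < r)
    (hKr : ∀ k ∈ K, r ≤ ‖k‖) :
    ∃ e : X, ∀ k ∈ K, ∀ t : ℝ, 0 ≤ t → t ≤ 1 → t • k + (1 - t) • e ≠ 0 := by
  obtain ⟨e, he1, he⟩ : ∃ e : X, ‖e‖ ≤ 1 ∧ ∀ s : ℝ, 0 ≤ s → s ≤ 1 / r → ∀ k ∈ K, s • k ≠ e := by
    by_contra! hall
    have hc : IsCompact ((fun q : ℝ × X => q.1 • q.2) '' (Set.Icc 0 (1 / r) ×ˢ K)) :=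
      (isCompact_Icc.prod hK).image (by fun_prop)
    have hball : IsCompact (Metric.closedBall (0 : X) 1) := by
      refine hc.of_isClosed_subset Metric.isClosed_closedBall fun e he => ?_
      obtain ⟨s, h0, h1, k, hk, hs⟩ := hall e (by simpa using he)
      exact ⟨(s, k), ⟨⟨h0, h1⟩, hk⟩, hs⟩
    exact hinf (FiniteDimensional.of_isCompact_closedBall₀ ℝ one_pos hball)
  refine ⟨-e, fun k hk t h0 h1 heq => ?_⟩
  have hkr := hKr k hk
  rcases h1.eq_or_lt with rfl | h1
  · have : k = 0 := by simpa using heq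
    rw [this, norm_zero] at hkr
    linarith
  have h1' : 0 < 1 - t := by linarith
  have hek : (t / (1 - t)) • k = e := by
    have h2 : t • k = (1 - t) • e := by
      rw [smul_neg, ← sub_eq_add_neg] at heq
      exact sub_eq_zero.mp heq
    rw [div_eq_inv_mul, mul_smul, h2, smul_smul, inv_mul_cancel₀ h1'.ne', one_smul]
  refine he _ (by positivity) ?_ k hk hek
  have hs : 0 ≤ t / (1 - t) := by positivity
  rw [← hek, norm_smul, Real.norm_of_nonneg hs] at he1
  rw [le_div_iff₀ hr]
  exact (mul_le_mul_of_nonneg_left hkr hs).trans he1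

/-- In infinite dimension, a compact map on the sphere of radius `r` with values of norm at least `r`
extends to the closed ball as a compact map, still with values of norm at least `r`; such an
extension has no fixed point in the open ball. -/
theorem inner_extension {X : Type*} [NormedAddCommGroup X] [NormedSpace ℝ X]
    (hinf : ¬ FiniteDimensional ℝ X) {r : ℝ} (hr : 0 < r) {S : X → X} {K : Set X}
    (hS : ContinuousOn S {x | ‖x‖ = r}) (hK : IsCompact K)
    (hSK : Set.MapsTo S {x | ‖x‖ = r} K) (hexp : ∀ x : X, ‖x‖ = r → r ≤ ‖S x‖) :
    ∃ (H : X → X) (L : Set X), IsCompact L ∧ ContinuousOn H {x | ‖x‖ ≤ r} ∧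
      (∀ x : X, ‖x‖ ≤ r → H x ∈ L) ∧ (∀ x : X, ‖x‖ ≤ r → r ≤ ‖H x‖) ∧
      ∀ x : X, ‖x‖ = r → H x = S x := by
  have hnt : Nontrivial X := by
    by_contra hnt
    rw [not_nontrivial_iff_subsingleton] at hnt
    exact hinf inferInstance
  set K₁ : Set X := K ∩ {k | r ≤ ‖k‖} with hK₁def
  have hK₁ : IsCompact K₁ := hK.inter_right (isClosed_le continuous_const continuous_norm)
  have hSK₁ : ∀ x : X, ‖x‖ = r → S x ∈ K₁ := fun x hx => ⟨hSK hx, hexp x hx⟩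
  obtain ⟨x₀, hx₀⟩ := exists_norm_eq X hr.le
  obtain ⟨e, he⟩ := exists_dir hinf hK₁ hr (fun k hk => hk.2)
  -- radial push out of the open ball of radius `r`; its value at `0` is irrelevant
  let Q : X → X := fun y => (max r ‖y‖ / ‖y‖) • y
  have hQc : ContinuousOn Q {y | y ≠ 0} := by
    refine ContinuousOn.smul (ContinuousOn.div ?_ ?_ fun y hy => norm_ne_zero_iff.mpr hy)
      continuousOn_id <;> fun_prop
  have hQr : ∀ y, y ≠ 0 → r ≤ ‖Q y‖ := by
    intro y hy
    have : 0 < ‖y‖ := norm_pos_iff.mpr hy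
    rw [norm_smul, norm_div, norm_norm, div_mul_cancel₀ _ this.ne']
    exact (le_max_left _ _).trans (le_abs_self _)
  have hQid : ∀ y, r ≤ ‖y‖ → Q y = y := by
    intro y hy
    simp only [Q]
    rw [max_eq_right hy, div_self (hr.trans_le hy).ne', one_smul]
  let m : ℝ × X → X := fun q => q.1 • q.2 + (1 - q.1) • e
  have hm : Continuous m := by fun_prop
  have hm0 : Set.MapsTo m (Set.Icc 0 1 ×ˢ K₁) {y | y ≠ 0} := fun q hq =>
    he q.2 hq.2 q.1 hq.1.1 hq.1.2
  -- contraction to `e` along the radius; at the origin, the junk value of `r / 0` has weight `0`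
  let H₀ : X → X := fun x => (‖x‖ / r) • S ((r / ‖x‖) • x) + (1 - ‖x‖ / r) • e
  have hsph : ∀ x : X, x ≠ 0 → ‖(r / ‖x‖) • x‖ = r := by
    intro x hx
    have : 0 < ‖x‖ := norm_pos_iff.mpr hx
    rw [norm_smul, norm_div, norm_norm, div_mul_cancel₀ _ this.ne', Real.norm_of_nonneg hr.le]
  have hrep : ∀ x : X, ‖x‖ ≤ r → ∃ q ∈ Set.Icc (0 : ℝ) 1 ×ˢ K₁, m q = H₀ x := by
    intro x hx
    by_cases hx0 : x = 0
    · exact ⟨(0, S x₀), ⟨by simp, hSK₁ x₀ hx₀⟩, by simp [m, H₀, hx0]⟩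
    · exact ⟨(‖x‖ / r, S ((r / ‖x‖) • x)), ⟨⟨by positivity, (div_le_one hr).mpr hx⟩,
        hSK₁ _ (hsph x hx0)⟩, rfl⟩
  have hH₀0 : ∀ x : X, ‖x‖ ≤ r → H₀ x ≠ 0 := by
    intro x hx
    obtain ⟨q, hq, hqx⟩ := hrep x hx
    rw [← hqx]
    exact hm0 hq
  have hfirst : Continuous fun x : X => (‖x‖ / r) • S ((r / ‖x‖) • x) := by
    rw [continuous_iff_continuousAt]
    intro x
    by_cases hx : x = 0
    · -- at the origin the scalar tends to `0` while `S` stays bounded on the sphere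
      subst hx
      obtain ⟨C, hC⟩ := hK.isBounded.exists_norm_le
      rw [ContinuousAt, norm_zero, zero_div, zero_smul]
      refine squeeze_zero_norm (a := fun x : X => ‖x‖ / r * C) (fun x => ?_) ?_
      · by_cases hx : x = 0
        · simp [hx]
        · rw [norm_smul, Real.norm_of_nonneg (by positivity)]
          exact mul_le_mul_of_nonneg_left (hC _ (hSK (hsph x hx))) (by positivity)
      · have : Continuous fun x : X => ‖x‖ / r * C := by fun_prop
        simpa using this.tendsto 0
    · have hx' : ‖x‖ ≠ 0 := norm_ne_zero_iff.mpr hx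
      have hon : ContinuousOn (fun x : X => (‖x‖ / r) • S ((r / ‖x‖) • x)) {x | x ≠ 0} := by
        refine ContinuousOn.smul (by fun_prop) (hS.comp ?_ fun y hy => hsph y hy)
        refine ContinuousOn.smul (ContinuousOn.div ?_ ?_ fun y hy => norm_ne_zero_iff.mpr hy)
          continuousOn_id <;> fun_prop
      exact hon.continuousAt (isOpen_ne.mem_nhds hx)
  have hH₀c : Continuous H₀ := hfirst.add (by fun_prop)
  refine ⟨fun x => Q (H₀ x), Q '' (m '' (Set.Icc 0 1 ×ˢ K₁)), ?_, ?_, ?_, ?_, ?_⟩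
  · exact ((isCompact_Icc.prod hK₁).image hm).image_of_continuousOn
      (hQc.mono (Set.image_subset_iff.mpr hm0))
  · exact hQc.comp hH₀c.continuousOn fun x hx => hH₀0 x hx
  · intro x hx
    obtain ⟨q, hq, hqx⟩ := hrep x hx
    exact ⟨_, ⟨q, hq, rfl⟩, by simp only [hqx]⟩
  · exact fun x hx => hQr _ (hH₀0 x hx)
  · intro x hx
    have : H₀ x = S x := by simp only [H₀, hx, div_self hr.ne']; simp
    simp only [this]
    exact hQid _ (hexp x hx)

/-- **Fixed point theorem on an annulus, compressive form.** -/
theorem annulus_compressive {X : Type*} [NormedAddCommGroup X] [NormedSpace ℝ X]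
    (hinf : ¬ FiniteDimensional ℝ X) {r₁ r₂ : ℝ} (hr₁ : 0 < r₁) (hr : r₁ < r₂)
    {S : X → X} {K : Set X} (hS : ContinuousOn S {x : X | r₁ ≤ ‖x‖ ∧ ‖x‖ ≤ r₂})
    (hK : IsCompact K) (hSK : Set.MapsTo S {x : X | r₁ ≤ ‖x‖ ∧ ‖x‖ ≤ r₂} K)
    (hin : ∀ x : X, ‖x‖ = r₁ → r₁ ≤ ‖S x‖) (hout : ∀ x : X, ‖x‖ = r₂ → ‖S x‖ ≤ r₂) :
    ∃ x : X, (r₁ ≤ ‖x‖ ∧ ‖x‖ ≤ r₂) ∧ S x = x := by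
  classical
  have hr₂ : 0 < r₂ := hr₁.trans hr
  have hsub : {x : X | ‖x‖ = r₁} ⊆ {x : X | r₁ ≤ ‖x‖ ∧ ‖x‖ ≤ r₂} := fun x hx =>
    ⟨(show ‖x‖ = r₁ from hx).ge, (show ‖x‖ = r₁ from hx).trans_le hr.le⟩
  obtain ⟨H, L, hL, hHc, hHL, hHr, hHS⟩ :=
    inner_extension hinf hr₁ (hS.mono hsub) hK (hSK.mono_left hsub) hin
  let G : X → X := fun x => if ‖x‖ ≤ r₁ then H x else S x
  have hGH : ∀ x : X, ‖x‖ ≤ r₁ → G x = H x := fun x hx => if_pos hx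
  have hGS : ∀ x : X, r₁ ≤ ‖x‖ → G x = S x := by
    intro x hx
    rcases hx.eq_or_lt with h | h
    · rw [hGH x h.ge, hHS x h.symm]
    · exact if_neg (not_le.mpr h)
  have hGc : ContinuousOn G (Metric.closedBall 0 r₂) := by
    have h1 : ContinuousOn G {x | ‖x‖ ≤ r₁} := hHc.congr fun x hx => hGH x hx
    have h2 : ContinuousOn G {x | r₁ ≤ ‖x‖ ∧ ‖x‖ ≤ r₂} := hS.congr fun x hx => hGS x hx.1
    refine (h1.union_of_isClosed h2 (isClosed_le continuous_norm continuous_const)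
      ((isClosed_le continuous_const continuous_norm).inter
        (isClosed_le continuous_norm continuous_const))).mono fun x hx => ?_
    have hx' : ‖x‖ ≤ r₂ := by simpa using hx
    rcases le_total ‖x‖ r₁ with h | h
    · exact Or.inl h
    · exact Or.inr ⟨h, hx'⟩
  have hGK : Set.MapsTo G (Metric.closedBall 0 r₂) (K ∪ L) := by
    intro x hx
    have hx' : ‖x‖ ≤ r₂ := by simpa using hx
    rcases le_total ‖x‖ r₁ with h | h
    · rw [hGH x h]; exact Or.inr (hHL x h)
    · rw [hGS x h]; exact Or.inl (hSK ⟨h, hx'⟩)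
  -- radial retraction onto the ball of radius `r₂`
  let P : X → X := fun y => (r₂ / max r₂ ‖y‖) • y
  have hmax : ∀ y : X, 0 < max r₂ ‖y‖ := fun y => lt_max_of_lt_left hr₂
  have hPc : Continuous P :=
    (Continuous.div continuous_const (by fun_prop) fun y => (hmax y).ne').smul continuous_id
  have hPnorm : ∀ y, ‖P y‖ = r₂ / max r₂ ‖y‖ * ‖y‖ := fun y => by
    rw [norm_smul, Real.norm_of_nonneg (div_nonneg hr₂.le (hmax y).le)]
  have hPball : ∀ y, P y ∈ Metric.closedBall (0 : X) r₂ := by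
    intro y
    rw [mem_closedBall_zero_iff, hPnorm, div_mul_eq_mul_div, div_le_iff₀ (hmax y)]
    exact mul_le_mul_of_nonneg_left (le_max_right _ _) hr₂.le
  have hPid : ∀ y, ‖y‖ ≤ r₂ → P y = y := by
    intro y hy
    simp only [P]
    rw [max_eq_left hy, div_self hr₂.ne', one_smul]
  have hPout : ∀ y, r₂ < ‖y‖ → ‖P y‖ = r₂ := by
    intro y hy
    rw [hPnorm, max_eq_right hy.le, div_mul_cancel₀ _ (hr₂.trans hy).ne']
  obtain ⟨x, hx, hfix⟩ := schauder (f := fun x => P (G x)) (convex_closedBall (0 : X) r₂)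
    ((hK.union hL).image hPc) (by rintro _ ⟨y, -, rfl⟩; exact hPball y)
    ⟨0, Metric.mem_closedBall_self hr₂.le⟩ (hPc.comp_continuousOn hGc)
    (fun x hx => ⟨_, hGK hx, rfl⟩)
  have hx' : ‖x‖ ≤ r₂ := by simpa using hx
  have hGx : ‖G x‖ ≤ r₂ := by
    by_contra! hc
    have hxr : ‖x‖ = r₂ := by
      rw [← hfix]; exact hPout _ hc
    rw [hGS x (hr.le.trans hxr.ge)] at hc
    exact absurd (hout x hxr) (not_le.mpr hc)
  have hGfix : G x = x := by
    rw [← hPid (G x) hGx]; exact hfix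
  have hx₁ : r₁ ≤ ‖x‖ := by
    by_contra! hc
    have := hHr x hc.le
    rw [← hGH x hc.le, hGfix] at this
    linarith
  exact ⟨x, ⟨hx₁, hx'⟩, by rw [← hGS x hx₁, hGfix]⟩

/-- **Fixed point theorem on an annulus of an infinite-dimensional normed space,
expansive form.** -/
theorem annulus_fixed_point_expansive
    {X : Type*} [NormedAddCommGroup X] [NormedSpace ℝ X]
    (hinf : ¬ FiniteDimensional ℝ X)
    (r₁ r₂ : ℝ) (hr₁ : 0 < r₁) (hr : r₁ < r₂)
    (T : X → X)
    (hT_cont : ContinuousOn T {x : X | r₁ ≤ ‖x‖ ∧ ‖x‖ ≤ r₂})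
    (hT_comp : IsCompact (closure (T '' {x : X | r₁ ≤ ‖x‖ ∧ ‖x‖ ≤ r₂})))
    (hEa : ∀ x : X, ‖x‖ = r₁ → ‖T x‖ ≤ ‖x‖)
    (hEb : ∀ x : X, ‖x‖ = r₂ → ‖x‖ ≤ ‖T x‖) :
    ∃ x : X, (r₁ ≤ ‖x‖ ∧ ‖x‖ ≤ r₂) ∧ T x = x := by
  have hr₂ : 0 < r₂ := hr₁.trans hr
  set A : Set X := {x : X | r₁ ≤ ‖x‖ ∧ ‖x‖ ≤ r₂} with hA
  let α : X → ℝ := fun x => (r₁ + r₂ - ‖x‖) / ‖x‖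
  have hpos : ∀ x ∈ A, 0 < ‖x‖ := fun x hx => hr₁.trans_le hx.1
  have hpos' : ∀ x ∈ A, 0 < r₁ + r₂ - ‖x‖ := fun x hx => by linarith [hx.2]
  have hα : ∀ x ∈ A, 0 < α x := fun x hx => div_pos (hpos' x hx) (hpos x hx)
  have hαc : ContinuousOn α A :=
    ContinuousOn.div (by fun_prop) (by fun_prop) fun x hx => (hpos x hx).ne'
  have hnorm : ∀ x ∈ A, ‖α x • x‖ = r₁ + r₂ - ‖x‖ := fun x hx => by
    rw [norm_smul, Real.norm_of_nonneg (hα x hx).le, div_mul_cancel₀ _ (hpos x hx).ne']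
  have hmem : ∀ x ∈ A, α x • x ∈ A := fun x hx => by
    refine ⟨?_, ?_⟩ <;> rw [hnorm x hx] <;> linarith [hx.1, hx.2]
  have hinv : ∀ x ∈ A, (α x)⁻¹ ∈ Set.Icc (0 : ℝ) (r₂ / r₁) := fun x hx => by
    refine ⟨(inv_pos.mpr (hα x hx)).le, ?_⟩
    rw [inv_div]
    exact div_le_div₀ hr₂.le hx.2 hr₁ (by linarith [hx.2])
  obtain ⟨x, hx, hfix⟩ := annulus_compressive hinf hr₁ hr
    (S := fun x => (α x)⁻¹ • T (α x • x))
    (K := (fun q : ℝ × X => q.1 • q.2) '' (Set.Icc 0 (r₂ / r₁) ×ˢ closure (T '' A)))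
    ((hαc.inv₀ fun x hx => (hα x hx).ne').smul
      (hT_cont.comp (hαc.smul continuousOn_id) fun x hx => hmem x hx))
    ((isCompact_Icc.prod hT_comp).image (by fun_prop))
    (fun x hx => ⟨((α x)⁻¹, T (α x • x)),
      ⟨hinv x hx, subset_closure ⟨_, hmem x hx, rfl⟩⟩, rfl⟩)
    (by
      intro x hx
      have hxA : x ∈ A := ⟨hx.ge, hx.trans_le hr.le⟩
      have h1 : ‖α x • x‖ = r₂ := by rw [hnorm x hxA, hx]; ring
      have h2 := hEb _ h1
      rw [norm_smul, Real.norm_of_nonneg (hinv x hxA).1]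
      have h3 : (α x)⁻¹ * ‖α x • x‖ = r₁ := by
        rw [norm_smul, Real.norm_of_nonneg (hα x hxA).le, inv_mul_cancel_left₀ (hα x hxA).ne', hx]
      rw [← h3]
      exact mul_le_mul_of_nonneg_left h2 (hinv x hxA).1)
    (by
      intro x hx
      have hxA : x ∈ A := ⟨hr.le.trans hx.ge, hx.le⟩
      have h1 : ‖α x • x‖ = r₁ := by rw [hnorm x hxA, hx]; ring
      have h2 := hEa _ h1
      rw [norm_smul, Real.norm_of_nonneg (hinv x hxA).1]
      have h3 : (α x)⁻¹ * ‖α x • x‖ = r₂ := by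
        rw [norm_smul, Real.norm_of_nonneg (hα x hxA).le, inv_mul_cancel_left₀ (hα x hxA).ne', hx]
      rw [← h3]
      exact mul_le_mul_of_nonneg_left h2 (hinv x hxA).1)
  refine ⟨α x • x, hmem x hx, ?_⟩
  have h := congrArg (fun z => α x • z) hfix
  simpa only [smul_smul, mul_inv_cancel₀ (hα x hx).ne', one_smul] using h
end
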